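/- arXiv:2406.15184 — 2 statements merged into one kernel-verified Lean document; each statement's English description precedes it below -/
import Mathlib

section
/- Rosenberg's Completeness Theorem. Let A be a finite set with |A| ≥ 3. The maximal clones on A are exactly the clones Pol(ρ) where ρ is one of the following relations on A: (1) a partial order on A with a least and a greatest element; (2) the graph {(a, π(a)) : a ∈ A} of a fixed-point-free permutation π of A all of whose cycles have the same prime length; (3) the 4-ary affine relation α₊ = {(a₁,a₂,a₃,a₄) ∈ A⁴ : a₁ − a₂ + a₃ = a₄} for some elementary abelian p-group (A;+); (4) a nontrivial equivalence relation on A (one different from the equality relation and from A × A); (5) a central relation, i.e. an m-ary relation ρ with 1 ≤ m < |A| that is totally reflexive, totally symmetric, satisfies ρ ≠ Aᵐ, and has an element c ∈ A with {c} × A^{m−1} ⊆ ρ; (6) an m-regular relation λ_T, where 3 ≤ m ≤ |A|, T = {θ₁,…,θ_r} (r ≥ 1) is a set of equivalence relations on A each having exactly m blocks and such that any choice of one block from each θᵢ has nonempty intersection, and λ_T consists of all tuples (a₁,…,a_m) ∈ Aᵐ such that for every i there are two entries among a₁,…,a_m lying in the same block of θᵢ. Consequently, a set F of operations on A is complete if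 and only if F ⊄ Pol(ρ) for every relation ρ of the types (1)–(6). -/
universe u

/-- The type of finitary operations (of positive arity `n + 1`) on `A`. -/
abbrev Ops (A : Type u) : Type u := Σ n : ℕ, (Fin (n + 1) → A) → A

/-- A set of finitary operations on `A` is a clone if it contains all projection
operations and is closed under composition. -/
def IsClone {A : Type u} (C : Set (Ops A)) : Prop :=
  (∀ (n : ℕ) (i : Fin (n + 1)), (⟨n, fun x => x i⟩ : Ops A) ∈ C) ∧
  ∀ (n m : ℕ) (f : (Fin (n + 1) → A) → A) (g : Fin (n + 1) → (Fin (m + 1) → A) → A),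
    (⟨n, f⟩ : Ops A) ∈ C → (∀ i, (⟨m, g i⟩ : Ops A) ∈ C) →
    (⟨m, fun x => f fun i => g i x⟩ : Ops A) ∈ C

/-- The clone generated by a set `F` of operations: the least clone containing `F`. -/
def cloneGen {A : Type u} (F : Set (Ops A)) : Set (Ops A) :=
  ⋂₀ {C : Set (Ops A) | IsClone C ∧ F ⊆ C}

/-- The clone of all projection operations on `A`. -/
def projClone (A : Type u) : Set (Ops A) :=
  {f : Ops A | ∃ i : Fin (f.1 + 1), f.2 = fun x => x i}

/-- A clone `M` is maximal if it is a proper subclone of the clone of all operations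
and the clone of all operations is the only clone properly containing it. -/
def IsMaximalClone {A : Type u} (M : Set (Ops A)) : Prop :=
  IsClone M ∧ M ≠ Set.univ ∧
    ∀ D : Set (Ops A), IsClone D → M ⊆ D → D = M ∨ D = Set.univ

/-- A clone `C` is minimal if the clone of projections is its unique proper subclone. -/
def IsMinimalClone {A : Type u} (C : Set (Ops A)) : Prop :=
  IsClone C ∧ C ≠ projClone A ∧
    ∀ D : Set (Ops A), IsClone D → D ⊆ C → D = projClone A ∨ D = C

/-- An `n`-ary operation `f` preserves a `k`-ary relation `ρ` if applying `f`
coordinatewise to tuples from `ρ` always yields a tuple in `ρ`. -/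
def Preserves {A : Type u} {n k : ℕ} (f : (Fin n → A) → A) (ρ : Set (Fin k → A)) : Prop :=
  ∀ t : Fin n → Fin k → A, (∀ i, t i ∈ ρ) → (fun j => f fun i => t i j) ∈ ρ

/-- `Pol ρ` is the clone of all operations preserving the relation `ρ`. -/
def Pol {A : Type u} {k : ℕ} (ρ : Set (Fin k → A)) : Set (Ops A) :=
  {f : Ops A | Preserves f.2 ρ}

/-- A `k`-ary relation is totally reflexive if it contains every tuple whose entries
are not pairwise distinct. -/
def TotallyReflexiveRel {A : Type u} {k : ℕ} (ρ : Set (Fin k → A)) : Prop :=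
  ∀ x : Fin k → A, (∃ i j, i ≠ j ∧ x i = x j) → x ∈ ρ

/-- A `k`-ary relation is totally symmetric if it is invariant under all permutations
of its coordinates. -/
def TotallySymmetricRel {A : Type u} {k : ℕ} (ρ : Set (Fin k → A)) : Prop :=
  ∀ σ : Equiv.Perm (Fin k), ∀ x ∈ ρ, (x ∘ σ) ∈ ρ

/-- The six kinds of relations in Rosenberg's Completeness Theorem.  A relation on `A`
of arity `ρ.1 + 1` is a Rosenberg relation if it is of one of the following types:
(1) a partial order with a least and a greatest element;
(2) the graph of a fixed-point-free permutation all of whose cycles have the same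
    prime length `p` (equivalently, `π` is fixed-point-free and `π ^ p = 1`);
(3) the 4-ary affine relation of an elementary abelian `p`-group structure on `A`;
(4) a nontrivial equivalence relation;
(5) a central relation: totally reflexive, totally symmetric, proper, of arity `< |A|`,
    with a central element `c` such that every tuple starting with `c` belongs to it;
(6) an `m`-regular relation `λ_T` (`3 ≤ m ≤ |A|`) determined by equivalence relations
    `θ₁, …, θ_r`, each with exactly `m` blocks, such that any choice of one block from
    each `θᵢ` has nonempty intersection. -/
def IsRosenbergRel {A : Type u} [Fintype A] (ρ : Σ k : ℕ, Set (Fin (k + 1) → A)) : Prop :=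
  -- (1) bounded partial order
  (∃ le : A → A → Prop, IsPartialOrder A le ∧ (∃ b, ∀ a, le b a) ∧ (∃ t, ∀ a, le a t) ∧
      ρ = ⟨1, {x : Fin 2 → A | le (x 0) (x 1)}⟩) ∨
  -- (2) graph of a fixed-point-free permutation with all cycles of the same prime length
  (∃ π : Equiv.Perm A, (∀ a, π a ≠ a) ∧ (∃ p : ℕ, p.Prime ∧ ∀ a, (π ^ p) a = a) ∧
      ρ = ⟨1, {x : Fin 2 → A | x 1 = π (x 0)}⟩) ∨
  -- (3) the affine relation of an elementary abelian p-group structure on A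
  (∃ p : ℕ, p.Prime ∧ ∃ _ : AddCommGroup A, (∀ a : A, p • a = 0) ∧
      ρ = ⟨3, {x : Fin 4 → A | x 0 - x 1 + x 2 = x 3}⟩) ∨
  -- (4) nontrivial equivalence relation
  (∃ r : A → A → Prop, Equivalence r ∧ r ≠ Eq ∧ (∃ a b, ¬ r a b) ∧
      ρ = ⟨1, {x : Fin 2 → A | r (x 0) (x 1)}⟩) ∨
  -- (5) central relation
  (ρ.1 + 1 < Fintype.card A ∧ TotallyReflexiveRel ρ.2 ∧ TotallySymmetricRel ρ.2 ∧
      ρ.2 ≠ Set.univ ∧ ∃ c : A, ∀ x : Fin (ρ.1 + 1) → A, x 0 = c → x ∈ ρ.2) ∨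
  -- (6) m-regular relation
  (∃ r : ℕ, ∃ θ : Fin (r + 1) → A → A → Prop,
      3 ≤ ρ.1 + 1 ∧ ρ.1 + 1 ≤ Fintype.card A ∧
      (∀ i, Equivalence (θ i)) ∧
      (∀ i, Set.ncard {B : Set A | ∃ a, B = {b | θ i a b}} = ρ.1 + 1) ∧
      (∀ a : Fin (r + 1) → A, (⋂ i, {b | θ i (a i) b}).Nonempty) ∧
      ρ.2 = {x : Fin (ρ.1 + 1) → A | ∀ i, ∃ j k : Fin (ρ.1 + 1), j ≠ k ∧ θ i (x j) (x k)})

/-!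
Let `M` be a clone contained in no `Pol ρ` with `ρ` a Rosenberg relation. Then `M` contains all
operations, for the following reasons.

Suppose that `M` has a proper invariant relation of arity at least three that is totally reflexive
and totally symmetric, and let `ρ` be one of maximal arity and, among these, maximal for inclusion.
The tuples whose entries have a common centre form an invariant relation containing `ρ`. If it is
everything, then `ρ` is central. If it is `ρ`, then `ρ` is homogeneous: in a tuple outside `ρ`, any
given element can replace some entry so that the tuple stays outside. The restriction of a
homogeneous `ρ` to the fixed points of a minimal retraction is so rigid that, as in Słupecki's
theorem, the operations preserving it are essentially unary or have all their values in it. It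
follows that `ρ` consists of the tuples that are not separated by any of the colourings in a certain
independent family, so `ρ` is regular. Both cases are excluded.

A nontrivial invariant binary relation leads similarly to an invariant equivalence relation, central
relation, bounded order or fixed-point-free permutation of prime order.

Finally, let `e` be an idempotent unary operation in `M` whose range is minimal among those with
at least two elements. If some binary operation in `M` acts on two points of this range as the
Boolean operation `x ∧ ¬ y`, every operation can be interpolated. Otherwise the operations followed
by `e` are affine with respect to a medial Maltsev operation on the range. That operation extends to
all of `A`, where it is `x - y + z` for an elementary abelian `p`-group.

Conversely, suppose that `f` does not preserve the Rosenberg relation `ρ`. If `ρ` is not affine, the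
clone generated by `Pol ρ` and `f` separates the points of `Aⁿ` so well that every `F : Aⁿ → A` is
the composition of operations in it with an operation preserving `ρ`. If `ρ` is affine, the previous
paragraph applies to this larger clone, and any group structure it yields has the same ternary
operation `x - y + z`.
-/

namespace Rosenberg

open Function

/-! ### Operations and invariant relations -/

section Clones

variable {A : Type u} {M D : Set (Ops A)} {ι κ : Type*}

/-- Membership in `M` of an operation whose arguments are indexed by an arbitrary type `ι`:
every operation obtained by renaming the arguments belongs to `M`. For a clone and
`ι = Fin (n + 1)` this is ordinary membership, see `mem_iff`. -/
def Mem (M : Set (Ops A)) (f : (ι → A) → A) : Prop :=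
  ∀ (m : ℕ) (e : ι → Fin (m + 1)), (⟨m, fun x => f fun i => x (e i)⟩ : Ops A) ∈ M

/-- Membership in `M` of a unary operation. -/
def Mem₁ (M : Set (Ops A)) (f : A → A) : Prop :=
  Mem M fun x : Unit → A => f (x ())

/-- Membership in `M` of a binary operation. -/
def Mem₂ (M : Set (Ops A)) (f : A → A → A) : Prop :=
  Mem M fun x : Fin 2 → A => f (x 0) (x 1)

/-- Membership in `M` of a ternary operation. -/
def Mem₃ (M : Set (Ops A)) (f : A → A → A → A) : Prop :=
  Mem M fun x : Fin 3 → A => f (x 0) (x 1) (x 2)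

lemma mem_iff (hM : IsClone M) {n : ℕ} {f : (Fin (n + 1) → A) → A} :
    Mem M f ↔ (⟨n, f⟩ : Ops A) ∈ M :=
  ⟨fun h => h n id, fun h m e => hM.2 n m f (fun i x => x (e i)) h fun i => hM.1 m (e i)⟩

lemma Mem.mono {f : (ι → A) → A} (hf : Mem M f) (h : M ⊆ D) : Mem D f :=
  fun m e => h (hf m e)

lemma Mem.proj (hM : IsClone M) (i : ι) : Mem M fun x : ι → A => x i :=
  fun m e => hM.1 m (e i)

lemma exists_equiv_fin_succ (ι : Type*) [Finite ι] [Nonempty ι] :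
    ∃ n, Nonempty (ι ≃ Fin (n + 1)) := by
  obtain ⟨n, ⟨eq⟩⟩ := Finite.exists_equiv_fin ι
  have : NeZero n := ⟨fun h => (h ▸ eq (Classical.arbitrary ι)).elim0⟩
  exact ⟨n - 1, ⟨eq.trans (finCongr (Nat.succ_pred_eq_of_ne_zero (NeZero.ne n)).symm)⟩⟩

lemma Mem.comp (hM : IsClone M) [Finite ι] [Nonempty ι] {f : (ι → A) → A} (hf : Mem M f)
    {g : ι → (κ → A) → A} (hg : ∀ i, Mem M (g i)) : Mem M fun x => f fun i => g i x := by
  obtain ⟨n, ⟨eq⟩⟩ := exists_equiv_fin_succ ι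
  intro m e
  simpa using hM.2 n m _ (fun j x => g (eq.symm j) fun i => x (e i)) (hf n eq)
    fun j => hg (eq.symm j) m e

lemma Mem₁.comp (hM : IsClone M) {f : A → A} (hf : Mem₁ M f) {g : (κ → A) → A}
    (hg : Mem M g) : Mem M fun x => f (g x) :=
  Mem.comp hM hf (g := fun _ => g) fun _ => hg

lemma Mem₂.comp (hM : IsClone M) {f : A → A → A} (hf : Mem₂ M f) {g h : (κ → A) → A}
    (hg : Mem M g) (hh : Mem M h) : Mem M fun x => f (g x) (h x) :=
  Mem.comp hM hf (g := ![g, h]) (Fin.forall_fin_two.2 ⟨hg, hh⟩)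

lemma Mem₃.comp (hM : IsClone M) {f : A → A → A → A} (hf : Mem₃ M f) {g h k : (κ → A) → A}
    (hg : Mem M g) (hh : Mem M h) (hk : Mem M k) : Mem M fun x => f (g x) (h x) (k x) :=
  Mem.comp hM hf (g := ![g, h, k]) (by simp [Fin.forall_fin_succ, hg, hh, hk])

lemma Mem₁.id (hM : IsClone M) : Mem₁ M id :=
  Mem.proj hM ()

lemma Mem₁.comp₁ (hM : IsClone M) {f g : A → A} (hf : Mem₁ M f) (hg : Mem₁ M g) :
    Mem₁ M (f ∘ g) :=
  Mem₁.comp hM hf hg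

lemma Mem₁.iterate (hM : IsClone M) {f : A → A} (hf : Mem₁ M f) (n : ℕ) : Mem₁ M f^[n] := by
  induction n with
  | zero => exact Mem₁.id hM
  | succ n ih => exact Mem₁.comp₁ hM ih hf

lemma Mem₂.swap (hM : IsClone M) {g : A → A → A} (hg : Mem₂ M g) : Mem₂ M fun x y => g y x :=
  Mem₂.comp hM hg (Mem.proj hM 1) (Mem.proj hM 0)

/-- `Preserves` for an operation and a relation whose coordinates are indexed by arbitrary
types. -/
def Pres (f : (ι → A) → A) (ρ : Set (κ → A)) : Prop :=
  ∀ t : ι → κ → A, (∀ i, t i ∈ ρ) → (fun j => f fun i => t i j) ∈ ρ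

/-- The relation `ρ` is invariant under `M`: every operation in `M` preserves it. -/
def Inv (M : Set (Ops A)) (ρ : Set (κ → A)) : Prop :=
  ∀ f ∈ M, Pres f.2 ρ

lemma Inv.mono {ρ : Set (κ → A)} (h : Inv D ρ) (hMD : M ⊆ D) : Inv M ρ :=
  fun f hf => h f (hMD hf)

lemma Inv.pres {ρ : Set (κ → A)} (hρ : Inv M ρ) [Finite ι] [Nonempty ι] {f : (ι → A) → A}
    (hf : Mem M f) : Pres f ρ := by
  intro t ht
  obtain ⟨n, ⟨eq⟩⟩ := exists_equiv_fin_succ ι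
  simpa using hρ _ (hf n eq) (fun j => t (eq.symm j)) fun j => ht _

lemma isClone_pol {k : ℕ} (ρ : Set (Fin k → A)) : IsClone (Pol ρ) :=
  ⟨fun _ i _ ht => ht i, fun _ _ _ _ hf hg t ht => hf _ fun i => hg i t ht⟩

lemma Pres.mem {k : ℕ} {ρ : Set (Fin k → A)} {f : (ι → A) → A} (hf : Pres f ρ)
    (hD : Pol ρ ⊆ D) : Mem D f :=
  fun _ e => hD fun t ht => hf (fun i => t (e i)) fun i => ht (e i)

lemma pres_of_mem_pol {k : ℕ} {ρ : Set (Fin k → A)} [Finite ι] [Nonempty ι]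
    {f : (ι → A) → A} (hf : Mem (Pol ρ) f) : Pres f ρ :=
  Inv.pres (M := Pol ρ) (fun _ hg => hg) hf

lemma isClone_cloneGen (F : Set (Ops A)) : IsClone (cloneGen F) :=
  ⟨fun n i _ hD => hD.1.1 n i,
    fun n m f g hf hg D hD => hD.1.2 n m f g (hf D hD) fun i => hg i D hD⟩

lemma subset_cloneGen (F : Set (Ops A)) : F ⊆ cloneGen F :=
  fun _ hf _ hD => hD.2 hf

lemma cloneGen_subset {F C : Set (Ops A)} (hC : IsClone C) (h : F ⊆ C) : cloneGen F ⊆ C :=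
  fun _ hf => hf C ⟨hC, h⟩

end Clones

section InvariantSets

variable {A : Type u} {M : Set (Ops A)}

/-- The set `S` is a subuniverse of the algebra `(A; M)`, that is, a unary invariant
relation. -/
def Inv₁ (M : Set (Ops A)) (S : Set A) : Prop :=
  ∀ f ∈ M, ∀ x : Fin (f.1 + 1) → A, (∀ i, x i ∈ S) → f.2 x ∈ S

/-- The binary relation `r` is invariant under `M`. -/
def Inv₂ (M : Set (Ops A)) (r : A → A → Prop) : Prop :=
  ∀ f ∈ M, ∀ x y : Fin (f.1 + 1) → A, (∀ i, r (x i) (y i)) → r (f.2 x) (f.2 y)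

lemma Inv₁.subset_pol {S : Set A} (h : Inv₁ M S) : M ⊆ Pol {x : Fin 1 → A | x 0 ∈ S} :=
  fun f hf t => h f hf (t · 0)

lemma Inv₂.subset_pol {r : A → A → Prop} (h : Inv₂ M r) :
    M ⊆ Pol {x : Fin 2 → A | r (x 0) (x 1)} :=
  fun f hf t => h f hf (t · 0) (t · 1)

lemma Inv₂.flip {r : A → A → Prop} (h : Inv₂ M r) : Inv₂ M (flip r) :=
  fun f hf x y => h f hf y x

lemma Inv₂.and {r s : A → A → Prop} (hr : Inv₂ M r) (hs : Inv₂ M s) :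
    Inv₂ M fun x y => r x y ∧ s x y :=
  fun f hf x y h => ⟨hr f hf x y fun i => (h i).1, hs f hf x y fun i => (h i).2⟩

lemma Inv₂.comp {r s : A → A → Prop} (hr : Inv₂ M r) (hs : Inv₂ M s) :
    Inv₂ M (Relation.Comp r s) := by
  intro f hf x y h
  choose u hxu huy using h
  exact ⟨f.2 u, hr f hf x u hxu, hs f hf u y huy⟩

lemma Inv₂.refl_points {r : A → A → Prop} (hr : Inv₂ M r) : Inv₁ M {x | r x x} :=
  fun f hf x hx => hr f hf x x hx

lemma Inv₂.domain {r : A → A → Prop} (hr : Inv₂ M r) : Inv₁ M {x | ∃ y, r x y} := by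
  intro f hf x hx
  choose y hy using hx
  exact ⟨f.2 y, hr f hf x y hy⟩

lemma Inv₂.perm_pow {π : Equiv.Perm A} (hπ : Inv₂ M fun x y => y = π x) (n : ℕ) :
    Inv₂ M fun x y => y = (π ^ n) x := by
  induction n with
  | zero =>
    intro f _ x y hxy
    simp [show y = x from funext hxy]
  | succ n ih =>
    convert hπ.comp ih using 3
    simp [Relation.Comp, pow_succ]

/-- The relation `r` is the full relation or contained in the equality relation. -/
def TrivialRel (r : A → A → Prop) : Prop :=
  (∀ x y, r x y → x = y) ∨ ∀ x y, r x y

/-- All binary relations invariant under `M` are trivial. -/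
def BinaryTrivial (M : Set (Ops A)) : Prop :=
  ∀ r : A → A → Prop, Inv₂ M r → TrivialRel r

lemma TrivialRel.full_of_ne {r : A → A → Prop} (h : TrivialRel r) {a b : A} (hab : r a b)
    (hne : a ≠ b) : ∀ x y, r x y :=
  h.resolve_left fun heq => hne (heq a b hab)

lemma not_trivialRel {r : A → A → Prop} :
    ¬ TrivialRel r ↔ (∃ a b, r a b ∧ a ≠ b) ∧ ∃ x y, ¬ r x y := by
  simp [TrivialRel]

end InvariantSets

section Reflexive

variable {A : Type u} {M : Set (Ops A)} {n k : ℕ}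

lemma injective_of_notMem {ρ : Set (Fin k → A)} (hρ : TotallyReflexiveRel ρ) {x : Fin k → A}
    (hx : x ∉ ρ) : Injective x := by
  contrapose! hx
  obtain ⟨i, j, hij, hne⟩ := not_injective_iff.1 hx
  exact hρ x ⟨i, j, hne, hij⟩

lemma mem_of_not_injective {ρ : Set (Fin k → A)} (hρ : TotallyReflexiveRel ρ) {x : Fin k → A}
    (hx : ¬ Injective x) : x ∈ ρ :=
  not_not.1 (mt (injective_of_notMem hρ) hx)

lemma comp_mem_of_mem {ρ : Set (Fin k → A)} (hr : TotallyReflexiveRel ρ)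
    (hs : TotallySymmetricRel ρ) {x : Fin k → A} (hx : x ∈ ρ) (g : Fin k → Fin k) :
    x ∘ g ∈ ρ := by
  by_cases hg : Injective g
  · exact hs (Equiv.ofBijective g (Finite.injective_iff_bijective.1 hg)) x hx
  · exact mem_of_not_injective hr fun h => hg h.of_comp

lemma totallyReflexiveRel_two {r : A → A → Prop} (hrefl : ∀ x, r x x) :
    TotallyReflexiveRel {x : Fin 2 → A | r (x 0) (x 1)} := by
  rintro x ⟨i, j, hij, hx⟩
  have : x 0 = x 1 := by fin_cases i <;> fin_cases j <;> simp_all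
  simp [this, hrefl]

lemma totallySymmetricRel_two {r : A → A → Prop} (hsymm : ∀ x y, r x y → r y x) :
    TotallySymmetricRel {x : Fin 2 → A | r (x 0) (x 1)} := by
  intro σ x hx
  have hσ : σ 0 ≠ σ 1 := by simp
  obtain ⟨h0, h1⟩ | ⟨h0, h1⟩ : σ 0 = 0 ∧ σ 1 = 1 ∨ σ 0 = 1 ∧ σ 1 = 0 := by omega
  · simpa [h0, h1] using hx
  · simpa [h0, h1] using hsymm _ _ hx

/-- Every totally reflexive and totally symmetric invariant relation of `M` of arity
greater than `n` is full. -/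
def ReflexiveFull (M : Set (Ops A)) (n : ℕ) : Prop :=
  ∀ k, n < k → ∀ σ : Set (Fin k → A), Inv M σ → TotallyReflexiveRel σ →
    TotallySymmetricRel σ → σ = Set.univ

lemma ReflexiveFull.eq_univ (h : ReflexiveFull M n) (hk : n < k) {σ : Set (Fin k → A)}
    (hσ : Inv M σ) (hr : TotallyReflexiveRel σ) : σ = Set.univ := by
  -- The symmetric core of `σ` inherits invariance and reflexivity.
  have hcore := h k hk {x | ∀ τ : Equiv.Perm (Fin k), x ∘ τ ∈ σ}
    (fun f hf t ht τ => hσ f hf (fun i => t i ∘ τ) fun i => ht i τ)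
    (fun x ⟨i, j, hij, hx⟩ τ => hr _ ⟨τ.symm i, τ.symm j, by simpa using hij, by simpa using hx⟩)
    (fun τ x hx τ' => hx (τ * τ'))
  exact Set.eq_univ_of_forall fun x => Set.eq_univ_iff_forall.1 hcore x 1

lemma exists_comp_succAbove_eq {X : Type*} {x : Fin (k + 1) → X} {i j : Fin (k + 1)}
    (hij : i ≠ j) (hx : x i = x j) : ∃ s : Fin (k + 1) → Fin k, (x ∘ j.succAbove) ∘ s = x := by
  have (l : Fin (k + 1)) : ∃ l', x (j.succAbove l') = x l := by
    by_cases hl : l = j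
    · obtain ⟨l', hl'⟩ := Fin.exists_succAbove_eq hij
      exact ⟨l', by rw [hl', hl, hx]⟩
    · obtain ⟨l', hl'⟩ := Fin.exists_succAbove_eq hl
      exact ⟨l', by rw [hl']⟩
  choose s hs using this
  exact ⟨s, funext hs⟩

/-- A family of invariant relations that is closed under repeating and dropping entries is full
as soon as it is full in arity `n`. -/
lemma ReflexiveFull.forall_mem [Nonempty A] (h : ReflexiveFull M n) {Y : ∀ k, Set (Fin k → A)}
    (hY : ∀ k, Inv M (Y k)) (hcomp : ∀ k l (s : Fin l → Fin k), ∀ x ∈ Y k, x ∘ s ∈ Y l)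
    (hn : ∀ x, x ∈ Y n) (x : Fin k → A) : x ∈ Y k := by
  obtain hk | hk := le_total k n
  · let x' : Fin n → A := fun i => if hi : i.1 < k then x ⟨i, hi⟩ else Classical.arbitrary A
    have hx' : x' ∘ Fin.castLE hk = x := funext fun i => by simp [x']
    exact hx' ▸ hcomp _ _ _ _ (hn x')
  induction k, hk using Nat.le_induction with
  | base => exact hn x
  | succ k hk ih =>
    refine Set.eq_univ_iff_forall.1 (h.eq_univ (Nat.lt_succ_of_le hk) (hY _) ?_) x
    rintro y ⟨i, j, hij, hy⟩
    obtain ⟨s, hs⟩ := exists_comp_succAbove_eq hij hy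
    exact hs ▸ hcomp _ _ s _ (ih _)

lemma ReflexiveFull.mem_of_factor [Finite A] [Nonempty A] (h : ReflexiveFull M n) {X : Type*}
    {Y : Set (X → A)} (hY : Inv M Y) (hn : ∀ (c : Fin n → A) (χ : X → Fin n), c ∘ χ ∈ Y)
    (F : X → A) : F ∈ Y := by
  obtain ⟨k, ⟨e⟩⟩ := Finite.exists_equiv_fin A
  have := h.forall_mem (Y := fun k => {c | ∀ χ : X → Fin k, c ∘ χ ∈ Y})
    (fun k f hf t ht χ => hY f hf (fun i => t i ∘ χ) fun i => ht i χ)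
    (fun k l s c hc χ => hc (s ∘ χ)) hn e.symm (e ∘ F)
  simpa [← comp_assoc] using this

lemma ReflexiveFull.exists_forall_rel [Finite A] [Nonempty A] (h : ReflexiveFull M 2)
    {r : A → A → Prop} (hr : Inv₂ M r) (h2 : ∀ x y, ∃ u, r u x ∧ r u y) : ∃ u, ∀ x, r u x := by
  obtain ⟨k, ⟨e⟩⟩ := Finite.exists_equiv_fin A
  obtain ⟨u, hu⟩ := h.forall_mem (Y := fun k => {x | ∃ u, ∀ j, r u (x j)})
    (fun k f hf t ht => by
      choose u hu using ht
      exact ⟨f.2 u, fun j => hr f hf _ _ fun i => hu i j⟩)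
    (fun k l s x ⟨u, hu⟩ => ⟨u, fun j => hu (s j)⟩)
    (fun x => by simpa [Fin.forall_fin_two] using h2 (x 0) (x 1)) e.symm
  exact ⟨u, fun x => by simpa using hu (e x)⟩

end Reflexive

/-! ### Binary invariant relations -/

section Binary

variable {A : Type u} [Fintype A] {M : Set (Ops A)} {r : A → A → Prop}

/-- The set `M` of operations is contained in no clone `Pol ρ` with `ρ` a Rosenberg
relation. -/
def AvoidsRosenberg (M : Set (Ops A)) : Prop :=
  ∀ ρ : Σ k : ℕ, Set (Fin (k + 1) → A), IsRosenbergRel ρ → ¬ M ⊆ Pol ρ.2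

lemma AvoidsRosenberg.eq_univ_of_nonempty [Nontrivial A] (h : AvoidsRosenberg M) {S : Set A}
    (hS : Inv₁ M S) (hne : S.Nonempty) : S = Set.univ := by
  by_contra hproper
  obtain ⟨c, hc⟩ := hne
  refine h ⟨0, {x | x 0 ∈ S}⟩ (.inr <| .inr <| .inr <| .inr <| .inl
    ⟨Fintype.one_lt_card, ?_, ?_, fun hu => hproper ?_, c, fun x hx => ?_⟩) hS.subset_pol
  · exact fun x ⟨i, j, hij, _⟩ => (hij (Subsingleton.elim (α := Fin 1) i j)).elim
  · intro σ x hx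
    simpa [Subsingleton.elim (α := Fin 1) (σ 0) 0] using hx
  · exact Set.eq_univ_of_forall fun a => Set.eq_univ_iff_forall.1 hu fun _ => a
  · simpa [hx] using hc

lemma AvoidsRosenberg.trivialRel_of_equivalence (h : AvoidsRosenberg M) (hr : Inv₂ M r)
    (heq : Equivalence r) : TrivialRel r := by
  by_contra hcon
  obtain ⟨⟨a, b, hab, hne⟩, hproper⟩ := not_trivialRel.1 hcon
  exact h ⟨1, {x | r (x 0) (x 1)}⟩ (.inr <| .inr <| .inr <| .inl
    ⟨r, heq, fun h => hne (h ▸ hab), hproper, rfl⟩) hr.subset_pol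

lemma AvoidsRosenberg.full_of_central (h : AvoidsRosenberg M) (hr : Inv₂ M r)
    (hrefl : ∀ x, r x x) (hsymm : ∀ x y, r x y → r y x) {c : A} (hc : ∀ x, r c x) (x y : A) :
    r x y := by
  by_contra hxy
  have hcard : 2 < Fintype.card A := Fintype.two_lt_card_iff.2 ⟨c, x, y,
    fun hcx => hxy (hcx ▸ hc y), fun hcy => hxy (hcy ▸ hsymm _ _ (hc x)),
    fun hxy' => hxy (hxy' ▸ hrefl x)⟩
  refine h ⟨1, {x | r (x 0) (x 1)}⟩ (.inr <| .inr <| .inr <| .inr <| .inl ⟨hcard,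
    totallyReflexiveRel_two hrefl, totallySymmetricRel_two hsymm, fun hu => hxy ?_, c,
    fun x hx => ?_⟩) hr.subset_pol
  · exact Set.eq_univ_iff_forall.1 hu ![x, y]
  · simpa [hx] using hc (x 1)

lemma AvoidsRosenberg.trivialRel_of_symm [Nonempty A] (h : AvoidsRosenberg M)
    (hT : ReflexiveFull M 2) (hr : Inv₂ M r) (hrefl : ∀ x, r x x)
    (hsymm : ∀ x y, r x y → r y x) : TrivialRel r := by
  by_contra hcon
  obtain ⟨⟨a, b, hab, hne⟩, hproper⟩ := not_trivialRel.1 hcon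
  obtain ⟨s, hrs, ⟨hs, hs_refl, hs_symm, hs_proper⟩, hmax⟩ :=
    (Set.toFinite {s : A → A → Prop | Inv₂ M s ∧ (∀ x, s x x) ∧ (∀ x y, s x y → s y x) ∧
      ∃ x y, ¬ s x y}).exists_le_maximal ⟨hr, hrefl, hsymm, hproper⟩
  have hs_full : ¬ ∀ x y, s x y := by simpa using hs_proper
  -- Either `s ∘ s` is full, and then `s` has a central element, or `s` is transitive.
  by_cases hfull : ∀ x y, Relation.Comp s s x y
  · obtain ⟨c, hc⟩ := hT.exists_forall_rel hs fun x y =>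
      (hfull x y).imp fun u hu => ⟨hs_symm _ _ hu.1, hu.2⟩
    exact hs_full (h.full_of_central hs hs_refl hs_symm hc)
  · have htrans : Relation.Comp s s ≤ s := hmax ⟨hs.comp hs, fun x => ⟨x, hs_refl x, hs_refl x⟩,
      fun x y ⟨u, hxu, huy⟩ => ⟨u, hs_symm _ _ huy, hs_symm _ _ hxu⟩, by simpa using hfull⟩
      fun x y hxy => ⟨x, hs_refl x, hxy⟩
    exact hs_full ((h.trivialRel_of_equivalence hs ⟨hs_refl, hs_symm _ _,
      fun hxy hyz => htrans _ _ ⟨_, hxy, hyz⟩⟩).full_of_ne (hrs a b hab) hne)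

lemma AvoidsRosenberg.antisymm_of_refl [Nonempty A] (h : AvoidsRosenberg M)
    (hT : ReflexiveFull M 2) (hr : Inv₂ M r) (hrefl : ∀ x, r x x) (hproper : ∃ x y, ¬ r x y)
    (x y : A) (hxy : r x y) (hyx : r y x) : x = y := by
  by_contra hne
  obtain ⟨a, b, hab⟩ := hproper
  exact hab ((h.trivialRel_of_symm hT (hr.and hr.flip) (fun x => ⟨hrefl x, hrefl x⟩)
    fun x y hxy => hxy.symm).full_of_ne ⟨hxy, hyx⟩ hne a b).1

lemma AvoidsRosenberg.exists_forall_rel_of_refl [Nonempty A] (h : AvoidsRosenberg M)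
    (hT : ReflexiveFull M 2) (hr : Inv₂ M r) (hrefl : ∀ x, r x x) {a b : A} (hab : r a b)
    (hne : a ≠ b) : ∃ u, ∀ x, r u x := by
  have hfull := (h.trivialRel_of_symm hT (hr.flip.comp hr) (fun x => ⟨x, hrefl x, hrefl x⟩)
    fun x y ⟨u, hux, huy⟩ => ⟨u, huy, hux⟩).full_of_ne ⟨a, hrefl a, hab⟩ hne
  exact hT.exists_forall_rel hr hfull

lemma AvoidsRosenberg.trivialRel_of_refl [Nonempty A] (h : AvoidsRosenberg M)
    (hT : ReflexiveFull M 2) (hr : Inv₂ M r) (hrefl : ∀ x, r x x) : TrivialRel r := by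
  by_contra hcon
  obtain ⟨⟨a, b, hab, hne⟩, hproper⟩ := not_trivialRel.1 hcon
  obtain ⟨s, hrs, ⟨hs, hs_refl, hs_proper⟩, hmax⟩ :=
    (Set.toFinite {s : A → A → Prop | Inv₂ M s ∧ (∀ x, s x x) ∧
      ∃ x y, ¬ s x y}).exists_le_maximal ⟨hr, hrefl, hproper⟩
  have hanti := h.antisymm_of_refl hT hs hs_refl hs_proper
  obtain ⟨u, hu⟩ := h.exists_forall_rel_of_refl hT hs hs_refl (hrs a b hab) hne
  obtain ⟨v, hv⟩ := h.exists_forall_rel_of_refl hT hs.flip hs_refl (hrs a b hab) hne.symm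
  -- Either `s ∘ s` relates the greatest element `v` to the least element `u`, and then `u = v`,
  -- or `s` is a bounded partial order.
  by_cases hfull : ∀ x y, Relation.Comp s s x y
  · obtain ⟨w, hvw, hwu⟩ := hfull v u
    obtain rfl : v = u := (hanti _ _ hvw (hv w)).trans (hanti _ _ hwu (hu w))
    exact hne ((hanti _ _ (hv a) (hu a)).trans (hanti _ _ (hu b) (hv b)))
  · have htrans : Relation.Comp s s ≤ s := hmax ⟨hs.comp hs, fun x => ⟨x, hs_refl x, hs_refl x⟩,
      by simpa using hfull⟩ fun x y hxy => ⟨x, hs_refl x, hxy⟩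
    have horder : IsPartialOrder A s :=
      { refl := hs_refl, trans := fun x y z hxy hyz => htrans x z ⟨y, hxy, hyz⟩, antisymm := hanti }
    exact h ⟨1, {x | s (x 0) (x 1)}⟩ (.inl ⟨s, horder, ⟨u, hu⟩, ⟨v, hv⟩, rfl⟩) hs.subset_pol

lemma AvoidsRosenberg.perm_eq_one [Nontrivial A] (h : AvoidsRosenberg M) {π : Equiv.Perm A}
    (hπ : Inv₂ M fun x y => y = π x) : π = 1 := by
  by_contra hne
  obtain ⟨p, hp, hdvd⟩ := Nat.exists_prime_and_dvd (mt orderOf_eq_one_iff.1 hne)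
  set k := orderOf π / p
  have horder : orderOf (π ^ k) = p := orderOf_pow_orderOf_div (orderOf_pos π).ne' hdvd
  have hk : π ^ k ≠ 1 := fun h1 => hp.one_lt.ne (by rw [← horder, h1, orderOf_one])
  refine h ⟨1, {x | x 1 = (π ^ k) (x 0)}⟩ (.inr <| .inl ⟨π ^ k, fun a ha => hk ?_, ⟨p, hp,
    fun a => ?_⟩, rfl⟩) (hπ.perm_pow k).subset_pol
  · have hfix := h.eq_univ_of_nonempty (hπ.perm_pow k).refl_points ⟨a, ha.symm⟩
    exact Equiv.ext fun x => (Set.eq_univ_iff_forall.1 hfix x).symm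
  · rw [← horder, pow_orderOf_eq_one, Equiv.Perm.one_apply]

lemma AvoidsRosenberg.unique_of_irrefl [Nontrivial A] (h : AvoidsRosenberg M)
    (hT : ReflexiveFull M 2) (hr : Inv₂ M r) (hirr : ∀ x, ¬ r x x) {u x y : A} (hx : r u x)
    (hy : r u y) : x = y := by
  by_contra hne
  have hran := h.eq_univ_of_nonempty hr.flip.domain ⟨x, u, hx⟩
  have hfull := (h.trivialRel_of_symm hT (hr.flip.comp hr)
    (fun x => (Set.eq_univ_iff_forall.1 hran x).imp fun u hu => ⟨hu, hu⟩)
    fun x y ⟨u, hux, huy⟩ => ⟨u, huy, hux⟩).full_of_ne ⟨u, hx, hy⟩ hne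
  obtain ⟨c, hc⟩ := hT.exists_forall_rel hr hfull
  exact hirr c (hc c)

lemma AvoidsRosenberg.not_rel_of_irrefl [Nontrivial A] (h : AvoidsRosenberg M)
    (hT : ReflexiveFull M 2) (hr : Inv₂ M r) (hirr : ∀ x, ¬ r x x) (a b : A) : ¬ r a b := by
  intro hab
  have hdom := h.eq_univ_of_nonempty hr.domain ⟨a, b, hab⟩
  choose π hπ using Set.eq_univ_iff_forall.1 hdom
  have hinj : Injective π := fun x y hxy =>
    h.unique_of_irrefl hT hr.flip hirr (hπ x) (show r y (π x) from hxy ▸ hπ y)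
  have hone := h.perm_eq_one (π := Equiv.ofBijective π (Finite.injective_iff_bijective.1 hinj))
    fun f hf x y hxy => h.unique_of_irrefl hT hr hirr
      (hr f hf x y fun i => by simpa [hxy i] using hπ (x i)) (hπ _)
  have ha : π a = a := by simpa using DFunLike.congr_fun hone a
  exact hirr a (by simpa [ha] using hπ a)

lemma AvoidsRosenberg.binaryTrivial [Nontrivial A] (h : AvoidsRosenberg M)
    (hT : ReflexiveFull M 2) : BinaryTrivial M := by
  intro r hr
  by_cases hloop : ∃ x, r x x
  · exact h.trivialRel_of_refl hT hr
      (Set.eq_univ_iff_forall.1 (h.eq_univ_of_nonempty hr.refl_points hloop))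
  · exact .inl fun x y hxy => (h.not_rel_of_irrefl hT hr (by simpa using hloop) x y hxy).elim

end Binary

/-! ### Homogeneous and rigid relations -/

section Homogeneous

variable {D ι : Type*} {n : ℕ} {ρ : Set (Fin n → D)}

lemma not_injective_of_forall_ne {χ : Fin n → Fin n} {m : Fin n} (h : ∀ j, χ j ≠ m) :
    ¬ Injective χ :=
  fun hχ => (Finite.surjective_of_injective hχ m).elim h

lemma not_injective_update_id {i l : Fin n} (h : i ≠ l) : ¬ Injective (update id i l) :=
  fun hinj => h (hinj (by simp [h.symm]))

lemma update_id_self [DecidableEq D] (a : D) : update id a a = id :=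
  update_eq_self a id

lemma exists_ne_ne_ne (hn : 3 ≤ n) (i : Fin n) : ∃ j k : Fin n, j ≠ i ∧ k ≠ i ∧ j ≠ k := by
  obtain ⟨j, hj, k, hk, hjk⟩ := Finset.one_lt_card.1
    (show 1 < (Finset.univ.erase i).card by simp; omega)
  exact ⟨j, k, by simpa using hj, by simpa using hk, hjk⟩

lemma const_mem (hn : 2 ≤ n) (hρ : TotallyReflexiveRel ρ) (c : D) : (fun _ => c) ∈ ρ :=
  have := Fin.nontrivial_iff_two_le.2 hn
  mem_of_not_injective hρ Function.not_injective_const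

lemma ite_mem (hn : 3 ≤ n) (hρ : TotallyReflexiveRel ρ) (i : Fin n) (c d : D) :
    (fun j => if j = i then c else d) ∈ ρ := by
  obtain ⟨j, k, hj, hk, hjk⟩ := exists_ne_ne_ne hn i
  exact hρ _ ⟨j, k, hjk, by simp [hj, hk]⟩

lemma Pres.update_mem [DecidableEq ι] {G : (ι → D) → D} (hG : Pres G ρ) {t : ι → Fin n → D}
    {i : ι} {s : Fin n → D} (hs : s ∈ ρ) (ht : ∀ i' ≠ i, t i' ∈ ρ) :
    (fun j => G (update (fun i' => t i' j) i (s j))) ∈ ρ := by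
  convert hG (update t i s) fun i' => ?_ using 3 with j
  · exact funext fun i' => (apply_update (fun _ p => p j) t i s i').symm
  · obtain rfl | hi := eq_or_ne i' i
    · simpa using hs
    · simpa [hi] using ht i' hi

lemma Pres.slice_mem (hn : 2 ≤ n) (hρ : TotallyReflexiveRel ρ) [DecidableEq ι]
    {G : (ι → D) → D} (hG : Pres G ρ) (c : ι → D) (i : ι) {s : Fin n → D} (hs : s ∈ ρ) :
    (fun j => G (update c i (s j))) ∈ ρ :=
  hG.update_mem (t := fun i' _ => c i') hs fun i' _ => const_mem hn hρ (c i')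

/-- Any element can be substituted for some entry of a tuple outside `ρ`. -/
def Homogeneous (ρ : Set (Fin n → D)) : Prop :=
  ∀ a ∉ ρ, ∀ u, ∃ i, update a i u ∉ ρ

lemma Homogeneous.exists_update (hh : Homogeneous ρ) {g : Fin n → Fin n → D}
    (κ χ : Fin n → Fin n) (h : (fun j => g (κ j) (χ j)) ∉ ρ) (a b : Fin n) :
    ∃ i, (fun j => g (update κ i a j) (update χ i b j)) ∉ ρ := by
  obtain ⟨i, hi⟩ := hh _ h (g a b)
  refine ⟨i, ?_⟩
  rwa [show (fun j => g (update κ i a j) (update χ i b j)) = _ from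
    funext fun j => apply_update₂ (fun _ => g) κ χ i a b j]

lemma Homogeneous.exists_const_right (hh : Homogeneous ρ) {g : Fin n → Fin n → D}
    (hg : ∀ κ χ : Fin n → Fin n, ¬ Injective κ → ¬ Injective χ → (fun j => g (κ j) (χ j)) ∈ ρ)
    {χ : Fin n → Fin n} (hχ : ¬ Injective χ) (h : (fun j => g j (χ j)) ∉ ρ) :
    ∃ k, (fun j => g j k) ∉ ρ := by
  obtain ⟨m, hm⟩ : ∃ m, ∀ j, χ j ≠ m := by
    simpa [Surjective] using mt Finite.injective_iff_surjective.2 hχ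
  obtain ⟨k, hk⟩ : ∃ k, k ≠ m :=
    have ⟨i₁, i₂, _, hi⟩ := not_injective_iff.1 hχ
    have : Nontrivial (Fin n) := ⟨i₁, i₂, hi⟩
    exists_ne m
  -- The values of `χ` are replaced by `k` one at a time; `m` is never a value.
  have key (S : Finset (Fin n)) : (fun j => g j (S.piecewise (fun _ => k) χ j)) ∉ ρ := by
    induction S using Finset.induction_on with
    | empty => simpa using h
    | insert l S _ ih =>
      obtain ⟨i, hi⟩ := hh.exists_update id _ ih l k
      obtain rfl | hil := eq_or_ne i l
      · simpa [update_id_self, Finset.piecewise_insert] using hi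
      · refine absurd (hg _ _ (not_injective_update_id hil)
          (not_injective_of_forall_ne (m := m) fun j => ?_)) hi
        by_cases hj : j = i <;> by_cases hS : j ∈ S <;> simp [hj, hS, hk, hm]
  exact ⟨k, by simpa using key Finset.univ⟩

lemma Homogeneous.collapse (hn : 2 ≤ n) (hh : Homogeneous ρ) {g : Fin n → Fin n → D}
    (hg : ∀ κ χ : Fin n → Fin n, ¬ Injective κ → ¬ Injective χ → (fun j => g (κ j) (χ j)) ∈ ρ)
    (h : (fun j => g j j) ∉ ρ) : (∃ k, (fun j => g j k) ∉ ρ) ∨ ∃ k, (fun j => g k j) ∉ ρ := by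
  obtain ⟨x, y, hxy⟩ := Fin.nontrivial_iff_two_le.2 hn
  obtain ⟨i, hi⟩ := hh.exists_update id id h x y
  obtain rfl | hx := eq_or_ne i x
  · exact .inl (hh.exists_const_right hg (not_injective_update_id hxy)
      (by simpa [update_id_self] using hi))
  obtain rfl | hy := eq_or_ne i y
  · exact .inr (hh.exists_const_right (g := fun j k => g k j)
      (fun κ χ hκ hχ => hg χ κ hχ hκ) (not_injective_update_id hxy.symm)
      (by simpa [update_id_self] using hi))
  · exact absurd (hg _ _ (not_injective_update_id hx) (not_injective_update_id hy)) hi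

lemma Homogeneous.exists_slice_or_const (hn : 2 ≤ n) (hρ : TotallyReflexiveRel ρ)
    (hh : Homogeneous ρ) [DecidableEq ι] {G : (ι → D) → D} (hG : Pres G ρ)
    {t : ι → Fin n → D} (ht : (fun j => G fun i => t i j) ∉ ρ) (i : ι) :
    (∃ (c : ι → D) (p : Fin n → D), (fun j => G (update c i (p j))) ∉ ρ) ∨
      ∃ b, (fun j => G fun i' => update t i (fun _ => b) i' j) ∉ ρ := by
  have hcomp {χ : Fin n → Fin n} (hχ : ¬ Injective χ) (i' : ι) : t i' ∘ χ ∈ ρ :=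
    mem_of_not_injective hρ fun h => hχ h.of_comp
  obtain ⟨k, hk⟩ | ⟨k, hk⟩ := hh.collapse hn
    (g := fun j k => G (update (fun i' => t i' k) i (t i j)))
    (fun κ χ hκ hχ => hG.update_mem (hcomp hκ i) fun i' _ => hcomp hχ i') (by simpa using ht)
  · exact .inl ⟨_, _, hk⟩
  · refine .inr ⟨t i k, ?_⟩
    convert hk using 2
    exact funext fun j => congrArg G (funext fun i' => apply_update (fun _ p => p j) t i _ i')

lemma Homogeneous.exists_slice (hn : 2 ≤ n) (hρ : TotallyReflexiveRel ρ)
    (hh : Homogeneous ρ) [Finite ι] [DecidableEq ι] {G : (ι → D) → D} (hG : Pres G ρ)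
    {t : ι → Fin n → D} (ht : (fun j => G fun i => t i j) ∉ ρ) :
    ∃ (i : ι) (c : ι → D) (p : Fin n → D), (fun j => G (update c i (p j))) ∉ ρ := by
  cases nonempty_fintype ι
  by_contra! hslice
  have key (S : Finset ι) : ∃ t : ι → Fin n → D, (∀ i ∈ S, ∃ c, t i = fun _ => c) ∧
      (fun j => G fun i => t i j) ∉ ρ := by
    induction S using Finset.induction_on with
    | empty => exact ⟨t, by simp, ht⟩
    | insert i S _ ih =>
      obtain ⟨t, hc, ht⟩ := ih
      obtain ⟨b, hb⟩ := (hh.exists_slice_or_const hn hρ hG ht i).resolve_left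
        fun ⟨c, p, hp⟩ => hp (hslice i c p)
      refine ⟨_, fun i' hi' => ?_, hb⟩
      obtain rfl | hne := eq_or_ne i' i
      · exact ⟨b, update_self ..⟩
      · simpa [hne] using hc i' (Finset.mem_of_mem_insert_of_ne hi' hne)
  obtain ⟨t, hc, ht⟩ := key Finset.univ
  choose c hc using fun i => hc i (Finset.mem_univ i)
  simp only [hc] at ht
  exact ht (const_mem hn hρ _)

/-- `h` is an endomorphism of `ρ` that does not map all tuples into `ρ`. -/
structure IsProperEnd (ρ : Set (Fin n → D)) (h : D → D) : Prop where
  comp_mem : ∀ s ∈ ρ, h ∘ s ∈ ρ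
  exists_notMem : ∃ s, h ∘ s ∉ ρ

/-- A homogeneous relation whose endomorphisms are either bijective or have all their values
in it. The operations preserving such a relation are as simple as in Słupecki's theorem, see
`IsRigid.essentially_unary`. -/
structure IsRigid (ρ : Set (Fin n → D)) : Prop where
  three_le : 3 ≤ n
  refl : TotallyReflexiveRel ρ
  ne_univ : ρ ≠ Set.univ
  homogeneous : Homogeneous ρ
  bijective : ∀ h, IsProperEnd ρ h → Bijective h

lemma IsRigid.two_le (hρ : IsRigid ρ) : 2 ≤ n :=
  hρ.three_le.trans' (by simp)

lemma update_id_comp_mem [DecidableEq D] (hρ : TotallyReflexiveRel ρ) {u v : D}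
    (h : ∀ s ∈ ρ, ∀ i, s i = u → update s i v ∈ ρ) {s : Fin n → D} (hs : s ∈ ρ) :
    update id u v ∘ s ∈ ρ := by
  by_cases hinj : Injective s
  · by_cases hu : ∃ i, s i = u
    · obtain ⟨i, rfl⟩ := hu
      rw [update_comp_eq_of_injective id hinj i v]
      exact h s hs i rfl
    · rw [update_comp_eq_of_forall_ne id v (not_exists.1 hu)]
      exact hs
  · exact mem_of_not_injective hρ fun h => hinj h.of_comp

lemma IsRigid.eq_of_dominated (hρ : IsRigid ρ) {u v : D}
    (h : ∀ s ∈ ρ, ∀ i, s i = u → update s i v ∈ ρ) : u = v := by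
  classical
  by_contra huv
  have hnot : ¬ Bijective (update id u v) :=
    fun hb => huv (hb.1 (by simp [Ne.symm huv]))
  have hall (s : Fin n → D) : update id u v ∘ s ∈ ρ := by
    by_contra hs
    exact hnot (hρ.bijective _ ⟨fun s => update_id_comp_mem hρ.refl h, s, hs⟩)
  obtain ⟨a, ha⟩ := (Set.ne_univ_iff_exists_notMem _).1 hρ.ne_univ
  obtain ⟨i, hi⟩ := hρ.homogeneous a ha v
  obtain ⟨j, hj⟩ : ∃ j, update a i v j = u := by
    by_contra! hu
    have := hall (update a i v)
    rw [update_comp_eq_of_forall_ne id v hu] at this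
    exact hi this
  have hji : j ≠ i := by
    rintro rfl
    exact huv (by simpa using hj.symm)
  have hau : update a i u ∈ ρ := hρ.refl _ ⟨i, j, hji.symm, by simpa [hji] using hj.symm⟩
  exact hi (by simpa using h _ hau i (by simp))

lemma symm_comp_mem [Finite D] {π : Equiv.Perm D} (hπ : ∀ s ∈ ρ, π ∘ s ∈ ρ) {s : Fin n → D}
    (hs : s ∈ ρ) : π.symm ∘ s ∈ ρ :=
  Equiv.Perm.perm_symm_mapsTo_of_mapsTo (Equiv.piCongrRight fun _ : Fin n => π) hπ hs

lemma IsRigid.update_eq_of_forall [Finite D] (hρ : IsRigid ρ) [DecidableEq ι]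
    {G : (ι → D) → D} (hG : Pres G ρ) {π : Equiv.Perm D} (hπ : ∀ s ∈ ρ, π ∘ s ∈ ρ) {i : ι}
    {c : ι → D} (hc : ∀ y, G (update c i y) = π y) (x : ι → D) (y : D) :
    G (update x i y) = π y := by
  refine (π.symm_apply_eq.1 (hρ.eq_of_dominated fun s hs j hj => ?_).symm)
  have hmem : (fun k => G (update (fun i' => if k = j then x i' else c i') i (s k))) ∈ ρ :=
    hG.update_mem hs fun i' _ => ite_mem hρ.three_le hρ.refl j (x i') (c i')
  convert symm_comp_mem hπ hmem using 1
  refine update_eq_iff.2 ⟨by simp [hj], fun k hk => by simp [hk, hc]⟩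

lemma IsRigid.essentially_unary [Finite D] (hρ : IsRigid ρ) [Finite ι]
    {G : (ι → D) → D} (hG : Pres G ρ) {t : ι → Fin n → D}
    (ht : (fun j => G fun i => t i j) ∉ ρ) :
    ∃ (i : ι) (π : Equiv.Perm D), ∀ x, G x = π (x i) := by
  classical
  obtain ⟨i, c, p, hp⟩ := hρ.homogeneous.exists_slice hρ.two_le hρ.refl hG ht
  have hend (s) (hs : s ∈ ρ) : (fun x => G (update c i x)) ∘ s ∈ ρ :=
    hG.slice_mem hρ.two_le hρ.refl c i hs
  let π : Equiv.Perm D := .ofBijective _ (hρ.bijective _ ⟨hend, p, hp⟩)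
  refine ⟨i, π, fun x => ?_⟩
  simpa using hρ.update_eq_of_forall hG (π := π) hend (fun _ => rfl) x (x i)

end Homogeneous

/-! ### Extremal relations -/

section Extremal

variable {A : Type u} {n k : ℕ} {ρ : Set (Fin n → A)} {M : Set (Ops A)}

/-- A totally reflexive and totally symmetric relation of arity at least three that cannot be
enlarged, neither in arity nor as a set, within the invariant relations of its
polymorphisms. -/
structure IsExtremal (ρ : Set (Fin n → A)) : Prop where
  three_le : 3 ≤ n
  refl : TotallyReflexiveRel ρ
  symm : TotallySymmetricRel ρ
  ne_univ : ρ ≠ Set.univ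
  full : ReflexiveFull (Pol ρ) n
  eq_or_eq_univ : ∀ σ, ρ ⊆ σ → Inv (Pol ρ) σ → TotallySymmetricRel σ → σ = ρ ∨ σ = Set.univ

lemma IsExtremal.two_le (hρ : IsExtremal ρ) : 2 ≤ n :=
  hρ.three_le.trans' (by simp)

lemma IsExtremal.exists_notMem (hρ : IsExtremal ρ) : ∃ b, b ∉ ρ :=
  (Set.ne_univ_iff_exists_notMem _).1 hρ.ne_univ

lemma IsExtremal.mem_of_not_injective (hρ : IsExtremal ρ) {x : Fin n → A}
    (hx : ¬ Injective x) : x ∈ ρ :=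
  Rosenberg.mem_of_not_injective hρ.refl hx

lemma IsExtremal.injective (hρ : IsExtremal ρ) {x : Fin n → A} (hx : x ∉ ρ) : Injective x :=
  injective_of_notMem hρ.refl hx

lemma IsExtremal.comp_mem (hρ : IsExtremal ρ) {x : Fin n → A} (hx : x ∈ ρ)
    (φ : Fin n → Fin n) : x ∘ φ ∈ ρ :=
  comp_mem_of_mem hρ.refl hρ.symm hx φ

/-- The proper invariant relations of `M` of arity `k` that are totally reflexive and totally
symmetric; `ReflexiveFull M n` says that there are none of arity greater than `n`. -/
def properReflexiveRels (M : Set (Ops A)) (k : ℕ) : Set (Set (Fin k → A)) :=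
  {σ | Inv M σ ∧ TotallyReflexiveRel σ ∧ TotallySymmetricRel σ ∧ σ ≠ Set.univ}

lemma reflexiveFull_iff :
    ReflexiveFull M n ↔ ∀ k, n < k → ¬ (properReflexiveRels M k).Nonempty := by
  simp only [ReflexiveFull, properReflexiveRels, Set.not_nonempty_iff_eq_empty,
    Set.eq_empty_iff_forall_notMem, Set.mem_ofPred_eq, not_and, not_ne_iff]

lemma le_card_of_properReflexiveRels_nonempty [Finite A]
    (h : (properReflexiveRels M k).Nonempty) : k ≤ Nat.card A := by
  obtain ⟨σ, -, hr, -, hne⟩ := h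
  obtain ⟨a, ha⟩ := (Set.ne_univ_iff_exists_notMem _).1 hne
  simpa using Nat.card_le_card_of_injective a (injective_of_notMem hr ha)

lemma exists_isExtremal [Finite A] (h : ¬ ReflexiveFull M 2) :
    ∃ (n : ℕ) (ρ : Set (Fin n → A)), IsExtremal ρ ∧ M ⊆ Pol ρ := by
  classical
  simp only [reflexiveFull_iff, not_forall, not_not] at h
  obtain ⟨k, hk2, hk⟩ := h
  let P (k : ℕ) : Prop := 2 < k ∧ (properReflexiveRels M k).Nonempty
  have hbound (k : ℕ) (hk : P k) : k ≤ Nat.card A :=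
    le_card_of_properReflexiveRels_nonempty hk.2
  obtain ⟨hn2, hn⟩ : P (Nat.findGreatest P (Nat.card A)) :=
    Nat.findGreatest_spec (hbound k ⟨hk2, hk⟩) ⟨hk2, hk⟩
  obtain ⟨ρ, ⟨hρ, hr, hs, hne⟩, hmax⟩ := (Set.toFinite _).exists_maximal hn
  refine ⟨_, ρ, ⟨hn2, hr, hs, hne, reflexiveFull_iff.2 fun l hl ⟨τ, hτ, hτ'⟩ => ?_,
    fun τ hτ hinv hsymm => ?_⟩, hρ⟩
  · have hPl : P l := ⟨hn2.trans hl, τ, hτ.mono hρ, hτ'⟩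
    exact hl.not_ge (Nat.le_findGreatest (hbound l hPl) hPl)
  · refine or_iff_not_imp_right.2 fun hτne => (hmax ?_ hτ).antisymm hτ
    exact ⟨hinv.mono hρ, fun x hx => hτ (hr x hx), hsymm, hτne⟩

/-- Some element `u` is central for `ρ` relative to `S`: all tuples over `S ∪ {u}` containing
`u` belong to `ρ`. For `S = univ` this is the centre required of a central relation. -/
def HasCentre (ρ : Set (Fin n → A)) (S : Set A) : Prop :=
  ∃ u, ∀ s : Fin n → A, u ∈ Set.range s → Set.range s ⊆ insert u S → s ∈ ρ

lemma HasCentre.mono {S T : Set A} (h : HasCentre ρ T) (hST : S ⊆ T) : HasCentre ρ S :=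
  h.imp fun _ hu s hus hs => hu s hus (hs.trans (Set.insert_subset_insert hST))

lemma inv_hasCentre : Inv (Pol ρ) {x : Fin k → A | HasCentre ρ (Set.range x)} := by
  classical
  intro f hf t ht
  choose u hu using ht
  refine ⟨f.2 u, fun s ⟨i, hi⟩ hs => ?_⟩
  have (j : Fin n) : ∃ v, f.2 v = s j ∧ (s j = f.2 u → v = u) ∧
      ∀ l, v l ∈ insert (u l) (Set.range (t l)) := by
    by_cases hj : s j = f.2 u
    · exact ⟨u, hj.symm, fun _ => rfl, fun l => .inl rfl⟩
    · obtain ⟨m, hm⟩ := (hs ⟨j, rfl⟩).resolve_left hj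
      exact ⟨fun l => t l m, hm, fun h => absurd h hj, fun l => .inr ⟨m, rfl⟩⟩
  choose v hv hvu hvt using this
  rw [← funext hv]
  exact hf (fun l j => v j l) fun l => hu l _ ⟨i, congrFun (hvu i hi) l⟩
    (Set.range_subset_iff.2 fun j => hvt j l)

lemma IsExtremal.hasCentre_range (hρ : IsExtremal ρ) {x : Fin n → A} (hx : x ∈ ρ) :
    HasCentre ρ (Set.range x) := by
  let i : Fin n := ⟨0, hρ.two_le.trans' (by simp)⟩
  refine ⟨x i, fun s _ hs => ?_⟩
  rw [Set.insert_eq_of_mem (Set.mem_range_self i), Set.range_subset_iff] at hs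
  choose φ hφ using hs
  exact (funext hφ : x ∘ φ = s) ▸ hρ.comp_mem hx φ

lemma IsExtremal.homogeneous_of_hasCentre (hρ : IsExtremal ρ)
    (h : ∀ x : Fin n → A, HasCentre ρ (Set.range x) → x ∈ ρ) : Homogeneous ρ := by
  intro a ha u
  by_contra! hmem
  refine ha (h a ⟨u, fun s ⟨i₀, hi₀⟩ hs => ?_⟩)
  by_contra hsρ
  have hrange (i : Fin n) : ∃ j, i ≠ i₀ → a j = s i := by
    obtain rfl | hi := eq_or_ne i i₀
    · exact ⟨i, fun h => absurd rfl h⟩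
    · obtain ⟨j, hj⟩ := (hs ⟨i, rfl⟩).resolve_left fun h => hi (hρ.injective hsρ (h.trans hi₀.symm))
      exact ⟨j, fun _ => hj⟩
  choose φ hφ using hrange
  obtain ⟨m, hm⟩ : ∃ m, ∀ i ≠ i₀, φ i ≠ m := by
    obtain ⟨i₁, -, hi₁, -⟩ := exists_ne_ne_ne hρ.three_le i₀
    have hnot : ¬ Injective (update φ i₀ (φ i₁)) := fun hinj => hi₁ (hinj (by simp [hi₁]))
    obtain ⟨m, hm⟩ := not_forall.1 (mt Finite.injective_iff_surjective.2 hnot)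
    exact ⟨m, fun i hi hφm => hm ⟨i, by simp [hi, hφm]⟩⟩
  refine hsρ ?_
  convert hρ.comp_mem (hmem m) (update φ i₀ m) using 1
  refine (comp_update _ _ _ _).trans (update_eq_iff.2 ⟨by simp [hi₀], fun i hi => ?_⟩) |>.symm
  simp [hm i hi, hφ i hi]

lemma IsExtremal.central_or_homogeneous [Finite A] [Nonempty A] (hρ : IsExtremal ρ) :
    (∃ u, ∀ s : Fin n → A, u ∈ Set.range s → s ∈ ρ) ∨ Homogeneous ρ := by
  obtain h | h := hρ.eq_or_eq_univ {x | HasCentre ρ (Set.range x)}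
    (fun x => hρ.hasCentre_range) inv_hasCentre
    (fun σ x hx => HasCentre.mono hx (Set.range_comp_subset_range σ x))
  · exact .inr (hρ.homogeneous_of_hasCentre fun x hx => h ▸ hx)
  · left
    obtain ⟨k, ⟨e⟩⟩ := Finite.exists_equiv_fin A
    obtain ⟨u, hu⟩ := hρ.full.forall_mem
      (Y := fun k => {x : Fin k → A | HasCentre ρ (Set.range x)}) (fun _ => inv_hasCentre)
      (fun _ _ s x hx => HasCentre.mono hx (Set.range_comp_subset_range s x))
      (Set.eq_univ_iff_forall.1 h) e.symm
    exact ⟨u, fun s hs => hu s hs (by simp)⟩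

lemma inv_pres_values {ι κ : Type*} (t : ι → κ → A) :
    Inv (Pol ρ) {y : κ → A | ∃ G : (ι → A) → A, Pres G ρ ∧ y = fun j => G fun i => t i j} := by
  intro f hf y hy
  choose G hG hGy using hy
  exact ⟨fun v => f.2 fun i => G i v, fun s hs => hf _ fun i => hG i s hs, by simp [hGy]⟩

lemma IsExtremal.exists_pres (hρ : IsExtremal ρ) {b : Fin n → A} (hb : b ∉ ρ)
    (y : Fin n → A) : ∃ G : (Equiv.Perm (Fin n) → A) → A, Pres G ρ ∧
      y = fun j => G fun σ => b (σ j) := by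
  let R : Set (Fin n → A) := {y | ∃ G : (Equiv.Perm (Fin n) → A) → A, Pres G ρ ∧
    y = fun j => G fun σ => b (σ j)}
  have : Nonempty (Fin n) := ⟨⟨0, hρ.two_le.trans' (by simp)⟩⟩
  have hρR : ρ ⊆ R := fun x hx =>
    ⟨fun v => x (invFun b (v 1)), fun t _ => hρ.comp_mem hx fun j => invFun b (t 1 j),
      funext fun j => by simp [leftInverse_invFun (hρ.injective hb) j]⟩
  have hsymm : TotallySymmetricRel R := by
    rintro τ _ ⟨G, hG, rfl⟩
    exact ⟨fun v => G fun σ => v (σ * τ), fun t ht => hG (fun σ => t (σ * τ)) fun σ => ht _,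
      rfl⟩
  obtain h | h := hρ.eq_or_eq_univ R hρR (inv_pres_values _) hsymm
  · exact absurd (h ▸ ⟨fun v => v 1, fun t ht => ht 1, rfl⟩ : b ∈ ρ) hb
  · exact Set.eq_univ_iff_forall.1 h y

lemma IsExtremal.exists_pres_fun [Finite A] (hρ : IsExtremal ρ) {b : Fin n → A} (hb : b ∉ ρ)
    {X : Type*} (F : X → A) : ∃ G : ((X → Fin n) → A) → A, Pres G ρ ∧
      F = fun x => G fun ψ => b (ψ x) := by
  have : Nonempty A := ⟨b ⟨0, hρ.two_le.trans' (by simp)⟩⟩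
  refine hρ.full.mem_of_factor (Y := {F : X → A | ∃ G : ((X → Fin n) → A) → A, Pres G ρ ∧
      F = fun x => G fun ψ => b (ψ x)}) (inv_pres_values _) (fun c χ => ?_) F
  obtain ⟨G, hG, hGc⟩ := hρ.exists_pres hb c
  refine ⟨fun v => G fun σ => v (σ ∘ χ), fun t ht => hG (fun σ => t (σ ∘ χ)) fun σ => ht _, ?_⟩
  simp [hGc, comp_def]

end Extremal

/-! ### Colourings and regular relations -/

section Iterates

variable {X : Type*} {k : X → X} {S : Set X}

lemma iterate_factorial_card_eq [Finite X] (hk : k '' S = S) {x : X} (hx : x ∈ S) :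
    k^[(Nat.card S).factorial] x = x := by
  cases nonempty_fintype S
  have hmaps : Set.MapsTo k S S := Set.mapsTo_iff_image_subset.2 hk.subset
  have hinj : Injective (hmaps.restrict k S S) := Finite.injective_iff_surjective.2 <|
    hmaps.restrict_surjective_iff.2 hk.superset
  have := congrFun (injective_iff_iterate_factorial_card_eq_id.1 hinj) ⟨x, hx⟩
  rw [hmaps.iterate_restrict] at this
  rw [Nat.card_eq_fintype_card]
  exact congrArg Subtype.val this

lemma exists_iterate_retract [Finite X] (hk : k '' S = S) (hrange : Set.range k ⊆ S) :
    ∃ m, (∀ x, k^[m] x ∈ S) ∧ ∀ x ∈ S, k^[m] x = x := by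
  refine ⟨_, fun x => ?_, fun x => iterate_factorial_card_eq hk⟩
  obtain ⟨m, hm⟩ := Nat.exists_eq_succ_of_ne_zero (Nat.card S).factorial_ne_zero
  rw [hm, iterate_succ_apply']
  exact hrange ⟨_, rfl⟩

/-- An idempotent map as a map onto its fixed points. -/
def toFixed {e : X → X} (he : ∀ x, e (e x) = e x) (x : X) : fixedPoints e :=
  ⟨e x, he x⟩

lemma toFixed_val {e : X → X} (he : ∀ x, e (e x) = e x) (x : fixedPoints e) :
    toFixed he x = x :=
  Subtype.ext x.2

end Iterates

section Retractions

variable {A : Type u} {n : ℕ} {ρ : Set (Fin n → A)}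

/-- An idempotent endomorphism of `ρ` with a tuple outside `ρ` among its fixed points, of
minimal range among the proper endomorphisms. -/
structure IsMinimalRetraction (ρ : Set (Fin n → A)) (e : A → A) : Prop where
  comp_mem : ∀ s ∈ ρ, e ∘ s ∈ ρ
  idem : ∀ x, e (e x) = e x
  exists_fixed : ∃ b ∉ ρ, e ∘ b = b
  ncard_le : ∀ h, IsProperEnd ρ h → (Set.range e).ncard ≤ (Set.range h).ncard

lemma IsExtremal.exists_isProperEnd_comp_comp (hρ : IsExtremal ρ) (hh : Homogeneous ρ)
    {f : A → A} (hf : IsProperEnd ρ f) :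
    ∃ h : A → A, (∀ s ∈ ρ, h ∘ s ∈ ρ) ∧ IsProperEnd ρ (f ∘ h ∘ f) := by
  classical
  obtain ⟨a, ha⟩ := hf.exists_notMem
  obtain ⟨G, hG, hGa⟩ := hρ.exists_pres ha a
  have hF : Pres (fun v : Equiv.Perm (Fin n) → A => f (G (f ∘ v))) ρ := fun t ht =>
    hf.comp_mem _ (hG (fun σ => f ∘ t σ) fun σ => hf.comp_mem _ (ht σ))
  have hFa : (fun j => f (G (f ∘ fun σ => a (σ j)))) = f ∘ a :=
    congrArg (f ∘ ·) hGa.symm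
  obtain ⟨i, c, p, hp⟩ := hh.exists_slice hρ.two_le hρ.refl hF (t := fun σ => a ∘ σ)
    (by simpa only [comp_apply, hFa] using ha)
  have hend (s) (hs : s ∈ ρ) : (fun z => G (update (f ∘ c) i z)) ∘ s ∈ ρ :=
    hG.slice_mem hρ.two_le hρ.refl _ i hs
  refine ⟨_, hend, fun s hs => hf.comp_mem _ (hend _ (hf.comp_mem s hs)), p, ?_⟩
  simp only [comp_update] at hp
  exact hp

lemma IsExtremal.exists_isMinimalRetraction [Finite A] (hρ : IsExtremal ρ)
    (hh : Homogeneous ρ) : ∃ e, IsMinimalRetraction ρ e := by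
  obtain ⟨a₀, ha₀⟩ := hρ.exists_notMem
  obtain ⟨f, hf, hfmin⟩ := exists_minimalFor_of_wellFoundedLT
    (IsProperEnd ρ) (fun h => (Set.range h).ncard) ⟨id, fun s hs => hs, a₀, ha₀⟩
  have hmin (g) (hg : IsProperEnd ρ g) : (Set.range f).ncard ≤ (Set.range g).ncard :=
    (le_total _ _).elim id (hfmin hg)
  obtain ⟨h, hend, hfhf⟩ := hρ.exists_isProperEnd_comp_comp hh hf
  have hrange : (f ∘ h) '' Set.range f = Set.range f := by
    rw [← Set.range_comp]
    exact Set.eq_of_subset_of_ncard_le (Set.range_comp_subset_range _ f) (hmin _ hfhf)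
  obtain ⟨m, hmem, hid⟩ := exists_iterate_retract hrange (Set.range_comp_subset_range h f)
  have hiter (k : ℕ) : ∀ s ∈ ρ, (f ∘ h)^[k] ∘ s ∈ ρ := by
    induction k with
    | zero => exact fun _ hs => hs
    | succ _ ih => exact fun s hs => ih _ (hf.comp_mem _ (hend s hs))
  obtain ⟨a, ha⟩ := hf.exists_notMem
  exact ⟨_, hiter m, fun x => hid _ (hmem x),
    ⟨f ∘ a, ha, funext fun j => hid _ ⟨a j, rfl⟩⟩,
    fun g hg => (Set.ncard_le_ncard (Set.range_subset_iff.2 hmem)).trans (hmin g hg)⟩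

/-- The restriction of `ρ` to the fixed points of `e`. -/
def fixedRel (ρ : Set (Fin n → A)) (e : A → A) : Set (Fin n → fixedPoints e) :=
  {s | Subtype.val ∘ s ∈ ρ}

lemma IsMinimalRetraction.bijective_of_isProperEnd [Finite A] {e : A → A}
    (he : IsMinimalRetraction ρ e) {h : fixedPoints e → fixedPoints e}
    (hh : IsProperEnd (fixedRel ρ e) h) : Bijective h := by
  obtain ⟨s, hs⟩ := hh.exists_notMem
  have hend : IsProperEnd ρ (Subtype.val ∘ h ∘ toFixed he.idem) :=
    ⟨fun s hs => hh.comp_mem (toFixed he.idem ∘ s) (he.comp_mem s hs), Subtype.val ∘ s, by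
      simpa [comp_def, toFixed_val he.idem, fixedRel] using hs⟩
  have hrange : Set.range (Subtype.val ∘ h ∘ toFixed he.idem) = Set.range e :=
    Set.eq_of_subset_of_ncard_le (Set.range_subset_iff.2 fun x => ⟨_, (h (toFixed he.idem x)).2⟩)
      (he.ncard_le _ hend)
  refine Finite.surjective_iff_bijective.1 fun y => ?_
  obtain ⟨x, hx⟩ := hrange.superset ⟨y.1, y.2⟩
  exact ⟨toFixed he.idem x, Subtype.ext hx⟩

lemma IsExtremal.isRigid_fixedRel [Finite A] (hρ : IsExtremal ρ) (hh : Homogeneous ρ)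
    {e : A → A} (he : IsMinimalRetraction ρ e) : IsRigid (fixedRel ρ e) where
  three_le := hρ.three_le
  refl x := fun ⟨i, j, hij, hx⟩ => hρ.refl _ ⟨i, j, hij, by simp [hx]⟩
  ne_univ h := by
    obtain ⟨b, hb, heb⟩ := he.exists_fixed
    exact hb (h.superset (Set.mem_univ fun j => (⟨b j, congrFun heb j⟩ : fixedPoints e)))
  homogeneous a ha u := by
    obtain ⟨i, hi⟩ := hh _ ha u
    exact ⟨i, by simpa only [fixedRel, Set.mem_ofPred_eq, comp_update] using hi⟩
  bijective _ := he.bijective_of_isProperEnd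

lemma IsExtremal.exists_injective_fixedPoints [Finite A] (hρ : IsExtremal ρ)
    (hh : Homogeneous ρ) {e : A → A} (he : IsMinimalRetraction ρ e) :
    ∃ ψ : fixedPoints e → Fin n, Injective ψ := by
  obtain ⟨b, hb, heb⟩ := he.exists_fixed
  let b' (j : Fin n) : fixedPoints e := ⟨b j, congrFun heb j⟩
  obtain ⟨G, hG, hGid⟩ := hρ.exists_pres_fun hb (Subtype.val : fixedPoints e → A)
  have hid (x : fixedPoints e) : toFixed he.idem (G fun ψ => b' (ψ x)) = x :=
    (congrArg (toFixed he.idem) (congrFun hGid x)).symm.trans (toFixed_val he.idem x)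
  obtain ⟨ψ, π, hπ⟩ := (hρ.isRigid_fixedRel hh he).essentially_unary
    (G := fun v : (fixedPoints e → Fin n) → fixedPoints e => toFixed he.idem (G fun ψ => v ψ))
    (fun t ht => he.comp_mem _ (hG (fun ψ => Subtype.val ∘ t ψ) ht))
    (t := fun ψ j => b' (ψ (b' j))) (fun h => hb (by simp only [hid] at h; exact h))
  have hψ (x : fixedPoints e) : x = π (b' (ψ x)) :=
    (hid x).symm.trans (hπ fun ψ => b' (ψ x))
  exact ⟨ψ, fun x y hxy => by rw [hψ x, hψ y, hxy]⟩

end Retractions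

section Colorings

variable {A : Type u} {n : ℕ} {ρ : Set (Fin n → A)} {M : Set (Ops A)}

/-- A colouring of the complement of `ρ`: a map onto an `n`-element set that identifies some
entries of each tuple of `ρ`. -/
def IsColoring (ρ : Set (Fin n → A)) (κ : A → Fin n) : Prop :=
  Surjective κ ∧ ∀ s ∈ ρ, ¬ Injective (κ ∘ s)

lemma IsExtremal.exists_isColoring [Finite A] (hρ : IsExtremal ρ) (hh : Homogeneous ρ) :
    ∃ κ, IsColoring ρ κ := by
  obtain ⟨e, he⟩ := hρ.exists_isMinimalRetraction hh
  obtain ⟨ψ, hψ⟩ := hρ.exists_injective_fixedPoints hh he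
  obtain ⟨b, hb, heb⟩ := he.exists_fixed
  have hinj : Injective ((ψ ∘ toFixed he.idem) ∘ b) := hψ.comp fun i j hij =>
    hρ.injective (heb.symm ▸ hb) (congrArg Subtype.val hij)
  refine ⟨ψ ∘ toFixed he.idem, (Finite.surjective_of_injective hinj).of_comp,
    fun s hs hs' => hb ?_⟩
  obtain ⟨φ, hφ⟩ := (Finite.surjective_of_injective hs').hasRightInverse
  convert hρ.comp_mem (he.comp_mem s hs) fun j => φ (ψ (toFixed he.idem (b j))) using 1
  refine heb.symm.trans (funext fun j => ?_)
  exact congrArg Subtype.val (hψ (hφ (ψ (toFixed he.idem (b j))))).symm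

lemma isRigid_not_injective (hn : 3 ≤ n) : IsRigid {x : Fin n → Fin n | ¬ Injective x} where
  three_le := hn
  refl _ := fun ⟨_, _, hij, hx⟩ h => hij (h hx)
  ne_univ h := h.superset (Set.mem_univ id) injective_id
  homogeneous a ha u := by
    simp only [Set.mem_ofPred_eq, not_not] at ha ⊢
    obtain ⟨i, rfl⟩ := Finite.surjective_of_injective ha u
    exact ⟨i, by simpa using ha⟩
  bijective h hh := by
    obtain ⟨s, hs⟩ := hh.exists_notMem
    exact Finite.surjective_iff_bijective.1 (Finite.surjective_of_injective (not_not.1 hs)).of_comp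

lemma IsColoring.essentially_unary {κ : A → Fin n} (hκ : IsColoring ρ κ) (hρ : IsExtremal ρ)
    {ι : Type*} [Finite ι] {G : (ι → A) → A} (hG : Pres G ρ) (g : ι → Fin n → A)
    {t : ι → Fin n → Fin n} (ht : Injective fun j => κ (G fun i => g i (t i j))) :
    ∃ (i : ι) (π : Equiv.Perm (Fin n)), ∀ v : ι → Fin n,
      κ (G fun i => g i (v i)) = π (v i) :=
  (isRigid_not_injective hρ.three_le).essentially_unary
    (G := fun v : ι → Fin n => κ (G fun i => g i (v i)))
    (fun s hs => hκ.2 _ (hG (fun i => g i ∘ s i) fun i =>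
      hρ.mem_of_not_injective fun h => hs i h.of_comp)) (fun h => h ht)

/-- The tuples that every colouring of `ρ` identifies somewhere. -/
def coloringRel (ρ : Set (Fin n → A)) : Set (Fin n → A) :=
  {x | ∀ κ, IsColoring ρ κ → ¬ Injective (κ ∘ x)}

lemma IsExtremal.inv_coloringRel (hρ : IsExtremal ρ) : Inv (Pol ρ) (coloringRel ρ) := by
  classical
  intro f hf t ht κ hκ hinj
  obtain ⟨i, π, hπ⟩ := hκ.essentially_unary hρ (G := f.2) hf t (t := fun _ => id) hinj
  have hn : 0 < n := hρ.two_le.trans' (by simp)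
  let c (l : Fin (f.1 + 1)) : A := t l ⟨0, hn⟩
  have hval (j : Fin n) : κ (f.2 (update c i (t i j))) = π j := by
    have := hπ (update (fun _ => ⟨0, hn⟩) i j)
    rw [update_self] at this
    rw [← this]
    exact congrArg (κ ∘ f.2) (funext fun l => apply_update t (fun _ => ⟨0, hn⟩) i j l).symm
  refine ht i (fun z => κ (f.2 (update c i z)))
    ⟨fun y => ⟨t i (π.symm y), by simp [hval]⟩, fun s hs => hκ.2 _ ?_⟩ ?_
  · exact Pres.slice_mem (G := f.2) hρ.two_le hρ.refl hf c i hs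
  · exact (funext hval ▸ π.injective :)

lemma IsExtremal.eq_coloringRel [Finite A] (hρ : IsExtremal ρ) (hh : Homogeneous ρ) :
    ρ = coloringRel ρ := by
  obtain h | h := hρ.eq_or_eq_univ (coloringRel ρ) (fun x hx κ hκ => hκ.2 x hx)
    hρ.inv_coloringRel fun σ x hx κ hκ hinj =>
      hx κ hκ ((σ.injective_comp _).1 (by simpa [comp_assoc] using hinj))
  · exact h.symm
  · obtain ⟨κ, hκ⟩ := hρ.exists_isColoring hh
    refine absurd ?_ (h.superset (Set.mem_univ (surjInv hκ.1)) κ hκ)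
    rw [(rightInverse_surjInv hκ.1).comp_eq_id]
    exact injective_id

lemma IsExtremal.exists_common_class [Finite A] (hρ : IsExtremal ρ) {ι : Type*}
    (κ : ι → A → Fin n) (hκ : ∀ i, IsColoring ρ (κ i))
    (hne : ∀ i j, i ≠ j → ∃ x y, ¬ (κ i x = κ i y ↔ κ j x = κ j y)) (a : ι → A) :
    ∃ u, ∀ i, κ i (a i) = κ i u := by
  have : Nonempty (Fin n) := ⟨⟨0, hρ.two_le.trans' (by simp)⟩⟩
  obtain ⟨b, hb⟩ := hρ.exists_notMem
  obtain ⟨G, hG, hGid⟩ := hρ.exists_pres_fun hb (id : A → A)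
  have hGid (x : A) : G (fun χ => b (χ x)) = x := (congrFun hGid x).symm
  have (i : ι) : ∃ (ψ : A → Fin n) (π : Equiv.Perm (Fin n)), ∀ v : (A → Fin n) → Fin n,
      κ i (G fun χ => b (v χ)) = π (v ψ) := by
    refine (hκ i).essentially_unary hρ hG (fun _ => b)
      (t := fun χ j => χ (surjInv (hκ i).1 j)) ?_
    simp only [hGid, surjInv_eq]
    exact injective_id
  choose ψ π hπ using this
  have hκψ (i : ι) (x : A) : κ i x = π i (ψ i x) := by
    simpa only [hGid] using hπ i fun χ => χ x
  have hψ : Injective ψ := fun i j hij => by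
    by_contra h
    obtain ⟨x, y, hxy⟩ := hne i j h
    simp [hκψ, hij] at hxy
  refine ⟨G fun χ => b (extend ψ (fun i => ψ i (a i)) (fun _ => Classical.arbitrary _) χ),
    fun i => ?_⟩
  rw [hπ, hψ.extend_apply, hκψ]

lemma ncard_classes_of_surjective {κ : A → Fin n} (hκ : Surjective κ) :
    {B : Set A | ∃ a, B = {b | κ a = κ b}}.ncard = n := by
  have hrange : {B : Set A | ∃ a, B = {b | κ a = κ b}}
      = Set.range fun j : Fin n => {b | j = κ b} := by
    ext B
    simp [hκ.exists, eq_comm]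
  have hinj : Injective fun j : Fin n => {b | j = κ b} := fun j j' h => by
    obtain ⟨a, rfl⟩ := hκ j
    exact (h.subset (rfl : κ a = κ a)).symm
  rw [hrange, ← Set.image_univ, Set.ncard_image_of_injective _ hinj, Set.ncard_univ,
    Nat.card_fin]

lemma IsExtremal.le_card [Fintype A] (hρ : IsExtremal ρ) : n ≤ Fintype.card A := by
  obtain ⟨b, hb⟩ := hρ.exists_notMem
  simpa using Fintype.card_le_of_injective b (hρ.injective hb)

lemma IsExtremal.lt_card_of_central [Fintype A] (hρ : IsExtremal ρ) {c : A}
    (hc : ∀ s : Fin n → A, c ∈ Set.range s → s ∈ ρ) : n < Fintype.card A := by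
  obtain ⟨b, hb⟩ := hρ.exists_notMem
  refine hρ.le_card.lt_of_ne fun h => hb (hc b ?_)
  exact ((Fintype.bijective_iff_injective_and_card b).2 ⟨hρ.injective hb, by simpa using h⟩).2 c

lemma IsExtremal.exists_enum_colorings [Finite A] (hρ : IsExtremal ρ) (hh : Homogeneous ρ) :
    ∃ (r : ℕ) (κ : Fin (r + 1) → A → Fin n), (∀ i, IsColoring ρ (κ i)) ∧
      (∀ i j, i ≠ j → ∃ x y, ¬ (κ i x = κ i y ↔ κ j x = κ j y)) ∧
      ∀ κ', IsColoring ρ κ' → ∃ i, ∀ x y, κ i x = κ i y ↔ κ' x = κ' y := by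
  let E : Set (A → A → Prop) := {s | ∃ κ, IsColoring ρ κ ∧ ∀ x y, s x y ↔ κ x = κ y}
  obtain ⟨κ₀, hκ₀⟩ := hρ.exists_isColoring hh
  have : Nonempty E := ⟨⟨_, κ₀, hκ₀, fun _ _ => .rfl⟩⟩
  obtain ⟨r, ⟨e⟩⟩ := exists_equiv_fin_succ E
  choose κ hκ hE using fun i => (e.symm i).2
  refine ⟨r, κ, hκ, fun i j hij => ?_, fun κ' hκ' => ?_⟩
  · by_contra! h
    refine hij (e.symm.injective (Subtype.ext (funext₂ fun x y => propext ?_)))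
    rw [hE, hE, h]
  · refine ⟨e ⟨fun x y => κ' x = κ' y, κ', hκ', fun _ _ => .rfl⟩, fun x y => ?_⟩
    rw [← hE, Equiv.symm_apply_apply]

lemma IsExtremal.eq_setOf_forall_exists [Finite A] (hρ : IsExtremal ρ) (hh : Homogeneous ρ)
    {ι : Type*} {κ : ι → A → Fin n} (hκ : ∀ i, IsColoring ρ (κ i))
    (hall : ∀ κ', IsColoring ρ κ' → ∃ i, ∀ x y, κ i x = κ i y ↔ κ' x = κ' y) :
    ρ = {x | ∀ i, ∃ j k, j ≠ k ∧ κ i (x j) = κ i (x k)} := by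
  have hiff (i : ι) (x : Fin n → A) :
      ¬ Injective (κ i ∘ x) ↔ ∃ j k, j ≠ k ∧ κ i (x j) = κ i (x k) := by
    simp only [not_injective_iff, comp_apply, and_comm]
  rw [hρ.eq_coloringRel hh]
  ext x
  refine ⟨fun h i => (hiff i x).1 (h _ (hκ i)), fun h κ' hκ' hinj => ?_⟩
  obtain ⟨i, hi⟩ := hall κ' hκ'
  obtain ⟨j, k, hjk, hx⟩ := h i
  exact hjk (hinj ((hi _ _).1 hx))

lemma IsExtremal.isRosenbergRel [Fintype A] [Nonempty A] {ρ : Set (Fin (n + 1) → A)}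
    (hρ : IsExtremal ρ) : IsRosenbergRel ⟨n, ρ⟩ := by
  obtain ⟨c, hc⟩ | hh := hρ.central_or_homogeneous
  · exact .inr <| .inr <| .inr <| .inr <| .inl ⟨hρ.lt_card_of_central hc, hρ.refl, hρ.symm,
      hρ.ne_univ, c, fun x hx => hc x ⟨0, hx⟩⟩
  · obtain ⟨r, κ, hκ, hne, hall⟩ := hρ.exists_enum_colorings hh
    exact .inr <| .inr <| .inr <| .inr <| .inr ⟨r, fun i x y => κ i x = κ i y, hρ.three_le,
      hρ.le_card, fun i => ⟨fun _ => rfl, Eq.symm, Eq.trans⟩,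
      fun i => ncard_classes_of_surjective (hκ i).1,
      fun a => (hρ.exists_common_class κ hκ hne a).imp fun _ => Set.mem_iInter.2,
      hρ.eq_setOf_forall_exists hh hκ hall⟩

lemma AvoidsRosenberg.reflexiveFull [Fintype A] [Nonempty A] (h : AvoidsRosenberg M) :
    ReflexiveFull M 2 := by
  by_contra hfull
  obtain ⟨n, ρ, hρ, hM⟩ := exists_isExtremal hfull
  obtain ⟨n, rfl⟩ := Nat.exists_eq_succ_of_ne_zero (Nat.ne_zero_of_lt hρ.two_le)
  exact h ⟨n, ρ⟩ hρ.isRosenbergRel hM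

end Colorings

/-! ### Minimal idempotents and binary slices -/

section MinimalIdempotents

variable {A : Type u} {M : Set (Ops A)} {e : A → A}

lemma BinaryTrivial.exists_unary (hb : BinaryTrivial M) (hM : IsClone M) {a b : A} (hab : a ≠ b)
    (c d : A) : ∃ f, Mem₁ M f ∧ f a = c ∧ f b = d := by
  refine (hb (fun c d => ∃ f, Mem₁ M f ∧ f a = c ∧ f b = d) ?_).full_of_ne
    ⟨id, Mem₁.id hM, rfl, rfl⟩ hab c d
  intro f hf x y hxy
  choose g hg hgx hgy using hxy
  exact ⟨fun z => f.2 fun i => g i z, Mem.comp hM ((mem_iff hM).2 hf) hg, by simp [hgx],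
    by simp [hgy]⟩

lemma BinaryTrivial.const [Finite A] (hb : BinaryTrivial M) (hM : IsClone M) {κ : Type*}
    (c : A) : Mem M fun _ : κ → A => c := by
  classical
  cases nonempty_fintype A
  have hconst (S : Finset A) : ∃ f, Mem₁ M f ∧ ∀ x ∈ S, f x = c := by
    induction S using Finset.induction_on with
    | empty => exact ⟨id, Mem₁.id hM, by simp⟩
    | insert a S _ ih =>
      obtain ⟨f, hf, hfS⟩ := ih
      by_cases ha : f a = c
      · exact ⟨f, hf, by simpa [ha] using hfS⟩
      · obtain ⟨g, hg, hga, hgc⟩ := hb.exists_unary hM ha c c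
        exact ⟨g ∘ f, hg.comp₁ hM hf, by simpa [hga] using fun x hx => by rw [hfS x hx, hgc]⟩
  obtain ⟨f, hf, hfc⟩ := hconst Finset.univ
  intro m _
  simpa [hfc] using hf m fun _ => 0

lemma Mem₂.fix_right [Finite A] (hM : IsClone M) (hb : BinaryTrivial M) {g : A → A → A}
    (hg : Mem₂ M g) (c : A) : Mem₁ M fun x => g x c :=
  Mem₂.comp hM hg (Mem₁.id hM) (hb.const hM c)

lemma Mem₂.fix_left [Finite A] (hM : IsClone M) (hb : BinaryTrivial M) {g : A → A → A}
    (hg : Mem₂ M g) (c : A) : Mem₁ M (g c) :=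
  (hg.swap hM).fix_right hM hb c

lemma Mem₂.iterate (hM : IsClone M) {g : A → A → A} (hg : Mem₂ M g) (m : ℕ) :
    Mem₂ M fun x y => (g · y)^[m] x := by
  induction m with
  | zero => exact Mem.proj hM 0
  | succ m ih =>
    simp only [iterate_succ_apply']
    exact Mem₂.comp hM hg ih (Mem.proj hM 1)

/-- The idempotent `e` has minimal range among the non-constant unary members of `M`. -/
structure IsMinimalIdempotent (M : Set (Ops A)) (e : A → A) : Prop where
  mem : Mem₁ M e
  idem : ∀ x, e (e x) = e x
  nonconst : ∃ x y, e x ≠ e y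
  le : ∀ h, Mem₁ M h → (∃ x y, h x ≠ h y) → (Set.range e).ncard ≤ (Set.range h).ncard

lemma BinaryTrivial.exists_isMinimalIdempotent [Finite A] [Nontrivial A] (hb : BinaryTrivial M)
    (hM : IsClone M) : ∃ e, IsMinimalIdempotent M e := by
  obtain ⟨f, ⟨hf, x, y, hxy⟩, hmin⟩ := exists_minimalFor_of_wellFoundedLT
    (fun h : A → A => Mem₁ M h ∧ ∃ x y, h x ≠ h y)
    (fun h => (Set.range h).ncard) ⟨id, Mem₁.id hM, exists_pair_ne A⟩
  have hle (h : A → A) (h₁ : Mem₁ M h) (h₂ : ∃ x y, h x ≠ h y) :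
      (Set.range f).ncard ≤ (Set.range h).ncard :=
    (le_total _ _).elim id fun hle => hmin ⟨h₁, h₂⟩ hle
  obtain ⟨g, hg, hgx, hgy⟩ := hb.exists_unary hM hxy x y
  have hrange : (f ∘ g) '' Set.range f = Set.range f := by
    rw [← Set.range_comp]
    exact Set.eq_of_subset_of_ncard_le (Set.range_comp_subset_range _ f)
      (hle _ ((hf.comp₁ hM hg).comp₁ hM hf) ⟨x, y, by simpa [hgx, hgy] using hxy⟩)
  obtain ⟨m, hmem, hid⟩ := exists_iterate_retract hrange (Set.range_comp_subset_range g f)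
  refine ⟨_, (hf.comp₁ hM hg).iterate hM m, fun x => hid _ (hmem x), ⟨f x, f y, ?_⟩,
    fun h h₁ h₂ => (Set.ncard_le_ncard (Set.range_subset_iff.2 hmem)).trans (hle h h₁ h₂)⟩
  rwa [hid _ ⟨x, rfl⟩, hid _ ⟨y, rfl⟩]

lemma IsMinimalIdempotent.range_eq_fixedPoints [Finite A] (he : IsMinimalIdempotent M e)
    {h : A → A} (hh : Mem₁ M h) (heh : ∀ x, e (h x) = h x) (hne : ∃ x y, h x ≠ h y) :
    Set.range h = fixedPoints e := by
  have hrange : Set.range h = Set.range e := Set.eq_of_subset_of_ncard_le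
    (Set.range_subset_iff.2 fun x => ⟨_, heh x⟩) (he.le h hh hne)
  refine hrange.trans (Set.Subset.antisymm (Set.range_subset_iff.2 he.idem) fun x hx => ⟨x, hx⟩)

lemma IsMinimalIdempotent.image_fixedPoints [Finite A] (hM : IsClone M)
    (he : IsMinimalIdempotent M e) {h : A → A} (hh : Mem₁ M h) (heh : ∀ x, e (h x) = h x)
    (hne : ∃ x y, h (e x) ≠ h (e y)) : h '' fixedPoints e = fixedPoints e := by
  rw [← he.range_eq_fixedPoints he.mem he.idem he.nonconst, ← Set.range_comp,
    he.range_eq_fixedPoints (hh.comp₁ hM he.mem) (fun _ => heh _) hne,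
    he.range_eq_fixedPoints he.mem he.idem he.nonconst]

lemma IsMinimalIdempotent.injOn_fixedPoints [Finite A] (hM : IsClone M)
    (he : IsMinimalIdempotent M e) {h : A → A} (hh : Mem₁ M h) (heh : ∀ x, e (h x) = h x)
    (hne : ∃ x y, h (e x) ≠ h (e y)) : Set.InjOn h (fixedPoints e) :=
  Set.injOn_of_ncard_image_eq (congrArg _ (he.image_fixedPoints hM hh heh hne))

lemma IsMinimalIdempotent.eq_of_forall_mem (he : IsMinimalIdempotent M e) (hM : IsClone M)
    (hb : BinaryTrivial M) {x y : A} (hxy : ∀ f, Mem₁ M f → e (f x) = e (f y)) : x = y := by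
  by_contra hne
  obtain ⟨a, b, hab⟩ := he.nonconst
  obtain ⟨f, hf, rfl, rfl⟩ := hb.exists_unary hM hne a b
  exact hab (hxy f hf)

end MinimalIdempotents

section AndNot

variable {A : Type u} {M : Set (Ops A)} {e : A → A} {P : A → A → A} {k l : A}

lemma forall_of_separates {X : Type*} [Finite X] {p : Set X → Prop} (huniv : p Set.univ)
    (hcompl : ∀ S, p S → p Sᶜ) (hinter : ∀ S, p S → ∀ T, p T → p (S ∩ T))
    (hsep : Pairwise fun x y => ∃ S, p S ∧ x ∈ S ∧ y ∉ S) (S : Set X) : p S := by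
  classical
  cases nonempty_fintype X
  have hInter (f : X → Set X) (hf : ∀ x, p (f x)) : p (⋂ x, f x) := by
    rw [← Set.iInf_eq_iInter, ← Finset.inf_univ_eq_iInf]
    exact Finset.inf_induction huniv hinter fun x _ => hf x
  have hsing (x : X) : p {x} := by
    have (y : X) : ∃ S, p S ∧ x ∈ S ∧ (y ∈ S → y = x) := by
      by_cases h : y = x
      · exact ⟨Set.univ, huniv, trivial, fun _ => h⟩
      · obtain ⟨S, hS, hx, hy⟩ := hsep (Ne.symm h)
        exact ⟨S, hS, hx, fun h => absurd h hy⟩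
    choose f hf hfx hfy using this
    convert hInter f hf
    exact Set.Subset.antisymm (by simpa using hfx)
      fun y hy => hfy y (Set.mem_iInter.1 hy y)
  convert hInter (fun y => if y ∈ S then Set.univ else {y}ᶜ) fun y => ?_ using 1
  · ext x
    simp only [Set.mem_iInter]
    refine ⟨fun hx y => ?_, fun hx => ?_⟩
    · split_ifs with hy
      exacts [trivial, fun h => hy (h ▸ hx)]
    · by_contra h
      simpa [h] using hx x
  · split_ifs
    exacts [huniv, hcompl _ (hsing y)]

/-- The binary operation `P` of `M` acts on `{k, l}` as the Boolean operation `x ∧ ¬ y`, with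
`k` as false and `l` as true, and takes its values among the fixed points of `e`. -/
structure IsAndNot (M : Set (Ops A)) (e : A → A) (P : A → A → A) (k l : A) : Prop where
  mem : Mem₂ M P
  apply : ∀ x y, e (P x y) = P x y
  ne : k ≠ l
  right : ∀ x, P x l = k
  false_false : P k k = k
  true_false : P l k = l

lemma IsAndNot.fixed_false (hP : IsAndNot M e P k l) : e k = k := by
  simpa only [hP.false_false] using hP.apply k k

lemma IsAndNot.fixed_true (hP : IsAndNot M e P k l) : e l = l := by
  simpa only [hP.true_false] using hP.apply l k

open Classical in
lemma IsAndNot.mem_ite [Finite A] (hP : IsAndNot M e P k l) (hM : IsClone M)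
    (hb : BinaryTrivial M) (he : Mem₁ M e) (hN : ∀ x, e x = k ∨ e x = l) {ι : Type*} [Finite ι]
    (S : Set (ι → A)) : Mem M fun x => if x ∈ S then l else k := by
  have hcompl (S : Set (ι → A)) (hS : Mem M fun x => if x ∈ S then l else k) :
      Mem M fun x => if x ∈ Sᶜ then l else k := by
    convert hP.mem.comp hM (hb.const hM l) hS using 2 with x
    by_cases hx : x ∈ S <;> simp [hx, hP.true_false, hP.right]
  refine forall_of_separates (p := fun S => Mem M fun x => if x ∈ S then l else k)
    (by simpa using hb.const hM l) (fun S hS => by convert hcompl S hS) (fun S hS T hT => ?_)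
    (fun x y hxy => ?_) S
  · convert hP.mem.comp hM hS (hcompl T hT) using 2 with x
    by_cases hx : x ∈ S <;> by_cases hy : x ∈ T <;>
      simp [hx, hy, hP.true_false, hP.right, hP.false_false]
  · obtain ⟨i, hi⟩ := Function.ne_iff.1 hxy
    obtain ⟨f, hf, hfx, hfy⟩ := hb.exists_unary hM hi l k
    refine ⟨{z | e (f (z i)) = l}, ?_, by simp [hfx, hP.fixed_true],
      by simp [hfy, hP.fixed_false, hP.ne]⟩
    convert he.comp hM (hf.comp hM (Mem.proj hM i)) using 2 with z
    rcases hN (f (z i)) with h | h <;> simp [h, hP.ne]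

lemma ReflexiveFull.eq_univ_of_mem_ite [Finite A] (hT : ReflexiveFull M 2) (hM : IsClone M)
    (hb : BinaryTrivial M) (hkl : k ≠ l)
    (h : ∀ n (S : Set (Fin (n + 1) → A)) [DecidablePred (· ∈ S)],
      Mem M fun x => if x ∈ S then l else k) : M = Set.univ := by
  have : Nonempty A := ⟨k⟩
  refine Set.eq_univ_of_forall fun ⟨n, F⟩ => (mem_iff hM).1 <|
    hT.mem_of_factor (Y := {F : (Fin (n + 1) → A) → A | Mem M F})
      (fun f hf t ht => Mem.comp hM ((mem_iff hM).2 hf) ht) (fun c χ => ?_) F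
  obtain ⟨f, hf, hfk, hfl⟩ := hb.exists_unary hM hkl (c 0) (c 1)
  rw [Set.mem_ofPred_eq]
  convert hf.comp hM (h n {x | χ x = 1}) using 2 with x
  rcases Fin.exists_fin_two.1 ⟨χ x, rfl⟩ with h | h <;> simp [h, hfk, hfl]

lemma IsAndNot.exists_columns [Finite A] (hP : IsAndNot M e P k l) (hM : IsClone M)
    (hb : BinaryTrivial M) (he : IsMinimalIdempotent M e) :
    ∃ H, Mem₂ M H ∧ (∀ x y, e (H x y) = H x y) ∧ (∀ x, H x l = k) ∧
      (∀ x ∈ fixedPoints e, H x k = x) ∧ ∀ v, (∀ x ∈ fixedPoints e, H x v = x) ∨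
        ∀ x ∈ fixedPoints e, ∀ y ∈ fixedPoints e, H x v = H y v := by
  obtain ⟨m, hm⟩ :=
    Nat.exists_eq_succ_of_ne_zero (Nat.card (fixedPoints e)).factorial_ne_zero
  have hid (v : A) (hv : ∃ x y, P (e x) v ≠ P (e y) v) (x : A) (hx : x ∈ fixedPoints e) :
      (P · v)^[m + 1] x = x := by
    rw [← Nat.succ_eq_add_one, ← hm]
    exact iterate_factorial_card_eq
      (he.image_fixedPoints hM (hP.mem.fix_right hM hb v) (fun x => hP.apply x v) hv) hx
  refine ⟨fun x v => (P · v)^[m + 1] x, hP.mem.iterate hM _, fun x y => ?_, fun x => ?_,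
    hid k ⟨k, l, ?_⟩, fun v => or_iff_not_imp_left.2 fun hv x hx y hy => ?_⟩
  · simp only [iterate_succ_apply', hP.apply]
  · simp only [iterate_succ_apply', hP.right]
  · simp only [hP.fixed_false, hP.fixed_true, hP.false_false, hP.true_false, ne_eq, hP.ne,
      not_false_eq_true]
  · have hcol : ∀ x y, P (e x) v = P (e y) v := by
      by_contra! h
      exact hv (hid v h)
    have hxy : P x v = P y v := by simpa only [hx.eq, hy.eq] using hcol x y
    simp only [iterate_succ_apply, hxy]

lemma IsAndNot.eq_or_eq [Finite A] (hP : IsAndNot M e P k l) (hM : IsClone M)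
    (hb : BinaryTrivial M) (he : IsMinimalIdempotent M e) {u : A} (hu : u ∈ fixedPoints e) :
    u = k ∨ u = l := by
  by_contra! h
  obtain ⟨H, hH, heH, hHl, hHk, hcol⟩ := hP.exists_columns hM hb he
  have hrow (x : A) (hx : x ∈ fixedPoints e) (hxk : x ≠ k) : ∃ v w, H x (e v) ≠ H x (e w) :=
    ⟨k, l, by rwa [hP.fixed_false, hP.fixed_true, hHk x hx, hHl]⟩
  obtain ⟨v, hvN, hv⟩ := (he.image_fixedPoints hM (hH.fix_left hM hb l) (heH l)
    (hrow l hP.fixed_true hP.ne.symm)).superset hu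
  have hvk : v ≠ k := by
    rintro rfl
    exact h.2 (hv.symm.trans (hHk l hP.fixed_true))
  refine hvk (he.injOn_fixedPoints hM (hH.fix_left hM hb u) (heH u) (hrow u hu h.1) hvN
    hP.fixed_false ?_)
  rw [hHk u hu]
  exact (hcol v).elim (fun hid => hid u hu) fun hconst =>
    (hconst u hu l hP.fixed_true).trans hv

lemma IsAndNot.eq_univ [Finite A] (hP : IsAndNot M e P k l) (hM : IsClone M)
    (hb : BinaryTrivial M) (hT : ReflexiveFull M 2) (he : IsMinimalIdempotent M e) :
    M = Set.univ :=
  hT.eq_univ_of_mem_ite hM hb hP.ne fun _ S _ => by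
    convert hP.mem_ite hM hb he.mem (fun x => hP.eq_or_eq hM hb he (he.idem x)) S

/-- If `e (g x c)` does not depend on `x` for some `c`, then it does not for any `c`. -/
def SliceProperty (M : Set (Ops A)) (e : A → A) : Prop :=
  ∀ g : A → A → A, Mem₂ M g → ∀ c, (∀ x x', e (g x c) = e (g x' c)) →
    ∀ d x x', e (g x d) = e (g x' d)

lemma IsMinimalIdempotent.exists_isAndNot [Finite A] (he : IsMinimalIdempotent M e)
    (hM : IsClone M) (hb : BinaryTrivial M) (h : ¬ SliceProperty M e) :
    ∃ P k l, IsAndNot M e P k l := by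
  simp only [SliceProperty, not_forall] at h
  obtain ⟨g, hg, c, hc, d, hd⟩ := h
  have heg : Mem₂ M fun x y => e (g x y) := Mem₁.comp hM he.mem hg
  have hrange : (Set.range fun x => e (g x d)) = fixedPoints e :=
    he.range_eq_fixedPoints (heg.fix_right hM hb d) (fun _ => he.idem _)
      (by simpa only [exists_prop, ne_eq, not_forall] using hd)
  obtain ⟨l, hl, hkl⟩ : ∃ l ∈ fixedPoints e, e (g c c) ≠ l := by
    obtain ⟨x, y, hxy⟩ := he.nonconst
    by_contra! h
    exact hxy ((h _ (he.idem x)).symm.trans (h _ (he.idem y)))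
  obtain ⟨x₁, hx₁⟩ := hrange.superset (he.idem (g c c))
  obtain ⟨x₂, rfl⟩ := hrange.superset hl
  obtain ⟨f₁, hf₁, hf₁k, hf₁l⟩ := hb.exists_unary hM hkl x₁ x₂
  obtain ⟨f₂, hf₂, hf₂k, hf₂l⟩ := hb.exists_unary hM hkl d c
  exact ⟨fun x y => e (g (f₁ x) (f₂ y)), _, _, heg.comp hM (hf₁.comp hM (Mem.proj hM 0))
    (hf₂.comp hM (Mem.proj hM 1)), fun _ _ => he.idem _, hkl, fun x => by rw [hf₂l]; exact hc _ _,
    by rwa [hf₁k, hf₂k], by rw [hf₁l, hf₂k]⟩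

end AndNot

/-! ### Affine operations -/

section SliceProperty

variable {A : Type u} {M : Set (Ops A)} {e : A → A} {ι κ : Type*} [DecidableEq ι]

lemma Mem.update_apply {u : (κ → A) → ι → A} {a : (κ → A) → A} (hu : ∀ i, Mem M fun x => u x i)
    (ha : Mem M a) (j i : ι) : Mem M fun x => update (u x) j (a x) i := by
  obtain rfl | h := eq_or_ne i j
  · simpa only [update_self] using ha
  · simpa only [update_of_ne h] using hu i

lemma Mem.slice [Finite A] [Finite ι] (hM : IsClone M) (hb : BinaryTrivial M)
    {G : (ι → A) → A} (hG : Mem M G) (d : ι → A) (i j : ι) :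
    Mem₂ M fun x y => G (update (update d j y) i x) := by
  have : Nonempty ι := ⟨i⟩
  exact Mem.comp hM hG fun i' => Mem.update_apply
    (Mem.update_apply (fun i' => hb.const hM (d i')) (Mem.proj hM 1) j) (Mem.proj hM 0) i i'

lemma update_induction [Finite ι] {P : (ι → A) → Prop} {v v' : ι → A} (hv : P v)
    (hstep : ∀ w i, w i = v i → P w → P (update w i (v' i))) : P v' := by
  cases nonempty_fintype ι
  have hP (T : Finset ι) : P (T.piecewise v' v) := by
    induction T using Finset.induction_on with
    | empty => simpa using hv
    | insert i T hi ih =>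
      rw [Finset.piecewise_insert]
      exact hstep _ i (by simp [hi]) ih
  simpa using hP Finset.univ

lemma SliceProperty.inessential [Finite A] [Finite ι] (hS : SliceProperty M e) (hM : IsClone M)
    (hb : BinaryTrivial M) {G : (ι → A) → A} (hG : Mem M G) {i : ι} {c : ι → A}
    (hc : ∀ x x', e (G (update c i x)) = e (G (update c i x'))) (c' : ι → A) (x x' : A) :
    e (G (update c' i x)) = e (G (update c' i x')) := by
  refine update_induction (P := fun w => ∀ x x', e (G (update w i x)) = e (G (update w i x')))
    (v' := c') hc (fun w j _ hw => ?_) x x'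
  obtain rfl | _ := eq_or_ne j i
  · simpa using hw
  · exact hS _ (hG.slice hM hb w i j) (w j) (by simpa using hw) (c' j)

lemma SliceProperty.apply_eq [Finite A] [Finite ι] (hS : SliceProperty M e) (hM : IsClone M)
    (hb : BinaryTrivial M) {G : (ι → A) → A} (hG : Mem M G) {v v' : ι → A}
    (h : ∀ i, v i ≠ v' i → ∃ c, ∀ x x', e (G (update c i x)) = e (G (update c i x'))) :
    e (G v') = e (G v) := by
  refine update_induction (P := fun w => e (G w) = e (G v)) rfl fun w i hw hwv => ?_
  rw [← hwv]
  by_cases hv : v i = v' i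
  · rw [← hv, ← hw, update_eq_self]
  · obtain ⟨c, hc⟩ := h i hv
    conv_rhs => rw [← update_eq_self i w]
    exact hS.inessential hM hb hG hc w _ _

lemma SliceProperty.nonconst (hS : SliceProperty M e) {g : A → A → A} (hg : Mem₂ M g) {y : A}
    (h : ∃ x x', e (g x y) ≠ e (g x' y)) (y' : A) : ∃ x x', e (g x y') ≠ e (g x' y') := by
  by_contra! hcon
  obtain ⟨x, x', hx⟩ := h
  exact hx (hS g hg y' hcon y x x')

end SliceProperty

section EssentiallyUnary

variable {A : Type u} {M : Set (Ops A)} {e : A → A}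

/-- The operation `m` is a Maltsev operation that commutes with itself. -/
structure IsMedialMaltsev {X : Type*} (m : X → X → X → X) : Prop where
  right : ∀ x y, m x y y = x
  left : ∀ x y, m x x y = y
  medial : ∀ a b c a' b' c' a'' b'' c'', m (m a b c) (m a' b' c') (m a'' b'' c'') =
    m (m a a' a'') (m b b' b'') (m c c' c'')

/-- A medial Maltsev operation on the fixed points of the idempotent `e` that commutes with
every operation of `M` followed by `e`. -/
structure IsAffineOn (M : Set (Ops A)) (he : ∀ x, e (e x) = e x)
    (p : fixedPoints e → fixedPoints e → fixedPoints e → fixedPoints e) : Prop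
    extends IsMedialMaltsev p where
  comm : ∀ f ∈ M, ∀ x y z : Fin (f.1 + 1) → fixedPoints e,
    toFixed he (f.2 fun i => p (x i) (y i) (z i)) =
      p (toFixed he (f.2 fun i => x i)) (toFixed he (f.2 fun i => y i))
        (toFixed he (f.2 fun i => z i))

lemma IsAffineOn.comm_of_mem {he : ∀ x, e (e x) = e x}
    {p : fixedPoints e → fixedPoints e → fixedPoints e → fixedPoints e} (hp : IsAffineOn M he p)
    {ι : Type*} [Finite ι] [Nonempty ι] {G : (ι → A) → A} (hG : Mem M G)
    (x y z : ι → fixedPoints e) : toFixed he (G fun i => p (x i) (y i) (z i)) =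
      p (toFixed he (G fun i => x i)) (toFixed he (G fun i => y i))
        (toFixed he (G fun i => z i)) := by
  obtain ⟨n, ⟨eq⟩⟩ := exists_equiv_fin_succ ι
  simpa using hp.comm _ (hG n eq) (x ∘ eq.symm) (y ∘ eq.symm) (z ∘ eq.symm)

/-- Every operation of `M` followed by `e` depends on at most one variable. -/
def EssentiallyUnaryInto (M : Set (Ops A)) (e : A → A) : Prop :=
  ∀ f ∈ M, ∃ i, ∀ x y, x i = y i → e (f.2 x) = e (f.2 y)

lemma EssentiallyUnaryInto.card_le_two [Finite A] (h : EssentiallyUnaryInto M e) (hM : IsClone M)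
    (hT : ReflexiveFull M 2) : Nat.card (fixedPoints e) ≤ 2 := by
  by_contra! hk
  let eq := Finite.equivFin (fixedPoints e)
  have hfull := hT.eq_univ hk
    (σ := {x | ∀ f, Mem₁ M f → ¬ Injective fun i => e (f (x i))})
    (fun g hg t ht f hf hinj => ?_) (fun x ⟨i, j, hij, hx⟩ f _ hinj => hij (hinj (by simp [hx])))
  · refine Set.eq_univ_iff_forall.1 hfull (fun i => eq.symm i) id (Mem₁.id hM) fun i j hij => ?_
    exact eq.symm.injective (Subtype.ext (((eq.symm i).2.symm.trans hij).trans (eq.symm j).2))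
  · have hfg := Mem₁.comp hM hf ((mem_iff hM).2 hg)
    obtain ⟨i, hi⟩ := h _ ((mem_iff hM).1 hfg)
    have hdiag (x) : e (f (g.2 x)) = e (f (g.2 fun _ => x i)) := hi x _ rfl
    refine ht i (fun a => f (g.2 fun _ => a)) (Mem.comp hM hfg fun _ => Mem₁.id hM) ?_
    simpa only [hdiag] using hinj

lemma EssentiallyUnaryInto.exists_isAffineOn [Finite A] (h : EssentiallyUnaryInto M e)
    (hM : IsClone M) (hT : ReflexiveFull M 2) (he : IsMinimalIdempotent M e) :
    ∃ p, IsAffineOn M he.idem p := by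
  have : Nontrivial (fixedPoints e) := by
    obtain ⟨x, y, hxy⟩ := he.nonconst
    exact ⟨toFixed he.idem x, toFixed he.idem y, fun h => hxy (congrArg Subtype.val h)⟩
  obtain ⟨φ⟩ : Nonempty (fixedPoints e ≃ ZMod 2) := Finite.card_eq.1 <|
    (Nat.card_zmod 2).symm ▸ (h.card_le_two hM hT).antisymm Finite.one_lt_card
  refine ⟨fun x y z => φ.symm (φ x - φ y + φ z), ⟨by simp, by simp, fun _ _ _ _ _ _ _ _ _ => ?_⟩,
    fun f hf x y z => φ.injective ?_⟩
  · simp only [φ.apply_symm_apply]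
    congr 1
    ring
  · -- Every unary operation on a two-element group is affine.
    have hlin : ∀ (u : ZMod 2 → ZMod 2) (r s t : ZMod 2),
      u (r - s + t) = u r - u s + u t := by decide
    obtain ⟨i, hi⟩ := h f hf
    have hu (v : Fin (f.1 + 1) → fixedPoints e) :
        toFixed he.idem (f.2 fun i => v i) = toFixed he.idem (f.2 fun _ => v i) :=
      Subtype.ext (hi _ _ rfl)
    rw [hu, hu x, hu y, hu z, φ.apply_symm_apply]
    simpa using hlin (fun s => φ (toFixed he.idem (f.2 fun _ => φ.symm s))) (φ (x i)) (φ (y i))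
      (φ (z i))

end EssentiallyUnary

section Quasigroup

variable {A : Type u} {M : Set (Ops A)} {e : A → A}

lemma SliceProperty.exists_essentially_binary [Finite A] (hM : IsClone M) (hb : BinaryTrivial M)
    (hS : SliceProperty M e) (h : ¬ EssentiallyUnaryInto M e) :
    ∃ g, Mem₂ M g ∧ (∀ y, ∃ x x', e (g x y) ≠ e (g x' y)) ∧
      ∀ x, ∃ y y', e (g x y) ≠ e (g x y') := by
  simp only [EssentiallyUnaryInto, not_forall, not_exists] at h
  obtain ⟨⟨n, G⟩, hG, h⟩ := h
  have hess {x y : Fin (n + 1) → A} (hxy : e (G y) ≠ e (G x)) : ∃ i, x i ≠ y i ∧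
      ∀ c, ∃ a a', e (G (update c i a)) ≠ e (G (update c i a')) := by
    by_contra! hcon
    exact hxy (hS.apply_eq hM hb ((mem_iff hM).2 hG) hcon)
  obtain ⟨x₀, _, _, hne⟩ := h 0
  obtain ⟨i, -, hi⟩ := hess hne
  obtain ⟨x₁, y₁, hxy, hne₁⟩ := h i
  obtain ⟨j, hj, hj'⟩ := hess hne₁
  have hij : j ≠ i := by
    rintro rfl
    exact hj hxy.symm
  refine ⟨_, ((mem_iff hM).2 hG).slice hM hb x₀ i j, fun y => hi _, fun x => ?_⟩
  simpa only [update_comm hij] using hj' (update x₀ i x)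

/-- The binary operation `g` is a quasigroup operation on the set `N`: all translations by
elements of `A` permute `N`. -/
structure IsQuasigroupOn (N : Set A) (g : A → A → A) : Prop where
  left : ∀ x, g x '' N = N
  right : ∀ y, (g · y) '' N = N

lemma IsMinimalIdempotent.exists_isQuasigroupOn [Finite A] (he : IsMinimalIdempotent M e)
    (hM : IsClone M) (hb : BinaryTrivial M) (hS : SliceProperty M e)
    (h : ¬ EssentiallyUnaryInto M e) :
    ∃ g, Mem₂ M g ∧ (∀ x y, e (g x y) = g x y) ∧ IsQuasigroupOn (fixedPoints e) g := by
  obtain ⟨g, hg, hgl, hgr⟩ := hS.exists_essentially_binary hM hb h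
  obtain ⟨a, b, hab⟩ := he.nonconst
  obtain ⟨x, x', hx⟩ := hgl a
  obtain ⟨f₁, hf₁, hf₁a, hf₁b⟩ := hb.exists_unary hM hab x x'
  obtain ⟨y, y', hy⟩ := hgr (f₁ a)
  obtain ⟨f₂, hf₂, hf₂a, hf₂b⟩ := hb.exists_unary hM hab y y'
  let g' (x y : A) : A := e (g (f₁ x) (f₂ y))
  have hg' : Mem₂ M g' := he.mem.comp hM
    (hg.comp hM (hf₁.comp hM (Mem.proj hM 0)) (hf₂.comp hM (Mem.proj hM 1)))
  have hg₁ : Mem₂ M fun x y => g (f₁ (e x)) y := hg.comp hM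
    (hf₁.comp hM (he.mem.comp hM (Mem.proj hM 0))) (Mem.proj hM 1)
  have hg₂ : Mem₂ M fun y x => g (f₁ x) (f₂ (e y)) := hg.comp hM
    (hf₁.comp hM (Mem.proj hM 1)) (hf₂.comp hM (he.mem.comp hM (Mem.proj hM 0)))
  refine ⟨g', hg', fun _ _ => he.idem _, fun x => ?_, fun y => ?_⟩
  · refine he.image_fixedPoints hM (hg'.fix_left hM hb x) (fun _ => he.idem _) ?_
    exact hS.nonconst hg₂ (y := a) ⟨e a, e b, by simpa [he.idem, hf₂a, hf₂b] using hy⟩ x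
  · refine he.image_fixedPoints hM (hg'.fix_right hM hb y) (fun _ => he.idem _) ?_
    exact hS.nonconst hg₁ (y := a) ⟨e a, e b, by simpa [he.idem, hf₁a, hf₁b] using hx⟩ (f₂ y)

/-- A power of the map `k` that inverts `k` on every set of `r` points permuted by `k`. -/
def iterInv {X : Type*} (r : ℕ) (k : X → X) : X → X :=
  k^[r.factorial - 1]

lemma apply_iterInv {X : Type*} [Finite X] {k : X → X} {S : Set X} (hk : k '' S = S) {x : X}
    (hx : x ∈ S) : k (iterInv (Nat.card S) k x) = x := by
  rw [iterInv, ← iterate_succ_apply' k, Nat.succ_eq_add_one,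
    Nat.sub_add_cancel (Nat.factorial_pos _), iterate_factorial_card_eq hk hx]

lemma iterInv_apply {X : Type*} [Finite X] {k : X → X} {S : Set X} (hk : k '' S = S) {x : X}
    (hx : x ∈ S) : iterInv (Nat.card S) k (k x) = x := by
  rw [iterInv, ← iterate_succ_apply k, Nat.succ_eq_add_one,
    Nat.sub_add_cancel (Nat.factorial_pos _), iterate_factorial_card_eq hk hx]

lemma iterInv_mem {X : Type*} {k : X → X} {S : Set X} (hk : k '' S = S) (r : ℕ) {x : X}
    (hx : x ∈ S) : iterInv r k x ∈ S :=
  (Set.mapsTo_iff_image_subset.2 hk.subset).iterate _ hx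

/-- A Maltsev operation of `M` on the fixed points of `e`, in which moreover `p x y z = z` only
for `x = y`. -/
structure IsMaltsevInto (M : Set (Ops A)) (e : A → A) (p : A → A → A → A) : Prop where
  mem : Mem₃ M p
  apply : ∀ x y z, e (p x y z) = p x y z
  right : ∀ x y, p x y y = e x
  left : ∀ x y, p x x y = e y
  eq_of_apply_eq : ∀ x y z, p x y z = e z → e x = e y

lemma IsQuasigroupOn.exists_isMaltsevInto [Finite A] (hM : IsClone M) (he : Mem₁ M e)
    (hid : ∀ x, e (e x) = e x) {g : A → A → A} (hg : Mem₂ M g)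
    (heg : ∀ x y, e (g x y) = g x y) (hq : IsQuasigroupOn (fixedPoints e) g) :
    ∃ p, IsMaltsevInto M e p := by
  set r := Nat.card (fixedPoints e)
  -- The division operations `x / y` and `y \ z` of the quasigroup.
  let D (x y : A) : A := iterInv r (g · y) x
  let L (y z : A) : A := iterInv r (g y) z
  have hD : Mem₂ M D := hg.iterate hM _
  have hL : Mem₂ M L := ((hg.swap hM).iterate hM _).swap hM
  have hgD {x : A} (hx : x ∈ fixedPoints e) (y : A) : g (D x y) y = x :=
    apply_iterInv (hq.right y) hx
  have hDg {x : A} (hx : x ∈ fixedPoints e) (y : A) : D (g x y) y = x :=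
    iterInv_apply (hq.right y) hx
  have hgL (y : A) {z : A} (hz : z ∈ fixedPoints e) : g y (L y z) = z :=
    apply_iterInv (hq.left y) hz
  have hmem (i : Fin 3) : Mem M fun x : Fin 3 → A => e (x i) := he.comp hM (Mem.proj hM i)
  refine ⟨fun x y z => g (D (e x) (L (e y) (e y))) (L (e y) (e z)),
    hg.comp hM (hD.comp hM (hmem 0) (hL.comp hM (hmem 1) (hmem 1))) (hL.comp hM (hmem 1) (hmem 2)),
    fun _ _ _ => heg _ _, fun x y => hgD (hid x) _, fun x y => ?_, fun x y z hxyz => ?_⟩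
  · have hx : D (e x) (L (e x) (e x)) = e x := by
      simpa only [hgL _ (hid x)] using hDg (hid x) (L (e x) (e x))
    simp only [hx, hgL _ (hid y)]
  · have hDy : D (e x) (L (e y) (e y)) = e y :=
      calc D (e x) (L (e y) (e y))
        _ = D (g (D (e x) (L (e y) (e y))) (L (e y) (e z))) (L (e y) (e z)) :=
          (hDg (iterInv_mem (hq.right _) r (hid x)) _).symm
        _ = D (g (e y) (L (e y) (e z))) (L (e y) (e z)) := by rw [hxyz, hgL _ (hid z)]
        _ = e y := hDg (hid y) _
    simpa only [hDy, hgL _ (hid y)] using (hgD (hid x) (L (e y) (e y))).symm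

lemma IsMaltsevInto.comm [Finite A] {p : A → A → A → A} (hp : IsMaltsevInto M e p)
    (hM : IsClone M) (hb : BinaryTrivial M) (he : Mem₁ M e) (hS : SliceProperty M e) {ι : Type*}
    [Finite ι] [Nonempty ι] {G : (ι → A) → A} (hG : Mem M G) (heG : ∀ x, e (G x) = G x)
    (x y z : ι → A) : G (fun i => p (x i) (y i) (z i)) =
      p (G fun i => e (x i)) (G fun i => e (y i)) (G fun i => e (z i)) := by
  classical
  let b := G fun i => e (y i)
  -- `F` compares the two sides as functions of `x` and `z`, and it is constant in `x` for `z = y`.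
  let F (w : ι ⊕ ι → A) : A :=
    p (p (G fun i => e (w (.inl i))) b (G fun i => e (w (.inr i))))
      (G fun i => p (w (.inl i)) (y i) (w (.inr i))) b
  have hproj (i : ι ⊕ ι) : Mem M fun w : ι ⊕ ι → A => e (w i) := he.comp hM (Mem.proj hM i)
  have hF : Mem M F := hp.mem.comp hM
    (hp.mem.comp hM (hG.comp hM fun _ => hproj _) (hb.const hM b) (hG.comp hM fun _ => hproj _))
    (hG.comp hM fun i => hp.mem.comp hM (Mem.proj hM _) (hb.const hM _) (Mem.proj hM _))
    (hb.const hM b)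
  have hright (v : ι → A) : F (Sum.elim v y) = e b := by
    simp only [F, b, Sum.elim_inl, Sum.elim_inr, hp.right, hp.left, heG]
  have hleft : F (Sum.elim y z) = e b := by
    simp only [F, b, Sum.elim_inl, Sum.elim_inr, hp.left, heG]
  have hFxz : e (F (Sum.elim x z)) = e (F (Sum.elim y z)) := by
    refine hS.apply_eq hM hb hF ?_
    rintro (i | i) hne
    · exact ⟨Sum.elim y y, fun a a' => by simp only [Sum.update_elim_inl, hright]⟩
    · exact absurd rfl hne
  rw [hleft, hp.apply] at hFxz
  have heq := hp.eq_of_apply_eq _ _ _ (hFxz.trans (congrArg e (heG _)))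
  rw [hp.apply, heG] at heq
  exact heq.symm

lemma IsMaltsevInto.exists_isAffineOn [Finite A] {p : A → A → A → A} (hp : IsMaltsevInto M e p)
    (hM : IsClone M) (hb : BinaryTrivial M) (he : IsMinimalIdempotent M e)
    (hS : SliceProperty M e) : ∃ q, IsAffineOn M he.idem q := by
  refine ⟨fun x y z => ⟨p x y z, hp.apply x y z⟩,
    ⟨fun x y => Subtype.ext ((hp.right x y).trans x.2),
      fun x y => Subtype.ext ((hp.left x y).trans y.2), fun a b c a' b' c' a'' b'' c'' => ?_⟩,
    fun f hf x y z => ?_⟩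
  · have := hp.comm hM hb he.mem hS hp.mem (fun x => hp.apply _ _ _) ![a.1, a'.1, a''.1]
      ![b.1, b'.1, b''.1] ![c.1, c'.1, c''.1]
    refine Subtype.ext ?_
    simpa [a.2.eq, a'.2.eq, a''.2.eq, b.2.eq, b'.2.eq, b''.2.eq, c.2.eq, c'.2.eq,
      c''.2.eq] using this
  · have := hp.comm hM hb he.mem hS (he.mem.comp hM ((mem_iff hM).2 hf)) (fun _ => he.idem _)
      (fun i => x i) (fun i => y i) (fun i => z i)
    simp only [(x _).2.eq, (y _).2.eq, (z _).2.eq] at this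
    exact Subtype.ext this

lemma IsMinimalIdempotent.eq_univ_or_exists_isAffineOn [Finite A] (he : IsMinimalIdempotent M e)
    (hM : IsClone M) (hb : BinaryTrivial M) (hT : ReflexiveFull M 2) :
    M = Set.univ ∨ ∃ p, IsAffineOn M he.idem p := by
  by_cases hS : SliceProperty M e
  · right
    by_cases hu : EssentiallyUnaryInto M e
    · exact hu.exists_isAffineOn hM hT he
    · obtain ⟨g, hg, heg, hq⟩ := he.exists_isQuasigroupOn hM hb hS hu
      obtain ⟨p, hp⟩ := hq.exists_isMaltsevInto hM he.mem he.idem hg heg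
      exact hp.exists_isAffineOn hM hb he hS
  · obtain ⟨P, k, l, hP⟩ := he.exists_isAndNot hM hb hS
    exact Or.inl (hP.eq_univ hM hb hT he)

end Quasigroup

section Extension

variable {A : Type u} {M : Set (Ops A)} {e : A → A}
  {p : fixedPoints e → fixedPoints e → fixedPoints e → fixedPoints e} {x y z w : A}

/-- The invariant relation of `M` generated by the graph of `p`, which turns out to be the graph
of an extension of `p` to `A`. -/
def IsValue (M : Set (Ops A)) (p : fixedPoints e → fixedPoints e → fixedPoints e → fixedPoints e)
    (x y z w : A) : Prop :=
  ∃ F : (fixedPoints e × fixedPoints e × fixedPoints e → A) → A, Mem M F ∧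
    F (fun t => t.1) = x ∧ F (fun t => t.2.1) = y ∧ F (fun t => t.2.2) = z ∧
    F (fun t => p t.1 t.2.1 t.2.2) = w

lemma IsValue.map (hM : IsClone M) {f : Ops A} (hf : f ∈ M) {x y z w : Fin (f.1 + 1) → A}
    (h : ∀ i, IsValue M p (x i) (y i) (z i) (w i)) :
    IsValue M p (f.2 x) (f.2 y) (f.2 z) (f.2 w) := by
  choose F hF hx hy hz hw using h
  exact ⟨fun v => f.2 fun i => F i v, Mem.comp hM ((mem_iff hM).2 hf) hF, by simp only [hx],
    by simp only [hy], by simp only [hz], by simp only [hw]⟩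

lemma isValue_apply (hM : IsClone M) (a b c : fixedPoints e) : IsValue M p a b c (p a b c) :=
  ⟨fun v => v (a, b, c), Mem.proj hM _, rfl, rfl, rfl, rfl⟩

lemma IsValue.apply_eq [Finite A] {he : ∀ x, e (e x) = e x} (hw : IsValue M p x y z w)
    (hM : IsClone M) (hp : IsAffineOn M he p) {h : A → A} (hh : Mem₁ M h) :
    toFixed he (h w) = p (toFixed he (h x)) (toFixed he (h y)) (toFixed he (h z)) := by
  obtain ⟨F, hF, rfl, rfl, rfl, rfl⟩ := hw
  rcases isEmpty_or_nonempty (fixedPoints e) with hN | hN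
  · exact hN.elim (toFixed he (h (F fun t => t.1)))
  · exact hp.comm_of_mem (hh.comp hM hF) (fun t => t.1) (fun t => t.2.1) fun t => t.2.2

lemma IsValue.unique [Finite A] (he : IsMinimalIdempotent M e) (hM : IsClone M)
    (hb : BinaryTrivial M) (hp : IsAffineOn M he.idem p) {w' : A} (hw : IsValue M p x y z w)
    (hw' : IsValue M p x y z w') : w = w' :=
  he.eq_of_forall_mem hM hb fun _ hf =>
    congrArg Subtype.val ((hw.apply_eq hM hp hf).trans (hw'.apply_eq hM hp hf).symm)

lemma isValue_right (he : IsMinimalIdempotent M e) (hM : IsClone M) (hb : BinaryTrivial M)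
    (hp : IsAffineOn M he.idem p) (x y : A) : IsValue M p x y y x := by
  obtain ⟨a, b, hab⟩ := he.nonconst
  refine (hb (fun x y => IsValue M p x y y x) fun f hf x y hxy => .map hM hf hxy).full_of_ne
    ?_ hab x y
  have h := isValue_apply (p := p) hM (toFixed he.idem a) (toFixed he.idem b) (toFixed he.idem b)
  rwa [hp.right] at h

lemma isValue_left (he : IsMinimalIdempotent M e) (hM : IsClone M) (hb : BinaryTrivial M)
    (hp : IsAffineOn M he.idem p) (x y : A) : IsValue M p x x y y := by
  obtain ⟨a, b, hab⟩ := he.nonconst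
  refine (hb (fun x y => IsValue M p x x y y) fun f hf x y hxy => .map hM hf hxy).full_of_ne
    ?_ hab x y
  have h := isValue_apply (p := p) hM (toFixed he.idem a) (toFixed he.idem a) (toFixed he.idem b)
  rwa [hp.left] at h

lemma exists_isValue_self (he : IsMinimalIdempotent M e) (hM : IsClone M) (hb : BinaryTrivial M)
    (x y : A) : ∃ w, IsValue M p x y x w := by
  obtain ⟨a, b, hab⟩ := he.nonconst
  refine (hb (fun x y => ∃ w, IsValue M p x y x w) fun f hf x y hxy => ?_).full_of_ne
    ⟨_, isValue_apply hM (toFixed he.idem a) (toFixed he.idem b) _⟩ hab x y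
  choose w hw using hxy
  exact ⟨f.2 w, .map hM hf hw⟩

lemma exists_isValue (he : IsMinimalIdempotent M e) (hM : IsClone M) (hb : BinaryTrivial M)
    (hT : ReflexiveFull M 2) (hp : IsAffineOn M he.idem p) (x y z : A) :
    ∃ w, IsValue M p x y z w := by
  have huniv : {x : Fin 3 → A | ∃ w, IsValue M p (x 0) (x 1) (x 2) w} = Set.univ := by
    refine hT.eq_univ (by norm_num) (fun f hf t ht => ?_) ?_
    · choose w hw using ht
      exact ⟨f.2 w, .map hM hf hw⟩
    · rintro x ⟨i, j, hij, hx⟩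
      have h : x 0 = x 1 ∨ x 1 = x 2 ∨ x 0 = x 2 := by fin_cases i <;> fin_cases j <;> simp_all
      rw [Set.mem_ofPred_eq]
      rcases h with h | h | h <;> rw [h]
      exacts [⟨_, isValue_left he hM hb hp _ _⟩, ⟨_, isValue_right he hM hb hp _ _⟩,
        exists_isValue_self he hM hb _ _]
  exact huniv.ge (Set.mem_univ ![x, y, z])

lemma IsAffineOn.exists_extension [Finite A] (he : IsMinimalIdempotent M e)
    (hp : IsAffineOn M he.idem p) (hM : IsClone M) (hb : BinaryTrivial M)
    (hT : ReflexiveFull M 2) : ∃ m : A → A → A → A, IsMedialMaltsev m ∧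
      ∀ f ∈ M, ∀ x y z : Fin (f.1 + 1) → A,
        f.2 (fun i => m (x i) (y i) (z i)) = m (f.2 x) (f.2 y) (f.2 z) := by
  choose m hm using exists_isValue he hM hb hT hp
  refine ⟨m, ⟨fun x y => (hm x y y).unique he hM hb hp (isValue_right he hM hb hp x y),
    fun x y => (hm x x y).unique he hM hb hp (isValue_left he hM hb hp x y),
    fun a b c a' b' c' a'' b'' c'' => ?_⟩, fun f hf x y z =>
      (IsValue.map hM hf fun i => hm (x i) (y i) (z i)).unique he hM hb hp (hm _ _ _)⟩
  refine he.eq_of_forall_mem hM hb fun f hf => ?_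
  have happly (x y z : A) := (hm x y z).apply_eq hM hp hf
  refine congrArg Subtype.val (?_ : toFixed he.idem _ = toFixed he.idem _)
  simp only [happly, hp.medial]

end Extension

section Group

variable {A : Type u} {M : Set (Ops A)}

lemma IsMedialMaltsev.exists_addCommGroup {X : Type*} [Nonempty X] {m : X → X → X → X}
    (hm : IsMedialMaltsev m) : ∃ _ : AddCommGroup X, ∀ x y z, x - y + z = m x y z := by
  obtain ⟨o⟩ := ‹Nonempty X›
  have hcomm (x y : X) : m x o y = m y o x := by
    simpa only [hm.right, hm.left] using hm.medial o o x o o o y o o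
  have hassoc (x y z : X) : m (m x o y) o z = m x o (m y o z) := by
    simpa only [hm.right, hm.left] using hm.medial x o y o o o o o z
  have hneg (x : X) : m (m o x o) o x = o := by
    simpa only [hm.right, hm.left] using hm.medial o x o o o o x o o
  let _ : Add X := ⟨fun x y => m x o y⟩
  let _ : Neg X := ⟨fun x => m o x o⟩
  let _ : Zero X := ⟨o⟩
  let _ : AddCommGroup X :=
    { AddGroup.ofLeftAxioms hassoc (fun x : X => hm.left o x) hneg with add_comm := hcomm }
  refine ⟨inferInstance, fun x y z => ?_⟩
  have hsub : m x o (m o y o) = m x y o := by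
    simpa only [hm.right, hm.left] using hm.medial x o o o o o o y o
  have hadd : m (m x y o) o z = m x y z := by
    simpa only [hm.right, hm.left] using hm.medial x y o o o o o o z
  calc x - y + z = m (m x o (m o y o)) o z := by rw [sub_eq_add_neg]; rfl
    _ = m x y z := by rw [hsub, hadd]

section AddCommGroup

variable [AddCommGroup A]

lemma map_sub_add_of_pres {f : Ops A} (hf : Pres f.2 {x : Fin 4 → A | x 0 - x 1 + x 2 = x 3})
    (x y z : Fin (f.1 + 1) → A) :
    f.2 (fun i => x i - y i + z i) = f.2 x - f.2 y + f.2 z :=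
  (hf (fun i => ![x i, y i, z i, x i - y i + z i]) fun _ => rfl).symm

lemma map_nsmul_sub_add_of_pres {f : Ops A}
    (hf : Pres f.2 {x : Fin 4 → A | x 0 - x 1 + x 2 = x 3}) (n : ℕ)
    (x y : Fin (f.1 + 1) → A) :
    f.2 (fun i => n • (x i - y i) + y i) = n • (f.2 x - f.2 y) + f.2 y := by
  induction n with
  | zero => simp
  | succ n ih =>
    have h := map_sub_add_of_pres hf x y fun i => n • (x i - y i) + y i
    simp only [ih] at h
    simpa only [succ_nsmul', add_assoc] using h

lemma BinaryTrivial.exists_prime [Finite A] [Nontrivial A] (hb : BinaryTrivial M)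
    (hM : M ⊆ Pol {x : Fin 4 → A | x 0 - x 1 + x 2 = x 3}) :
    ∃ p : ℕ, p.Prime ∧ ∀ a : A, p • a = 0 := by
  obtain ⟨p, hp, hpd⟩ := Nat.exists_prime_and_dvd (Finite.one_lt_card (α := A)).ne'
  have := Fact.mk hp
  obtain ⟨a, ha⟩ := exists_prime_addOrderOf_dvd_card' p hpd
  have ha0 : a ≠ 0 := by
    rintro rfl
    exact hp.one_lt.ne (addOrderOf_zero.symm.trans ha)
  refine ⟨p, hp, fun c => ?_⟩
  have hfull := (hb (fun x y => p • x = p • y) fun f hf x y hxy => ?_).full_of_ne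
    (by rw [smul_zero, ← ha, addOrderOf_nsmul_eq_zero]) ha0 c 0
  · rwa [smul_zero] at hfull
  · have h := map_nsmul_sub_add_of_pres (hM hf) p x y
    simp only [nsmul_sub, hxy, sub_self, zero_add] at h
    rwa [right_eq_add, sub_eq_zero] at h

end AddCommGroup

lemma eq_univ_or_affine [Finite A] [Nontrivial A] (hM : IsClone M) (hb : BinaryTrivial M)
    (hT : ReflexiveFull M 2) : M = Set.univ ∨ ∃ p : ℕ, p.Prime ∧ ∃ _ : AddCommGroup A,
      (∀ a : A, p • a = 0) ∧ M ⊆ Pol {x : Fin 4 → A | x 0 - x 1 + x 2 = x 3} := by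
  obtain ⟨e, he⟩ := hb.exists_isMinimalIdempotent hM
  refine (he.eq_univ_or_exists_isAffineOn hM hb hT).imp_right fun ⟨p, hp⟩ => ?_
  obtain ⟨m, hm, hcomm⟩ := hp.exists_extension he hM hb hT
  obtain ⟨_, hsub⟩ := hm.exists_addCommGroup
  have hpol : M ⊆ Pol {x : Fin 4 → A | x 0 - x 1 + x 2 = x 3} := fun f hf t ht => by
    have h (i) : m (t i 0) (t i 1) (t i 2) = t i 3 := (hsub _ _ _).symm.trans (ht i)
    simp only [Set.mem_ofPred_eq, hsub, ← hcomm f hf, h]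
  obtain ⟨q, hq, hqA⟩ := hb.exists_prime hpol
  exact ⟨q, hq, ‹_›, hqA, hpol⟩

end Group

/-! ### Maximality -/

section Maximality

variable {A : Type u} {D : Set (Ops A)} {k : ℕ} {ρ : Set (Fin k → A)} {ι κ : Type*}

lemma pol_ne_univ [Finite ι] [Nonempty ι] {t : ι → Fin k → A} (ht : ∀ i, t i ∈ ρ)
    (hinj : Injective fun j i => t i j) (hρ : ρ ≠ Set.univ) : Pol ρ ≠ Set.univ := by
  intro hpol
  refine hρ (Set.eq_univ_of_forall fun b => ?_)
  let g : (ι → A) → A := extend (fun j i => t i j) b fun x => x (Classical.arbitrary ι)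
  have hg : Pres g ρ := pres_of_mem_pol fun _ _ => hpol ▸ Set.mem_univ _
  simpa only [g, hinj.extend_apply] using hg t ht

lemma pol_ne_univ_of_injective {t : Fin k → A} (ht : t ∈ ρ) (hinj : Injective t)
    (hρ : ρ ≠ Set.univ) : Pol ρ ≠ Set.univ :=
  pol_ne_univ (ι := Unit) (fun _ => ht) (fun _ _ h => hinj (congrFun h ())) hρ

lemma isMaximalClone_pol (hne : Pol ρ ≠ Set.univ)
    (h : ∀ D, IsClone D → Pol ρ ⊆ D → ∀ f ∈ D, ∀ t : Fin (f.1 + 1) → Fin k → A,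
      (∀ i, t i ∈ ρ) → (fun j => f.2 fun i => t i j) ∉ ρ →
      ∀ n (F : (Fin (n + 1) → A) → A), Mem D F) : IsMaximalClone (Pol ρ) := by
  refine ⟨isClone_pol ρ, hne, fun D hD hsub => or_iff_not_imp_left.2 fun hDρ => ?_⟩
  obtain ⟨f, hf, hfρ⟩ := Set.not_subset.1 fun hle => hDρ (hle.antisymm hsub)
  obtain ⟨t, ht, hft⟩ : ∃ t : Fin (f.1 + 1) → Fin k → A, (∀ i, t i ∈ ρ) ∧
      (fun j => f.2 fun i => t i j) ∉ ρ := by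
    by_contra! hpres
    exact hfρ hpres
  exact Set.eq_univ_of_forall fun F => (mem_iff hD).1 (h D hD hsub f hf t ht hft F.1 F.2)

lemma mem_comp_pres (hD : IsClone D) (hsub : Pol ρ ⊆ D) {f : Ops A} (hf : f ∈ D)
    {g : Fin (f.1 + 1) → (ι → A) → A} (hg : ∀ i, Pres (g i) ρ) :
    Mem D fun x => f.2 fun i => g i x :=
  Mem.comp hD ((mem_iff hD).2 hf) fun i => (hg i).mem hsub

lemma mem_of_factor [Finite κ] [Nonempty κ] (hD : IsClone D) (hsub : Pol ρ ⊆ D)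
    {G : (κ → A) → A} (hG : Pres G ρ) {pt : (ι → A) → κ → A} (hpt : ∀ l, Mem D fun x => pt x l)
    {F : (ι → A) → A} (hF : ∀ x, G (pt x) = F x) : Mem D F := by
  simpa only [hF] using Mem.comp hD (hG.mem hsub) hpt

lemma exists_monotone_extension {X P Q : Type*} [PartialOrder P] [PartialOrder Q] [BoundedOrder Q]
    {pt : X → P} (hpt : ∀ x x', pt x ≤ pt x' → x = x') (F : X → Q) :
    ∃ G : P → Q, Monotone G ∧ ∀ x, G (pt x) = F x := by
  classical
  have hinj : Injective pt := fun x x' h => hpt x x' h.le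
  refine ⟨extend pt F fun w => if ∃ x, pt x ≤ w then ⊤ else ⊥, fun w w' hw => ?_,
    hinj.extend_apply _ _⟩
  by_cases hle : ∃ x, pt x ≤ w
  · obtain ⟨x, hx⟩ := hle
    by_cases hw' : ∃ x', pt x' = w'
    · obtain ⟨x', rfl⟩ := hw'
      obtain rfl := hpt x x' (hx.trans hw)
      rw [hx.antisymm hw]
    · rw [extend_apply' _ _ w' hw', if_pos ⟨x, hx.trans hw⟩]
      exact le_top
  · rw [extend_apply' _ _ w fun ⟨x, hx⟩ => hle ⟨x, hx.le⟩, if_neg hle]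
    exact bot_le

lemma isMaximalClone_le [Finite A] [Nontrivial A] [PartialOrder A] [BoundedOrder A] :
    IsMaximalClone (Pol {x : Fin 2 → A | x 0 ≤ x 1}) := by
  classical
  refine isMaximalClone_pol (pol_ne_univ_of_injective (t := ![⊥, ⊤]) bot_le ?_ ?_) ?_
  · exact injective_pair_iff_ne.2 bot_ne_top
  · exact Set.ne_univ_iff_exists_notMem _ |>.2 ⟨![⊤, ⊥], by simp⟩
  intro D hD hsub f hf t ht hft n F
  let q (y x : Fin (n + 1) → A) : A := f.2 fun i => if y ≤ x then t i 1 else t i 0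
  have hq (y) : Mem D (q y) := by
    refine mem_comp_pres hD hsub hf fun i s hs => ?_
    change ite _ _ _ ≤ ite _ _ _
    split_ifs with h₀ h₁
    exacts [le_rfl, absurd (h₀.trans hs) h₁, ht i, le_rfl]
  let pt (x : Fin (n + 1) → A) : Fin (n + 1) ⊕ (Fin (n + 1) → A) → A := Sum.elim x fun y => q y x
  have hpt (x x') (h : pt x ≤ pt x') : x = x' := by
    have hxx' : x ≤ x' := fun l => h (.inl l)
    refine hxx'.antisymm (by_contra fun hx'x => hft ?_)
    simpa [pt, q, hx'x] using h (.inr x')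
  obtain ⟨G, hG, hGF⟩ := exists_monotone_extension hpt F
  exact mem_of_factor hD hsub (fun s hs => hG hs) (Sum.rec (Mem.proj hD) hq) hGF

lemma exists_extension_of_setoid {X P Q : Type*} [Setoid P] [Nonempty Q] {pt : X → P}
    (hpt : ∀ x x', pt x ≈ pt x' → x = x') (F : X → Q) :
    ∃ G : P → Q, (∀ w w', w ≈ w' → G w = G w') ∧ ∀ x, G (pt x) = F x := by
  have hinj : Injective fun x => (⟦pt x⟧ : Quotient _) := fun x x' h => hpt x x' (Quotient.exact h)
  exact ⟨fun w => extend (fun x => ⟦pt x⟧) F (fun _ => Classical.arbitrary Q) ⟦w⟧,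
    fun w w' hw => congrArg _ (Quotient.sound hw), hinj.extend_apply _ _⟩

lemma isMaximalClone_equivalence [Finite A] {r : A → A → Prop} (hr : Equivalence r)
    (hne : r ≠ Eq) (hnu : ∃ a b, ¬ r a b) :
    IsMaximalClone (Pol {x : Fin 2 → A | r (x 0) (x 1)}) := by
  classical
  obtain ⟨c, d, hcd⟩ := hnu
  have : Nonempty A := ⟨c⟩
  obtain ⟨a, b, hab, hne⟩ : ∃ a b, r a b ∧ a ≠ b := by
    by_contra! heq
    exact hne (funext₂ fun a b => propext ⟨heq a b, fun h => h ▸ hr.refl a⟩)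
  refine isMaximalClone_pol (pol_ne_univ_of_injective (t := ![a, b]) hab ?_ ?_) ?_
  · exact injective_pair_iff_ne.2 hne
  · exact Set.ne_univ_iff_exists_notMem _ |>.2 ⟨![c, d], hcd⟩
  intro D hD hsub f hf t ht hft n F
  let q (y x : Fin (n + 1) → A) : A := f.2 fun i => if x = y then t i 1 else t i 0
  have hq (y) : Mem D (q y) := by
    refine mem_comp_pres hD hsub hf fun i s _ => ?_
    change r (ite _ _ _) (ite _ _ _)
    split_ifs
    exacts [hr.refl _, hr.symm (ht i), ht i, hr.refl _]
  have hpt (x x') (h : ∀ y, r (q y x) (q y x')) : x = x' := by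
    by_contra hxx'
    exact hft (by simpa [q, hxx'] using h x')
  let _ : Setoid A := ⟨r, hr⟩
  obtain ⟨G, hG, hGF⟩ := exists_extension_of_setoid (pt := fun x y => q y x) hpt F
  exact mem_of_factor hD hsub (fun s hs => (congrArg (r _) (hG _ _ hs)).mp (hr.refl _)) hq hGF

end Maximality

section Permutations

variable {G P Q X : Type*} [Group G] [MulAction G P] [MulAction G Q]

/-- The group elements that commute with a map `u` between two `G`-sets. -/
def commutingSubgroup (G : Type*) {P Q : Type*} [Group G] [MulAction G P] [MulAction G Q]
    (u : P → Q) : Subgroup G where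
  carrier := {g | ∀ w, u (g • w) = g • u w}
  one_mem' w := by simp
  mul_mem' ha hb w := by rw [mul_smul, ha, hb, mul_smul]
  inv_mem' {g} hg w := by rw [eq_inv_smul_iff, ← hg, smul_inv_smul]

lemma exists_equivariant_extension {pt : X → P}
    (hpt : ∀ (g : G) x x', g • pt x = pt x' → g = 1 ∧ x = x') {d : P → Q}
    (hd : ∀ (g : G) w, d (g • w) = g • d w) (F : X → Q) :
    ∃ H : P → Q, (∀ (g : G) w, H (g • w) = g • H w) ∧ ∀ x, H (pt x) = F x := by
  have hinj : Injective fun y : G × X => y.1 • pt y.2 := by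
    rintro ⟨g, x⟩ ⟨g', x'⟩ h
    obtain ⟨hg, rfl⟩ := hpt (g'⁻¹ * g) x x' (by rw [mul_smul, inv_smul_eq_iff]; exact h)
    rw [inv_mul_eq_one.1 hg]
  let H : P → Q := extend (fun y : G × X => y.1 • pt y.2) (fun y => y.1 • F y.2) d
  have hH (g : G) (x : X) : H (g • pt x) = g • F x := hinj.extend_apply _ _ (g, x)
  refine ⟨H, fun g w => ?_, fun x => by simpa using hH 1 x⟩
  by_cases hw : ∃ y : G × X, y.1 • pt y.2 = w
  · obtain ⟨⟨g', x⟩, rfl⟩ := hw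
    rw [← mul_smul, hH, hH, mul_smul]
  · have hgw : ¬ ∃ y : G × X, y.1 • pt y.2 = g • w := fun ⟨y, hy⟩ =>
      hw ⟨(g⁻¹ * y.1, y.2), by rw [mul_smul, hy, inv_smul_smul]⟩
    simp only [H, extend_apply' _ _ _ hw, extend_apply' _ _ _ hgw, hd]

variable {A : Type u} {π : Equiv.Perm A} {p : ℕ}

lemma pres_graph_of_equivariant {κ : Type*} {H : (κ → A) → A}
    (hH : ∀ (g : Subgroup.zpowers π) w, H (g • w) = g • H w) :
    Pres H {x : Fin 2 → A | x 1 = π (x 0)} := by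
  intro s hs
  refine Eq.trans (congrArg H (funext hs)) (hH ⟨π, Subgroup.mem_zpowers π⟩ fun l => s l 0)

lemma eq_bot_of_notMem_of_pow_prime (hp : p.Prime) (hπp : π ^ p = 1)
    {H : Subgroup (Subgroup.zpowers π)} (hH : ⟨π, Subgroup.mem_zpowers π⟩ ∉ H) : H = ⊥ := by
  have := Fact.mk hp
  have hπ : π ≠ 1 := by
    rintro rfl
    exact hH (one_mem H)
  have : Fact (Nat.card (Subgroup.zpowers π)).Prime :=
    ⟨by rwa [Nat.card_zpowers, orderOf_eq_prime hπp hπ]⟩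
  refine (H.eq_bot_or_eq_top_of_prime_card).resolve_right ?_
  rintro rfl
  exact hH (Subgroup.mem_top _)

lemma eq_one_of_smul_eq (hfix : ∀ a, π a ≠ a) (hp : p.Prime) (hπp : π ^ p = 1)
    {g : Subgroup.zpowers π} {a : A} (hg : g • a = a) : g = 1 := by
  have h : MulAction.stabilizer (Subgroup.zpowers π) a = ⊥ :=
    eq_bot_of_notMem_of_pow_prime hp hπp (hfix a)
  exact Subgroup.mem_bot.1 (h ▸ hg)

lemma isMaximalClone_perm [Finite A] [Nonempty A] (hfix : ∀ a, π a ≠ a) (hp : p.Prime)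
    (hπp : π ^ p = 1) : IsMaximalClone (Pol {x : Fin 2 → A | x 1 = π (x 0)}) := by
  obtain ⟨a⟩ := ‹Nonempty A›
  refine isMaximalClone_pol (pol_ne_univ_of_injective (t := ![a, π a]) rfl ?_ ?_) ?_
  · exact injective_pair_iff_ne.2 (hfix a).symm
  · exact Set.ne_univ_iff_exists_notMem _ |>.2 ⟨fun _ => a, (hfix a).symm⟩
  intro D hD hsub f hf t ht hft n F
  let u (g : Subgroup.zpowers π) : A := f.2 (g • fun i => t i 0)
  have hu : commutingSubgroup (Subgroup.zpowers π) u = ⊥ := by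
    refine eq_bot_of_notMem_of_pow_prime hp hπp fun hmem => hft ?_
    refine Eq.trans (congrArg f.2 (funext ht)) ?_
    simpa [u] using! hmem 1
  -- Every orbit is free, so `g • y ↦ u g` is induced by a member of `D`.
  have hq (y : Fin (n + 1) → A) : ∃ q, Mem D q ∧ ∀ g : Subgroup.zpowers π, q (g • y) = u g := by
    choose h hh hhy using fun i => exists_equivariant_extension (G := Subgroup.zpowers π)
      (pt := fun _ : Unit => y) (d := fun w => w 0)
      (fun g _ _ hg => ⟨eq_one_of_smul_eq hfix hp hπp (congrFun hg 0), rfl⟩)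
      (fun _ _ => rfl) fun _ => t i 0
    refine ⟨fun x => f.2 fun i => h i x,
      mem_comp_pres hD hsub hf fun i => pres_graph_of_equivariant (hh i), fun g => ?_⟩
    exact congrArg f.2 (funext fun i => (hh i g y).trans (congrArg (g • ·) (hhy i ())))
  choose q hqD hqu using hq
  let pt (x : Fin (n + 1) → A) : Fin (n + 1) ⊕ (Fin (n + 1) → A) → A := Sum.elim x fun y => q y x
  have hpt (g : Subgroup.zpowers π) (x x') (h : g • pt x = pt x') : g = 1 ∧ x = x' := by
    have hgx : g • x = x' := funext fun l => congrFun h (.inl l)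
    have hg : g ∈ commutingSubgroup (Subgroup.zpowers π) u := fun g' => by
      let y := g'⁻¹ • x
      have hx : x = g' • y := (smul_inv_smul g' x).symm
      have hx' : x' = (g • g') • y := by rw [smul_eq_mul, mul_smul, ← hx, hgx]
      calc u (g • g') = q y x' := by rw [hx', hqu]
        _ = g • q y x := (congrFun h (.inr y)).symm
        _ = g • u g' := by rw [← hqu y, ← hx]
    obtain rfl : g = 1 := Subgroup.mem_bot.1 (hu ▸ hg)
    exact ⟨rfl, by rwa [one_smul] at hgx⟩
  obtain ⟨H, hH, hHF⟩ := exists_equivariant_extension (G := Subgroup.zpowers π) hpt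
    (d := fun w => w (.inl 0)) (fun _ _ => rfl) F
  exact mem_of_factor hD hsub (pres_graph_of_equivariant hH) (Sum.rec (Mem.proj hD) hqD) hHF

end Permutations

section Central

variable {A : Type u} {k : ℕ} {ρ : Set (Fin (k + 1) → A)} {c : A}

lemma mem_of_apply_eq_central (hs : TotallySymmetricRel ρ)
    (hc : ∀ x : Fin (k + 1) → A, x 0 = c → x ∈ ρ) {x : Fin (k + 1) → A} {j : Fin (k + 1)}
    (hj : x j = c) : x ∈ ρ := by
  have h := hs (Equiv.swap 0 j) _ (hc (x ∘ Equiv.swap 0 j) (by simpa using hj))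
  simpa [comp_assoc, ← Equiv.coe_trans] using h

lemma pres_extend_central (hs : TotallySymmetricRel ρ)
    (hc : ∀ x : Fin (k + 1) → A, x 0 = c → x ∈ ρ) {X κ : Type*} {pt : X → κ → A} {F : X → A}
    (hpt : Injective pt)
    (hF : ∀ z : Fin (k + 1) → X, (∀ l, (fun j => pt (z j) l) ∈ ρ) → F ∘ z ∈ ρ) :
    Pres (extend pt F fun _ => c) ρ := by
  intro s hsρ
  by_cases hex : ∀ j, ∃ x, pt x = fun l => s l j
  · choose z hz using hex
    have hFz : (fun j => extend pt F (fun _ => c) fun l => s l j) = F ∘ z :=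
      funext fun j => by rw [← hz, hpt.extend_apply, comp_apply]
    rw [hFz]
    exact hF z fun l => by simpa only [hz] using hsρ l
  · obtain ⟨j, hj⟩ := not_forall.1 hex
    exact mem_of_apply_eq_central hs hc (j := j) (extend_apply' _ _ _ hj)

lemma isMaximalClone_central [Fintype A] (hk : k + 1 < Fintype.card A)
    (hr : TotallyReflexiveRel ρ) (hs : TotallySymmetricRel ρ) (hρ : ρ ≠ Set.univ)
    (hc : ∀ x : Fin (k + 1) → A, x 0 = c → x ∈ ρ) : IsMaximalClone (Pol ρ) := by
  classical
  have : Nonempty A := ⟨c⟩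
  obtain ⟨e⟩ : Nonempty (Fin (k + 1) ↪ A) :=
    Embedding.nonempty_of_card_le (by simpa using hk.le)
  refine isMaximalClone_pol (pol_ne_univ_of_injective (t := Equiv.swap c (e 0) ∘ e)
    (hc _ (by simp)) ((Equiv.injective _).comp e.injective) hρ) ?_
  intro D hD hsub f hf t ht hft n F
  have hq (x : Fin (k + 1) → Fin (n + 1) → A) (hx : Injective x) :
      ∃ q, Mem D q ∧ ∀ j, q (x j) = f.2 fun i => t i j :=
    ⟨_, mem_comp_pres hD hsub hf (g := fun i => extend x (t i) fun _ => c) fun i =>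
      pres_extend_central hs hc hx fun z _ => comp_mem_of_mem hr hs (ht i) z,
      fun j => by simp only [hx.extend_apply]⟩
  choose q hqD hqv using hq
  let pt (z : Fin (n + 1) → A) :
      Fin (n + 1) ⊕ {x : Fin (k + 1) → Fin (n + 1) → A // Injective x} → A :=
    Sum.elim z fun x => q x.1 x.2 z
  have hpt : Injective pt := fun z z' h => funext fun l => congrFun h (.inl l)
  have hG : Pres (extend pt F fun _ => c) ρ := pres_extend_central hs hc hpt fun z hz => by
    by_cases hzi : Injective z
    · refine absurd (hz (.inr ⟨z, hzi⟩)) ?_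
      simpa only [pt, Sum.elim_inr, hqv z hzi] using hft
    · exact mem_of_not_injective hr fun h => hzi h.of_comp
  exact mem_of_factor hD hsub hG (Sum.rec (Mem.proj hD) fun x => hqD x.1 x.2) (hpt.extend_apply _ _)

end Central

section Regular

variable {A : Type u} {ι κ : Type*} {D : Set (Ops A)} {k n : ℕ}

/-- The tuples that no `φ i` separates: the regular relation `λ_T` whose equivalence relations
are the kernels of the maps `φ i`. -/
def kerRel (φ : ι → A → Fin k) : Set (Fin k → A) :=
  {x | ∀ i, ¬ Injective (φ i ∘ x)}

lemma totallyReflexiveRel_kerRel (φ : ι → A → Fin k) : TotallyReflexiveRel (kerRel φ) :=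
  fun _ ⟨_, _, hne, hx⟩ i h => hne (h (congrArg (φ i) hx))

lemma totallySymmetricRel_kerRel (φ : ι → A → Fin k) : TotallySymmetricRel (kerRel φ) :=
  fun σ x hx i h => hx i (by simpa [comp_def] using h.comp σ.symm.injective)

lemma pol_kerRel_ne_univ [Nonempty ι] {φ : ι → A → Fin (n + 3)}
    (hφ : ∀ c : ι → Fin (n + 3), ∃ a, ∀ i, φ i a = c i) : Pol (kerRel φ) ≠ Set.univ := by
  choose a ha using fun j : Fin (n + 3) => hφ fun _ => j
  obtain ⟨i₀⟩ := ‹Nonempty ι›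
  have hinj : Injective a := fun j j' h => by rw [← ha j i₀, ← ha j' i₀, h]
  -- `(· ⊓ 1)` identifies `1` and `2`, `(· ⊔ 1)` identifies `0` and `1`, and together they separate.
  refine pol_ne_univ (t := ![a ∘ (· ⊓ 1), a ∘ (· ⊔ 1)]) (Fin.forall_fin_two.2 ⟨?_, ?_⟩) ?_ ?_
  · have h₁₂ : (1 : Fin (n + 3)) < 2 := by
      rw [Fin.lt_def, Fin.val_two, Fin.val_one]
      exact one_lt_two
    exact fun i h => h₁₂.ne (h (by simp [ha, h₁₂.le]))
  · exact fun i h => zero_ne_one (h (by simp [ha]) : (0 : Fin (n + 3)) = 1)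
  · exact fun j j' h => eq_of_inf_eq_sup_eq (hinj (congrFun h 0)) (hinj (congrFun h 1))
  · exact fun h => (h.ge (Set.mem_univ a)) i₀ fun j j' hj => by simpa [ha] using hj

lemma mem_of_reindex {ρ : Set (Fin k → A)} (hr : TotallyReflexiveRel ρ)
    (hs : TotallySymmetricRel ρ) (hD : IsClone D) (hsub : Pol ρ ⊆ D) {f : Ops A} (hf : f ∈ D)
    {t : Fin (f.1 + 1) → Fin k → A} (ht : ∀ i, t i ∈ ρ) (ψ : (ι → A) → Fin k) :
    Mem D fun x => f.2 fun i => t i (ψ x) :=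
  mem_comp_pres hD hsub hf (g := fun i x => t i (ψ x)) fun i s _ =>
    comp_mem_of_mem hr hs (ht i) fun j => ψ fun l => s l j

lemma exists_pres_kerRel {X : Type*} {φ : ι → A → Fin (k + 1)}
    (hφ : ∀ c : ι → Fin (k + 1), ∃ a, ∀ i, φ i a = c i) {b : Fin (k + 1) → A} {i₀ : ι}
    (hb : Injective (φ i₀ ∘ b)) {pt : X → κ → A} (hpt : Injective pt) {F : X → A} {l : ι → κ}
    (hl : ∀ x i, pt x (l i) = b (φ i (F x))) :
    ∃ G : (κ → A) → A, Pres G (kerRel φ) ∧ ∀ x, G (pt x) = F x := by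
  obtain ⟨τ, hτ⟩ := hb.hasLeftInverse
  have hex (w : κ → A) : ∃ a, (∀ i, φ i a = τ (φ i₀ (w (l i)))) ∧ ∀ x, pt x = w → a = F x := by
    by_cases hw : ∃ x, pt x = w
    · obtain ⟨x, rfl⟩ := hw
      refine ⟨F x, fun i => ?_, fun x' hx' => congrArg F (hpt hx'.symm)⟩
      rw [hl]
      exact (hτ _).symm
    · obtain ⟨a, ha⟩ := hφ fun i => τ (φ i₀ (w (l i)))
      exact ⟨a, ha, fun x hx => absurd ⟨x, hx⟩ hw⟩
  choose G hGφ hGF using hex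
  refine ⟨G, fun s hs i h => ?_, fun x => hGF _ x rfl⟩
  simp only [comp_def, hGφ] at h
  exact hs (l i) i₀ (Injective.of_comp h)

lemma isMaximalClone_kerRel [Finite A] [Finite ι] [Nonempty ι] {φ : ι → A → Fin (n + 3)}
    (hφ : ∀ c : ι → Fin (n + 3), ∃ a, ∀ i, φ i a = c i) : IsMaximalClone (Pol (kerRel φ)) := by
  classical
  refine isMaximalClone_pol (pol_kerRel_ne_univ hφ) fun D hD hsub f hf t ht hft m F => ?_
  have hr := totallyReflexiveRel_kerRel φ
  let b (j : Fin (n + 3)) : A := f.2 fun i => t i j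
  have hbinj : Injective b := injective_of_notMem hr hft
  obtain ⟨i₀, hi₀⟩ : ∃ i, Injective (φ i ∘ b) := by
    by_contra! hcon
    exact hft hcon
  have hb (ψ : (Fin (m + 1) → A) → Fin (n + 3)) : Mem D fun x => b (ψ x) :=
    mem_of_reindex hr (totallySymmetricRel_kerRel φ) hD hsub hf ht ψ
  let pt (x : Fin (m + 1) → A) : ι ⊕ (Fin (m + 1) → A) → A :=
    Sum.elim (fun i => b (φ i (F x))) fun y => b (if x = y then 1 else 0)
  have hpt : Injective pt := fun x x' h => by
    by_contra hne
    simpa [Ne.symm hne] using hbinj (congrFun h (.inr x))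
  obtain ⟨G, hG, hGF⟩ := exists_pres_kerRel hφ hi₀ hpt (l := .inl) fun _ _ => rfl
  exact mem_of_factor hD hsub hG (Sum.rec (fun _ => hb _) fun _ => hb _) hGF

lemma exists_map_eq_iff [Finite A] {θ : A → A → Prop} (hθ : Equivalence θ)
    (hcard : Set.ncard {B : Set A | ∃ a, B = {b | θ a b}} = k) :
    ∃ φ : A → Fin k, Surjective φ ∧ ∀ a b, φ a = φ b ↔ θ a b := by
  obtain ⟨e⟩ : Nonempty ({B : Set A | ∃ a, B = {b | θ a b}} ≃ Fin k) :=
    Finite.card_eq.1 (by rw [Nat.card_coe_set_eq, hcard, Nat.card_fin])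
  refine ⟨fun a => e ⟨{b | θ a b}, a, rfl⟩, fun j => ?_, fun a b => ?_⟩
  · obtain ⟨a, ha⟩ := (e.symm j).2
    exact ⟨a, by simp only [← ha, Subtype.coe_eta, Equiv.apply_symm_apply]⟩
  · rw [e.apply_eq_iff_eq, Subtype.mk.injEq]
    exact ⟨fun h => h.ge (hθ.refl b), fun h => Set.ext fun c => ⟨hθ.trans (hθ.symm h), hθ.trans h⟩⟩

lemma isMaximalClone_regular [Finite A] [Finite ι] [Nonempty ι] {θ : ι → A → A → Prop}
    (hk : 3 ≤ k) (hθ : ∀ i, Equivalence (θ i))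
    (hcard : ∀ i, Set.ncard {B : Set A | ∃ a, B = {b | θ i a b}} = k)
    (hne : ∀ a : ι → A, (⋂ i, {b | θ i (a i) b}).Nonempty) :
    IsMaximalClone (Pol {x : Fin k → A | ∀ i, ∃ j l, j ≠ l ∧ θ i (x j) (x l)}) := by
  obtain ⟨n, rfl⟩ := Nat.exists_eq_add_of_le' hk
  choose φ hφs hφ using fun i => exists_map_eq_iff (hθ i) (hcard i)
  have hrel : {x | ∀ i, ∃ j l, j ≠ l ∧ θ i (x j) (x l)} = kerRel φ := by
    simp only [kerRel, not_injective_iff, comp_apply, hφ, and_comm]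
  rw [hrel]
  refine isMaximalClone_kerRel fun c => ?_
  choose a ha using fun i => hφs i (c i)
  obtain ⟨b, hb⟩ := hne a
  exact ⟨b, fun i => by rw [← ha i, eq_comm, hφ]; exact Set.mem_iInter.1 hb i⟩

end Regular

section Affine

variable {A : Type u} [AddCommGroup A] {D : Set (Ops A)} {p : ℕ}

lemma pres_affine {ι : Type*} {f : (ι → A) → A}
    (hf : ∀ x y z, f (x - y + z) = f x - f y + f z) :
    Pres f {x : Fin 4 → A | x 0 - x 1 + x 2 = x 3} :=
  fun t ht => (hf _ _ _).symm.trans (congrArg f (funext ht : (t · 0) - (t · 1) + (t · 2) = (t · 3)))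

lemma exists_affine_map [Fact p.Prime] [Module (ZMod p) A] {a b : A} (hab : a ≠ b) (x y : A) :
    ∃ h : A → A, (∀ u v w, h (u - v + w) = h u - h v + h w) ∧ h a = x ∧ h b = y := by
  obtain ⟨g, hg⟩ : ∃ g : Module.Dual (ZMod p) A, g (b - a) ≠ 0 := by
    by_contra! hcon
    exact hab (sub_eq_zero.1 ((Module.forall_dual_apply_eq_zero_iff (ZMod p) _).1 hcon)).symm
  refine ⟨fun z => x + ((g (b - a))⁻¹ * g (z - a)) • (y - x), fun u v w => ?_, by simp,
    by simp only [inv_mul_cancel₀ hg, one_smul, add_sub_cancel]⟩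
  simp only [map_add, map_sub, mul_add, mul_sub, add_smul, sub_smul]
  abel

lemma binaryTrivial_of_affine (hp : p.Prime) (hA : ∀ a : A, p • a = 0)
    (hsub : Pol {x : Fin 4 → A | x 0 - x 1 + x 2 = x 3} ⊆ D) : BinaryTrivial D := by
  have := Fact.mk hp
  let _ : Module (ZMod p) A := AddCommGroup.zmodModule hA
  intro r hr
  refine or_iff_not_imp_left.2 fun hne x y => ?_
  push Not at hne
  obtain ⟨a, b, hrab, hab⟩ := hne
  obtain ⟨h, hh, rfl, rfl⟩ := exists_affine_map (p := p) hab x y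
  have hmem : (⟨0, fun z => h (z 0)⟩ : Ops A) ∈ D := hsub (pres_affine fun _ _ _ => hh _ _ _)
  exact hr _ hmem (fun _ => a) (fun _ => b) fun _ => hrab

lemma reflexiveFull_of_affine (hsub : Pol {x : Fin 4 → A | x 0 - x 1 + x 2 = x 3} ⊆ D) :
    ReflexiveFull D 2 := by
  intro k hk σ hσ hr _
  have : Nonempty (Fin k) := ⟨⟨0, by omega⟩⟩
  have hsum : Mem D fun x : Fin k → A => ∑ i, x i := by
    refine (pres_affine fun x y z => ?_).mem hsub
    simp [Finset.sum_add_distrib]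
  refine Set.eq_univ_of_forall fun c => ?_
  -- `c` is the sum of the tuples `Pi.single i (c i)`, each of which has a repeated entry `0`.
  have hmem : (fun j => ∑ i, (Pi.single i (c i) : Fin k → A) j) ∈ σ := by
    refine hσ.pres hsum _ fun i => mem_of_not_injective hr fun hinj => ?_
    have : Nontrivial (Fin k) := Fin.nontrivial_iff_two_le.2 hk.le
    obtain ⟨j, hj⟩ := exists_ne i
    obtain ⟨l, hli, hlj⟩ := Fin.exists_ne_and_ne_of_two_lt i j hk
    exact hlj (hinj (by simp [hj, hli]))
  simpa only [Fintype.sum_pi_single] using hmem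

lemma eq_sub_add_of_pres_add {m : A → A → A → A} (hxx : ∀ x y, m x x y = y)
    (hyy : ∀ x y, m x y y = x)
    (hadd : Pres (fun x : Fin 2 → A => x 0 + x 1) {x : Fin 4 → A | m (x 0) (x 1) (x 2) = x 3})
    (x y z : A) : m x y z = x - y + z := by
  have h : m (x + 0) (y + 0) (y + (z - y)) = m x y y + m 0 0 (z - y) :=
    hadd ![![x, y, y, m x y y], ![0, 0, z - y, m 0 0 (z - y)]] (Fin.forall_fin_two.2 ⟨rfl, rfl⟩)
  rw [hyy, hxx, add_zero, add_zero, add_sub_cancel] at h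
  rw [h, sub_add_eq_add_sub, add_sub_assoc]

lemma pol_affine_ne_univ [Nontrivial A] :
    Pol {x : Fin 4 → A | x 0 - x 1 + x 2 = x 3} ≠ Set.univ := by
  obtain ⟨a, ha⟩ := exists_ne (0 : A)
  refine pol_ne_univ (t := ![![0, 0, a, a], ![a, 0, 0, a]])
    (Fin.forall_fin_two.2 ⟨by simp, by simp⟩) (fun j j' h => ?_)
    ((Set.ne_univ_iff_exists_notMem _).2 ⟨![0, 0, 0, a], by simpa using ha.symm⟩)
  obtain ⟨h₀, h₁⟩ := Fin.forall_fin_two.1 (congrFun h)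
  clear h
  fin_cases j <;> fin_cases j' <;> simp_all

lemma isMaximalClone_affine [Finite A] [Nontrivial A] (hp : p.Prime) (hA : ∀ a : A, p • a = 0) :
    IsMaximalClone (Pol {x : Fin 4 → A | x 0 - x 1 + x 2 = x 3}) := by
  refine ⟨isClone_pol _, pol_affine_ne_univ, fun D hD hsub => ?_⟩
  have hadd : Mem D fun x : Fin 2 → A => x 0 + x 1 :=
    (pres_affine fun x y z => by simp only [Pi.add_apply, Pi.sub_apply]; abel).mem hsub
  refine (eq_univ_or_affine hD (binaryTrivial_of_affine hp hA hsub)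
    (reflexiveFull_of_affine hsub)).symm.imp_left fun haff => ?_
  -- The second group structure on `A` is only used through its ternary operation `m`.
  obtain ⟨m, hxx, hyy, h⟩ : ∃ m : A → A → A → A, (∀ x y, m x x y = y) ∧ (∀ x y, m x y y = x) ∧
      D ⊆ Pol {x : Fin 4 → A | m (x 0) (x 1) (x 2) = x 3} := by
    obtain ⟨_, _, _, _, h⟩ := haff
    exact ⟨fun x y z => x - y + z, fun x y => by simp, fun x y => by simp, h⟩
  have hm := eq_sub_add_of_pres_add hxx hyy (pres_of_mem_pol (hadd.mono h))
  simp only [hm] at h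
  exact h.antisymm hsub

end Affine

section Completeness

variable {A : Type u} [Fintype A] [Nontrivial A]

lemma isMaximalClone_of_isRosenbergRel {ρ : Σ k : ℕ, Set (Fin (k + 1) → A)}
    (h : IsRosenbergRel ρ) : IsMaximalClone (Pol ρ.2) := by
  obtain ⟨le, hle, ⟨b, hb⟩, ⟨t, ht⟩, rfl⟩ | ⟨π, hfix, ⟨p, hp, hπp⟩, rfl⟩ | ⟨p, hp, _, hA, rfl⟩ |
    ⟨r, hr, hne, hnu, rfl⟩ | ⟨hk, hr, hs, hρ, c, hc⟩ | ⟨r, θ, hk, -, hθ, hcard, hne, hρ⟩ := h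
  · let _ : PartialOrder A :=
      { le := le
        le_refl := hle.refl
        le_trans := hle.trans
        le_antisymm := hle.antisymm }
    let _ : BoundedOrder A := { bot := b, bot_le := hb, top := t, le_top := ht }
    exact isMaximalClone_le
  · exact isMaximalClone_perm hfix hp (Equiv.ext hπp)
  · exact isMaximalClone_affine hp hA
  · exact isMaximalClone_equivalence hr hne hnu
  · exact isMaximalClone_central hk hr hs hρ hc
  · rw [hρ]
    exact isMaximalClone_regular hk hθ hcard hne

lemma exists_isRosenbergRel {M : Set (Ops A)} (hM : IsClone M) (hne : M ≠ Set.univ) :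
    ∃ ρ : Σ k : ℕ, Set (Fin (k + 1) → A), IsRosenbergRel ρ ∧ M ⊆ Pol ρ.2 := by
  by_contra! h
  have hfull := AvoidsRosenberg.reflexiveFull h
  obtain ⟨p, hp, _, hA, hpol⟩ :=
    (eq_univ_or_affine hM (AvoidsRosenberg.binaryTrivial h hfull) hfull).resolve_left hne
  exact h ⟨3, _⟩ (.inr <| .inr <| .inl ⟨p, hp, _, hA, rfl⟩) hpol

end Completeness

end Rosenberg

open Rosenberg in
theorem rosenberg_completeness_general {A : Type u} [Fintype A] [Nontrivial A] :
    (∀ M : Set (Ops A), IsMaximalClone M ↔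
        ∃ ρ : Σ k : ℕ, Set (Fin (k + 1) → A), IsRosenbergRel ρ ∧ M = Pol ρ.2) ∧
    (∀ F : Set (Ops A), cloneGen F = Set.univ ↔
        ∀ ρ : Σ k : ℕ, Set (Fin (k + 1) → A), IsRosenbergRel ρ → ¬ F ⊆ Pol ρ.2) := by
  refine ⟨fun M => ⟨fun hM => ?_, ?_⟩, fun F => ⟨fun hF ρ hρ hsub => ?_, fun h => ?_⟩⟩
  · obtain ⟨ρ, hρ, hsub⟩ := exists_isRosenbergRel hM.1 hM.2.1
    have hpol : Pol ρ.2 = M := (hM.2.2 _ (isClone_pol ρ.2) hsub).resolve_right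
      (isMaximalClone_of_isRosenbergRel hρ).2.1
    exact ⟨ρ, hρ, hpol.symm⟩
  · rintro ⟨ρ, hρ, rfl⟩
    exact isMaximalClone_of_isRosenbergRel hρ
  · refine (isMaximalClone_of_isRosenbergRel hρ).2.1 (Set.univ_subset_iff.1 ?_)
    exact hF ▸ cloneGen_subset (isClone_pol ρ.2) hsub
  · by_contra hne
    obtain ⟨ρ, hρ, hsub⟩ := exists_isRosenbergRel (isClone_cloneGen F) hne
    exact h ρ hρ ((subset_cloneGen F).trans hsub)

/-- **Rosenberg's Completeness Theorem.**  Let `A` be a finite set with `|A| ≥ 3`.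
The maximal clones on `A` are exactly the clones `Pol ρ` where `ρ` is a Rosenberg
relation on `A`.  Consequently, a set `F` of operations on `A` is complete if and only
if `F` is not contained in `Pol ρ` for any Rosenberg relation `ρ`. -/
theorem rosenberg_completeness {A : Type u} [Fintype A] (h3 : 3 ≤ Fintype.card A) :
    (∀ M : Set (Ops A), IsMaximalClone M ↔
        ∃ ρ : Σ k : ℕ, Set (Fin (k + 1) → A), IsRosenbergRel ρ ∧ M = Pol ρ.2) ∧
    (∀ F : Set (Ops A), cloneGen F = Set.univ ↔
        ∀ ρ : Σ k : ℕ, Set (Fin (k + 1) → A), IsRosenbergRel ρ → ¬ F ⊆ Pol ρ.2) := by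
  have := Fintype.one_lt_card_iff_nontrivial.1 (Nat.lt_of_succ_lt h3)
  exact rosenberg_completeness_general
end

section
/- Five-type classification of minimal clones. Let A be a set with |A| ≥ 2. Every minimal clone on A is generated by an operation f of one of the following types: (✓I) a unary operation f such that either f = f∘f and f(A) ≠ A, or f is a permutation of prime order; (II) a binary idempotent operation that is not a projection; (III) a semiprojection onto its first variable, i.e. an n-ary operation (n ≥ 3) that is not a projection but satisfies f(y₁,…,yₙ) = y₁ whenever two of the arguments y₁,…,yₙ are equal; (IV) a majority operation; (✓V) the operation x₁ + x₂ + x₃ of some elementary abelian 2-group (A;+). Moreover, every operation of type (✓I) and every operation of type (✓V) generates a minimal clone. -/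
/-!
Let `C` be a minimal clone and `f ∈ C` a nonprojection of least arity `n`, so that `f` generates
`C`. For `n = 1` the clone is governed by the submonoid generated by a self-map, and the smallest
nontrivial monogenic monoids are generated by an idempotent or an element of prime order. For
`n = 2` minimality of `n` makes `f` idempotent. For `n ≥ 3` every identification of two variables
of `f` gives a projection: if `n ≥ 4`, then `f` is a semiprojection, and if `n = 3`, then `C`
contains a nontrivial semiprojection, a majority operation, or a minority operation `m`.

When the only semiprojections in `C` are projections, two operations of `C` of arity at least three
that agree whenever two arguments are equal must coincide: apply this to `m(x₁, g, h)`, which is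
then a semiprojection, and cancel with `m(x, y, m(x, y, z)) = z`. This rigidity makes `m` symmetric
and forces `m(m(x, o, y), o, z) = m(x, y, z)`, so that `x + y := m(x, o, y)` is a group operation
of exponent two with `m = x₁ + x₂ + x₃`.

Conversely, the clone of `x₁ + x₂ + x₃` consists of affine combinations over `𝔽₂`, and a
nontrivial one becomes `x₁ + x₂ + x₃` again after identifying variables.
-/

universe u

/-- A majority operation: a ternary operation satisfying
`m(x,x,y) = m(x,y,x) = m(y,x,x) = x`. -/
def IsMajority {A : Type u} (f : (Fin 3 → A) → A) : Prop :=
  ∀ x y : A, f ![x, x, y] = x ∧ f ![x, y, x] = x ∧ f ![y, x, x] = x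

/-- Type (✓I) of unary operations: `f = f ∘ f` with non-full range, or
a permutation of prime order. -/
def IsTypeCheckedI {A : Type u} (f : A → A) : Prop :=
  (f ∘ f = f ∧ Set.range f ≠ Set.univ) ∨ ∃ π : Equiv.Perm A, f = ⇑π ∧ (orderOf π).Prime

variable {A : Type u}

/-! ### Clones -/

theorem isClone_cloneGen (F : Set (Ops A)) : IsClone (cloneGen F) :=
  ⟨fun n i _ hC => hC.1.1 n i,
    fun n m f g hf hg C hC => hC.1.2 n m f g (hf C hC) fun i => hg i C hC⟩

theorem mem_cloneGen_self (f : Ops A) : f ∈ cloneGen {f} :=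
  fun _ hC => hC.2 rfl

theorem cloneGen_singleton_subset {C : Set (Ops A)} (hC : IsClone C) {f : Ops A} (hf : f ∈ C) :
    cloneGen {f} ⊆ C :=
  Set.sInter_subset_of_mem ⟨hC, Set.singleton_subset_iff.2 hf⟩

theorem mk_mem_projClone {n : ℕ} {f : (Fin (n + 1) → A) → A} :
    (⟨n, f⟩ : Ops A) ∈ projClone A ↔ ∃ i, f = fun x => x i :=
  Iff.rfl

theorem IsClone.projClone_subset {C : Set (Ops A)} (hC : IsClone C) : projClone A ⊆ C := by
  rintro ⟨n, f⟩ hf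
  obtain ⟨i, rfl⟩ := mk_mem_projClone.1 hf
  exact hC.1 n i

theorem IsClone.minor_mem {C : Set (Ops A)} (hC : IsClone C) {n m : ℕ}
    {f : (Fin (n + 1) → A) → A} (hf : (⟨n, f⟩ : Ops A) ∈ C) (σ : Fin (n + 1) → Fin (m + 1)) :
    (⟨m, fun x => f fun i => x (σ i)⟩ : Ops A) ∈ C :=
  hC.2 n m f (fun i x => x (σ i)) hf fun i => hC.1 m (σ i)

theorem IsClone.comp_three_mem {C : Set (Ops A)} (hC : IsClone C) {f : (Fin 3 → A) → A}
    (hf : (⟨2, f⟩ : Ops A) ∈ C) {m : ℕ} {g₀ g₁ g₂ : (Fin (m + 1) → A) → A}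
    (h₀ : (⟨m, g₀⟩ : Ops A) ∈ C) (h₁ : (⟨m, g₁⟩ : Ops A) ∈ C) (h₂ : (⟨m, g₂⟩ : Ops A) ∈ C) :
    (⟨m, fun x => f ![g₀ x, g₁ x, g₂ x]⟩ : Ops A) ∈ C := by
  have hcoord : ∀ x, (fun i => ![g₀, g₁, g₂] i x) = ![g₀ x, g₁ x, g₂ x] := fun x =>
    funext fun i => by fin_cases i <;> rfl
  simp only [← hcoord]
  exact hC.2 2 m f ![g₀, g₁, g₂] hf (Fin.forall_fin_succ.2 ⟨h₀, Fin.forall_fin_two.2 ⟨h₁, h₂⟩⟩)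

theorem IsClone.exists_minimal_arity {C : Set (Ops A)} (hC : IsClone C) (hne : C ≠ projClone A) :
    ∃ (n : ℕ) (f : (Fin (n + 1) → A) → A), (⟨n, f⟩ : Ops A) ∈ C ∧ ⟨n, f⟩ ∉ projClone A ∧
      ∀ m < n, ∀ g : (Fin (m + 1) → A) → A, (⟨m, g⟩ : Ops A) ∈ C → ⟨m, g⟩ ∈ projClone A := by
  obtain ⟨⟨n, f⟩, ⟨hf, hfp⟩, hmin⟩ := exists_minimalFor_of_wellFoundedLT
    (fun f => f ∈ C ∧ f ∉ projClone A) Sigma.fst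
    (Set.not_subset.1 fun h => hne (h.antisymm hC.projClone_subset))
  refine ⟨n, f, hf, hfp, fun m hm g hg => ?_⟩
  by_contra hgp
  exact hm.not_ge (hmin ⟨hg, hgp⟩ hm.le)

theorem IsClone.apply_const {C : Set (Ops A)} (hC : IsClone C)
    (hproj : ∀ g : (Fin 1 → A) → A, (⟨0, g⟩ : Ops A) ∈ C → ⟨0, g⟩ ∈ projClone A) {n : ℕ}
    {f : (Fin (n + 1) → A) → A} (hf : (⟨n, f⟩ : Ops A) ∈ C) (a : A) : f (fun _ => a) = a := by
  obtain ⟨i, hi⟩ := hproj _ (hC.minor_mem hf fun _ => 0)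
  exact congrFun hi fun _ => a

theorem IsMinimalClone.eq_cloneGen {C : Set (Ops A)} (hC : IsMinimalClone C) {f : Ops A}
    (hf : f ∈ C) (hfp : f ∉ projClone A) : C = cloneGen {f} :=
  ((hC.2.2 _ (isClone_cloneGen {f}) (cloneGen_singleton_subset hC.1 hf)).resolve_left
    fun h => hfp (h ▸ mem_cloneGen_self f)).symm

theorem isMinimalClone_cloneGen {f : Ops A} (hfp : f ∉ projClone A)
    (h : ∀ g ∈ cloneGen {f}, g ∉ projClone A → f ∈ cloneGen {g}) :
    IsMinimalClone (cloneGen {f}) := by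
  refine ⟨isClone_cloneGen _, fun heq => hfp (heq ▸ mem_cloneGen_self f), fun D hD hDf => ?_⟩
  by_cases hDp : D ⊆ projClone A
  · exact Or.inl (hDp.antisymm hD.projClone_subset)
  · obtain ⟨g, hg, hgp⟩ := Set.not_subset.1 hDp
    have hfD : f ∈ D := cloneGen_singleton_subset hD hg (h g (hDf hg) hgp)
    exact Or.inr (hDf.antisymm (cloneGen_singleton_subset hD hfD))

/-! ### Unary operations -/

section Monoid

variable {M : Type*} [Monoid M] {x : M}

theorem mem_powers_of_isIdempotentElem (hx : IsIdempotentElem x) :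
    ∀ y ∈ Submonoid.powers x, y ≠ 1 → x ∈ Submonoid.powers y := by
  rintro _ ⟨k, rfl⟩ hk
  have hk0 : k ≠ 0 := fun h => hk (by simp only [h, pow_zero])
  exact ⟨1, by simp only [pow_one, hx.pow_eq hk0]⟩

theorem mem_powers_of_prime_orderOf (hx : (orderOf x).Prime) :
    ∀ y ∈ Submonoid.powers x, y ≠ 1 → x ∈ Submonoid.powers y := by
  rintro _ ⟨k, rfl⟩ hk
  have hcop : (orderOf x).Coprime k :=
    hx.coprime_iff_not_dvd.2 fun h => hk (orderOf_dvd_iff_pow_eq_one.1 h)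
  exact exists_pow_eq_self_of_coprime hcop.symm

theorem exists_isIdempotentElem_or_prime_orderOf (hx : x ≠ 1)
    (h : ∀ y ∈ Submonoid.powers x, y ≠ 1 → x ∈ Submonoid.powers y) :
    ∃ y ∈ Submonoid.powers x, y ≠ 1 ∧ (IsIdempotentElem y ∨ (orderOf y).Prime) := by
  by_cases hfin : orderOf x = 0
  · have hpow : ∀ k ≠ 0, x ^ k ≠ 1 := fun k hk => fun h1 =>
      hk (Nat.eq_zero_of_zero_dvd (hfin ▸ orderOf_dvd_of_pow_eq_one h1))
    obtain ⟨m, hm⟩ := h (x ^ 2) ⟨2, rfl⟩ (hpow 2 two_ne_zero)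
    obtain _ | l := m
    · exact absurd hm.symm (by simpa only [pow_zero] using hx)
    have hx' : x ^ (2 * (l + 1)) = x := by rw [pow_mul]; exact hm
    refine ⟨x ^ (2 * l + 1), ⟨_, rfl⟩, hpow _ (Nat.succ_ne_zero _), Or.inl ?_⟩
    calc x ^ (2 * l + 1) * x ^ (2 * l + 1) = x ^ (2 * l) * x ^ (2 * (l + 1)) := by
          rw [← pow_add, ← pow_add]; congr 1; ring
      _ = x ^ (2 * l + 1) := by rw [hx', pow_succ]
  · obtain ⟨p, hp, hpx⟩ := Nat.exists_prime_and_dvd (mt orderOf_eq_one_iff.1 hx)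
    have hord := orderOf_pow_orderOf_div hfin hpx
    refine ⟨x ^ (orderOf x / p), ⟨_, rfl⟩, fun h1 => hp.ne_one ?_, Or.inr (hord.symm ▸ hp)⟩
    rw [← hord, h1, orderOf_one]

end Monoid

/-- A self-map of `A` as an operation of arity one. Self-maps are taken in the monoid
`Function.End A`, so that their iterates are powers. -/
def unaryOp (u : Function.End A) : Ops A := ⟨0, fun x => u (x 0)⟩

/-- The clone of the essentially unary operations `x ↦ s (x i)` with `s` in the monoid `S` of
self-maps. -/
def unaryClone (S : Submonoid (Function.End A)) : Set (Ops A) :=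
  {f | ∃ s ∈ S, ∃ i, f.2 = fun x => s (x i)}

theorem mk_mem_unaryClone {S : Submonoid (Function.End A)} {n : ℕ} {f : (Fin (n + 1) → A) → A} :
    (⟨n, f⟩ : Ops A) ∈ unaryClone S ↔ ∃ s ∈ S, ∃ i, f = fun x => s (x i) :=
  Iff.rfl

theorem isClone_unaryClone (S : Submonoid (Function.End A)) : IsClone (unaryClone S) := by
  refine ⟨fun n i => ⟨1, S.one_mem, i, rfl⟩, ?_⟩
  intro n m f g hf hg
  obtain ⟨s, hs, i, rfl⟩ := mk_mem_unaryClone.1 hf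
  obtain ⟨t, ht, j, hj⟩ := hg i
  exact ⟨s * t, S.mul_mem hs ht, j, funext fun x => congrArg s (congrFun hj x)⟩

theorem unaryOp_mem_unaryClone {S : Submonoid (Function.End A)} {u : Function.End A} :
    unaryOp u ∈ unaryClone S ↔ u ∈ S := by
  refine ⟨?_, fun hu => ⟨u, hu, 0, rfl⟩⟩
  rintro ⟨s, hs, i, hu⟩
  have hus : u = s := funext fun a => congrFun hu fun _ => a
  exact hus ▸ hs

theorem unaryClone_bot : unaryClone (⊥ : Submonoid (Function.End A)) = projClone A := by
  ext f
  exact ⟨fun ⟨s, hs, h⟩ => by rwa [Submonoid.mem_bot.1 hs] at h,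
    fun h => ⟨1, Submonoid.one_mem _, h⟩⟩

theorem isClone_projClone : IsClone (projClone A) :=
  unaryClone_bot (A := A) ▸ isClone_unaryClone ⊥

theorem unaryOp_mem_projClone {u : Function.End A} : unaryOp u ∈ projClone A ↔ u = 1 := by
  rw [← unaryClone_bot, unaryOp_mem_unaryClone, Submonoid.mem_bot]

theorem IsClone.essentiallyUnary_mem_iff {C : Set (Ops A)} (hC : IsClone C) {n : ℕ}
    {u : Function.End A} {i : Fin (n + 1)} :
    (⟨n, fun x => u (x i)⟩ : Ops A) ∈ C ↔ unaryOp u ∈ C :=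
  ⟨fun h => hC.minor_mem h fun _ => 0, fun h => hC.minor_mem (m := n) h fun _ => i⟩

theorem IsClone.unaryOp_mem_of_mem_powers {C : Set (Ops A)} (hC : IsClone C)
    {u v : Function.End A} (hu : unaryOp u ∈ C) (hv : v ∈ Submonoid.powers u) :
    unaryOp v ∈ C := by
  obtain ⟨k, rfl⟩ := hv
  induction k with
  | zero => exact hC.1 0 0
  | succ k ih =>
    beta_reduce
    rw [pow_succ']
    exact hC.2 0 0 (fun x => u (x 0)) (fun _ x => (u ^ k) (x 0)) hu fun _ => ih

theorem cloneGen_unaryOp (u : Function.End A) :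
    cloneGen {unaryOp u} = unaryClone (Submonoid.powers u) := by
  refine (cloneGen_singleton_subset (isClone_unaryClone _)
    (unaryOp_mem_unaryClone.2 (Submonoid.mem_powers u))).antisymm ?_
  rintro ⟨n, f⟩ hf
  obtain ⟨v, hv, i, rfl⟩ := mk_mem_unaryClone.1 hf
  have hC := isClone_cloneGen {unaryOp u}
  exact hC.essentiallyUnary_mem_iff.2 (hC.unaryOp_mem_of_mem_powers (mem_cloneGen_self _) hv)

theorem isMinimalClone_cloneGen_unaryOp {u : Function.End A} (hu : u ≠ 1)
    (h : ∀ v ∈ Submonoid.powers u, v ≠ 1 → u ∈ Submonoid.powers v) :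
    IsMinimalClone (cloneGen {unaryOp u}) := by
  refine isMinimalClone_cloneGen (mt unaryOp_mem_projClone.1 hu) fun g hg hgp => ?_
  rw [cloneGen_unaryOp] at hg
  obtain ⟨n, g⟩ := g
  obtain ⟨v, hv, i, rfl⟩ := mk_mem_unaryClone.1 hg
  have hv1 : v ≠ 1 := by
    rintro rfl
    exact hgp ⟨i, rfl⟩
  have hD := isClone_cloneGen {(⟨n, fun x => v (x i)⟩ : Ops A)}
  exact hD.unaryOp_mem_of_mem_powers
    (hD.essentiallyUnary_mem_iff.1 (mem_cloneGen_self _)) (h v hv hv1)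

theorem orderOf_coe_perm (π : Equiv.Perm A) : orderOf (G := Function.End A) ⇑π = orderOf π :=
  (orderOf_units (y := Equiv.Perm.equivUnitsEnd π)).trans
    (MulEquiv.orderOf_eq Equiv.Perm.equivUnitsEnd π)

theorem exists_coe_perm_prime_orderOf_iff {u : Function.End A} :
    (∃ π : Equiv.Perm A, u = ⇑π ∧ (orderOf π).Prime) ↔ (orderOf u).Prime := by
  constructor
  · rintro ⟨π, rfl, hπ⟩
    rwa [orderOf_coe_perm]
  · intro hu
    obtain ⟨v, rfl⟩ := (orderOf_pos_iff.1 hu.pos).isUnit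
    refine ⟨Equiv.Perm.equivUnitsEnd.symm v, rfl, ?_⟩
    rwa [MulEquiv.orderOf_eq, ← orderOf_units]

theorem isTypeCheckedI_iff {u : Function.End A} :
    IsTypeCheckedI u ↔ u ≠ 1 ∧ (IsIdempotentElem u ∨ (orderOf u).Prime) := by
  have hidem : IsIdempotentElem u → (Set.range u ≠ Set.univ ↔ u ≠ 1) := by
    refine fun h => not_congr ⟨fun hr => funext fun a => ?_, ?_⟩
    · obtain ⟨b, rfl⟩ := Set.range_eq_univ.1 hr a
      exact congrFun h b
    · rintro rfl
      exact Set.range_id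
  have hprime : (orderOf u).Prime → u ≠ 1 := by
    rintro h rfl
    exact h.ne_one orderOf_one
  have hdef : IsTypeCheckedI u ↔
      (IsIdempotentElem u ∧ Set.range u ≠ Set.univ) ∨ (orderOf u).Prime :=
    or_congr Iff.rfl exists_coe_perm_prime_orderOf_iff
  rw [hdef, and_or_left, and_iff_right_of_imp hprime, and_comm (a := u ≠ 1)]
  exact or_congr_left (and_congr_right hidem)

theorem IsTypeCheckedI.isMinimalClone {u : Function.End A} (hu : IsTypeCheckedI u) :
    IsMinimalClone (cloneGen {unaryOp u}) := by
  obtain ⟨hu1, hidem | hprime⟩ := isTypeCheckedI_iff.1 hu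
  · exact isMinimalClone_cloneGen_unaryOp hu1 (mem_powers_of_isIdempotentElem hidem)
  · exact isMinimalClone_cloneGen_unaryOp hu1 (mem_powers_of_prime_orderOf hprime)

theorem IsMinimalClone.exists_isTypeCheckedI {C : Set (Ops A)} (hC : IsMinimalClone C)
    {f : (Fin 1 → A) → A} (hf : (⟨0, f⟩ : Ops A) ∈ C) (hfp : ⟨0, f⟩ ∉ projClone A) :
    ∃ u : Function.End A, IsTypeCheckedI u ∧ C = cloneGen {unaryOp u} := by
  obtain ⟨u, rfl⟩ : ∃ u : Function.End A, f = fun x => u (x 0) :=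
    ⟨fun a => f fun _ => a, funext fun x => congrArg f (eq_const_of_unique x)⟩
  have hgen : ∀ v ∈ Submonoid.powers u, v ≠ 1 → C = cloneGen {unaryOp v} := fun v hv hv1 =>
    hC.eq_cloneGen (hC.1.unaryOp_mem_of_mem_powers hf hv) (mt unaryOp_mem_projClone.1 hv1)
  obtain ⟨v, hv, hv1, htype⟩ := exists_isIdempotentElem_or_prime_orderOf
    (mt unaryOp_mem_projClone.2 hfp) fun v hv hv1 => unaryOp_mem_unaryClone.1 <| by
      rw [← cloneGen_unaryOp, ← hgen v hv hv1]
      exact hf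
  exact ⟨v, isTypeCheckedI_iff.2 ⟨hv1, htype⟩, hgen v hv hv1⟩

/-! ### Semiprojections -/

section Semiprojection

variable {ι : Type*} {f : (ι → A) → A}

/-- Identifying the variables `i` and `j` turns the operation `f` into the projection onto the
variable `k`. -/
def IsProjWhenEq (f : (ι → A) → A) (i j k : ι) : Prop :=
  ∀ x, x i = x j → f x = x k

/-- `f` is a semiprojection onto the variable `k`: it agrees with the projection onto `k` on all
tuples with a repeated entry. Projections are included, and no lower bound on the arity is
imposed. -/
def IsSemiprojection (f : (ι → A) → A) (k : ι) : Prop :=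
  ∀ x, (∃ i j, i ≠ j ∧ x i = x j) → f x = x k

theorem IsSemiprojection.isProjWhenEq {i j k : ι} (hf : IsSemiprojection f k) (hij : i ≠ j) :
    IsProjWhenEq f i j k :=
  fun x hx => hf x ⟨i, j, hij, hx⟩

-- Evaluate `f` at a two-valued tuple separating `S` from its complement.
theorem IsProjWhenEq.mem_iff_mem [Nontrivial A] {i j k p q r : ι} (hij : IsProjWhenEq f i j k)
    (hpq : IsProjWhenEq f p q r) (S : Set ι) (hS : i ∈ S ↔ j ∈ S) (hS' : p ∈ S ↔ q ∈ S) :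
    k ∈ S ↔ r ∈ S := by
  classical
  obtain ⟨a, b, hab⟩ := exists_pair_ne A
  let x : ι → A := fun t => if t ∈ S then a else b
  have hx : ∀ s t, x s = x t ↔ (s ∈ S ↔ t ∈ S) := fun s t => by
    by_cases hs : s ∈ S <;> by_cases ht : t ∈ S <;> simp [x, hs, ht, hab, hab.symm]
  rw [← hx, ← hij x ((hx i j).2 hS), ← hpq x ((hx p q).2 hS')]

theorem exists_ne_notMem [Fintype ι] (S : Finset ι) (h : S.card + 2 ≤ Fintype.card ι) :
    ∃ p q, p ∉ S ∧ q ∉ S ∧ p ≠ q := by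
  classical
  have hcompl : 1 < Sᶜ.card := by rw [Finset.card_compl]; omega
  simpa only [Finset.mem_compl, and_assoc, exists_and_left] using Finset.one_lt_card_iff.1 hcompl

theorem IsSemiprojection.eq_of_projection [Nontrivial A] [Fintype ι] (hι : 3 ≤ Fintype.card ι)
    {i k : ι} (h : IsSemiprojection (fun x : ι → A => x i) k) : i = k := by
  obtain ⟨p, q, hp, hq, hpq⟩ := exists_ne_notMem {i} hι
  rw [Finset.mem_singleton] at hp hq
  have hproj : IsProjWhenEq (fun x : ι → A => x i) p q i := fun _ _ => rfl
  have hik := hproj.mem_iff_mem (h.isProjWhenEq hpq) {i} (by simp [hp, hq]) (by simp [hp, hq])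
  exact (hik.1 rfl).symm

theorem exists_isProjWhenEq_ne_ne [Nontrivial A] [Fintype ι] (hι : 4 ≤ Fintype.card ι)
    (h : ∀ i j, i ≠ j → ∃ k, IsProjWhenEq f i j k) :
    ∃ i j k, k ≠ i ∧ k ≠ j ∧ IsProjWhenEq f i j k := by
  classical
  obtain ⟨i, j, hij⟩ := Fintype.exists_pair_of_one_lt_card (by omega : 1 < Fintype.card ι)
  obtain ⟨p, q, hp, hq, hpq⟩ := exists_ne_notMem {i, j} (by rw [Finset.card_pair hij]; omega)
  simp only [Finset.mem_insert, Finset.mem_singleton, not_or] at hp hq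
  obtain ⟨k, hk⟩ := h i j hij
  obtain ⟨r, hr⟩ := h p q hpq
  have hkr : k ∈ ({i, j} : Set ι) ↔ r ∈ ({i, j} : Set ι) :=
    hk.mem_iff_mem hr _ (by simp) (by simp [hp, hq])
  simp only [Set.mem_insert_iff, Set.mem_singleton_iff] at hkr
  by_cases hkij : k = i ∨ k = j
  · refine ⟨p, q, r, ?_, ?_, hr⟩ <;> rintro rfl <;> tauto
  · exact ⟨i, j, k, fun h => hkij (.inl h), fun h => hkij (.inr h), hk⟩

/-- **Świerczkowski's lemma**. -/
theorem exists_isSemiprojection [Nontrivial A] [Fintype ι] (hι : 4 ≤ Fintype.card ι)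
    (h : ∀ i j, i ≠ j → ∃ k, IsProjWhenEq f i j k) : ∃ k, IsSemiprojection f k := by
  classical
  obtain ⟨i, j, k, hki, hkj, hk⟩ := exists_isProjWhenEq_ne_ne hι h
  have away : ∀ p q, p ≠ q → k ≠ p → k ≠ q → IsProjWhenEq f p q k := by
    intro p q hpq hkp hkq
    obtain ⟨r, hr⟩ := h p q hpq
    have hkr := hk.mem_iff_mem hr {k} (by simp [hki.symm, hkj.symm]) (by simp [hkp.symm, hkq.symm])
    exact hkr.1 rfl ▸ hr
  have through : ∀ l, k ≠ l → IsProjWhenEq f k l k := by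
    intro l hkl x hx
    obtain ⟨r, hr⟩ := h k l hkl
    obtain ⟨p, q, hp, hq, hpq⟩ := exists_ne_notMem {k, l} (by rw [Finset.card_pair hkl]; omega)
    simp only [Finset.mem_insert, Finset.mem_singleton, not_or] at hp hq
    have hkr := (away p q hpq (Ne.symm hp.1) (Ne.symm hq.1)).mem_iff_mem hr {k, l}
      (by simp [hp, hq]) (by simp)
    rcases hkr.1 (by simp) with rfl | rfl
    · exact hr x hx
    · exact (hr x hx).trans hx.symm
  refine ⟨k, ?_⟩
  rintro x ⟨p, q, hpq, hx⟩
  by_cases hkp : k = p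
  · subst hkp
    exact through q hpq x hx
  by_cases hkq : k = q
  · subst hkq
    exact through p hpq.symm x hx.symm
  exact away p q hpq hkp hkq x hx

theorem IsSemiprojection.comp_perm {k : ι} (hf : IsSemiprojection f k) (τ : Equiv.Perm ι) :
    IsSemiprojection (fun x => f fun i => x (τ i)) (τ k) := by
  rintro x ⟨i, j, hij, hx⟩
  refine hf _ ⟨τ.symm i, τ.symm j, τ.symm.injective.ne hij, ?_⟩
  simpa only [Equiv.apply_symm_apply] using hx

end Semiprojection

theorem IsClone.exists_isProjWhenEq {C : Set (Ops A)} (hC : IsClone C) {n : ℕ}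
    (hproj : ∀ g : (Fin (n + 1) → A) → A, (⟨n, g⟩ : Ops A) ∈ C → ⟨n, g⟩ ∈ projClone A)
    {f : (Fin (n + 2) → A) → A} (hf : (⟨n + 1, f⟩ : Ops A) ∈ C) {i j : Fin (n + 2)}
    (hij : i ≠ j) : ∃ k, IsProjWhenEq f i j k := by
  obtain ⟨l, rfl⟩ := Fin.exists_succAbove_eq hij
  have hg : (⟨n, fun y => f (j.insertNth (y l) y)⟩ : Ops A) ∈ C :=
    hC.2 _ n f (fun t y => j.insertNth (α := fun _ => A) (y l) y t) hf
      ((Fin.forall_iff_succAbove j).2 ⟨by simpa using hC.1 n l, fun t => by simpa using hC.1 n t⟩)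
  obtain ⟨k, hk⟩ := hproj _ hg
  refine ⟨j.succAbove k, fun x hx => ?_⟩
  calc f x = f (j.insertNth (j.removeNth x l) (j.removeNth x)) := by
        rw [Fin.removeNth_apply, hx, Fin.insertNth_self_removeNth]
    _ = x (j.succAbove k) := congrFun hk (j.removeNth x)

/-- Every semiprojection of arity at least three in `C` is a projection. -/
def SemiprojectionFree (C : Set (Ops A)) : Prop :=
  ∀ (n : ℕ) (f : (Fin (n + 1) → A) → A) (k : Fin (n + 1)), 3 ≤ n + 1 → (⟨n, f⟩ : Ops A) ∈ C →
    IsSemiprojection f k → f = fun x => x k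

theorem IsMinimalClone.exists_generator_semiprojection [Nontrivial A] {C : Set (Ops A)}
    (hC : IsMinimalClone C) (hS : ¬ SemiprojectionFree C) :
    ∃ (n : ℕ) (f : (Fin (n + 1) → A) → A), 3 ≤ n + 1 ∧ ⟨n, f⟩ ∉ projClone A ∧
      IsSemiprojection f 0 ∧ C = cloneGen {⟨n, f⟩} := by
  simp only [SemiprojectionFree, not_forall] at hS
  obtain ⟨n, f, k, hn, hf, hk, hfk⟩ := hS
  have hfp : ⟨n, f⟩ ∉ projClone A := by
    intro h
    obtain ⟨i, rfl⟩ := mk_mem_projClone.1 h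
    exact hfk (by rw [hk.eq_of_projection (by simpa using hn)])
  let τ := Equiv.swap k 0
  have hgp : ⟨n, fun x => f fun i => x (τ i)⟩ ∉ projClone A := fun h =>
    hfp (by simpa [τ] using isClone_projClone.minor_mem h τ)
  exact ⟨n, _, hn, hgp, Equiv.swap_apply_left k 0 ▸ hk.comp_perm τ,
    hC.eq_cloneGen (hC.1.minor_mem hf τ) hgp⟩

/-! ### Majority and minority operations -/

/-- A minority operation: a ternary operation satisfying
`m(x,x,y) = m(x,y,x) = m(y,x,x) = y`. -/
def IsMinority (f : (Fin 3 → A) → A) : Prop :=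
  ∀ x y : A, f ![x, x, y] = y ∧ f ![x, y, x] = y ∧ f ![y, x, x] = y

theorem forall_repeated_fin_three {P : (Fin 3 → A) → Prop}
    (h : ∀ x y, P ![x, x, y] ∧ P ![x, y, x] ∧ P ![y, x, x]) (x : Fin 3 → A)
    (hx : ∃ i j, i ≠ j ∧ x i = x j) : P x := by
  obtain ⟨i, j, hij, hx⟩ := hx
  have hvec : x = ![x 0, x 1, x 2] := by ext i; fin_cases i <;> rfl
  fin_cases i <;> fin_cases j <;> first | exact absurd rfl hij | skip
  all_goals simp only [Fin.zero_eta, Fin.mk_one, Fin.reduceFinMk] at hx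
  all_goals rw [hvec]; simp only [hx, h]

theorem forall_repeated_fin_four {P : (Fin 4 → A) → Prop}
    (h : ∀ x y z, P ![x, x, y, z] ∧ P ![x, y, x, z] ∧ P ![x, y, z, x] ∧ P ![y, x, x, z] ∧
      P ![y, x, z, x] ∧ P ![y, z, x, x]) (x : Fin 4 → A)
    (hx : ∃ i j, i ≠ j ∧ x i = x j) : P x := by
  obtain ⟨i, j, hij, hx⟩ := hx
  have hvec : x = ![x 0, x 1, x 2, x 3] := by ext i; fin_cases i <;> rfl
  fin_cases i <;> fin_cases j <;> first | exact absurd rfl hij | skip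
  all_goals simp only [Fin.zero_eta, Fin.mk_one, Fin.reduceFinMk] at hx
  all_goals rw [hvec]; simp only [hx, h]

theorem IsMajority.notMem_projClone [Nontrivial A] {f : (Fin 3 → A) → A} (hf : IsMajority f) :
    ⟨2, f⟩ ∉ projClone A := by
  intro h
  obtain ⟨i, rfl⟩ := mk_mem_projClone.1 h
  obtain ⟨a, b, hab⟩ := exists_pair_ne A
  have := hf a b
  fin_cases i <;> simp_all

theorem IsMinority.notMem_projClone [Nontrivial A] {f : (Fin 3 → A) → A} (hf : IsMinority f) :
    ⟨2, f⟩ ∉ projClone A := by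
  intro h
  obtain ⟨i, rfl⟩ := mk_mem_projClone.1 h
  obtain ⟨a, b, hab⟩ := exists_pair_ne A
  have := hf a b
  fin_cases i <;> simp_all

theorem IsClone.ternary_trichotomy {C : Set (Ops A)} (hC : IsClone C) {f : (Fin 3 → A) → A}
    (hf : (⟨2, f⟩ : Ops A) ∈ C) (h : ∀ i j, i ≠ j → ∃ k, IsProjWhenEq f i j k) :
    (∃ k, IsSemiprojection f k) ∨ (∃ g, (⟨2, g⟩ : Ops A) ∈ C ∧ IsMajority g) ∨ IsMinority f := by
  have h01 : (∀ x y, f ![x, x, y] = x) ∨ ∀ x y, f ![x, x, y] = y := by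
    obtain ⟨k, hk⟩ := h 0 1 (by decide)
    fin_cases k
    exacts [.inl fun x y => hk _ rfl, .inl fun x y => hk _ rfl, .inr fun x y => hk _ rfl]
  have h02 : (∀ x y, f ![x, y, x] = x) ∨ ∀ x y, f ![x, y, x] = y := by
    obtain ⟨k, hk⟩ := h 0 2 (by decide)
    fin_cases k
    exacts [.inl fun x y => hk _ rfl, .inr fun x y => hk _ rfl, .inl fun x y => hk _ rfl]
  have h12 : (∀ x y, f ![y, x, x] = x) ∨ ∀ x y, f ![y, x, x] = y := by
    obtain ⟨k, hk⟩ := h 1 2 (by decide)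
    fin_cases k
    exacts [.inr fun x y => hk _ rfl, .inl fun x y => hk _ rfl, .inl fun x y => hk _ rfl]
  have P := hC.1 2
  have hf' := hC.comp_three_mem hf (P 0) (P 1) (P 2)
  rcases h01 with h01 | h01 <;> rcases h02 with h02 | h02 <;> rcases h12 with h12 | h12
  · exact .inr (.inl ⟨f, hf, fun x y => ⟨h01 x y, h02 x y, h12 x y⟩⟩)
  · exact .inl ⟨0, forall_repeated_fin_three fun x y => ⟨h01 x y, h02 x y, h12 x y⟩⟩
  · exact .inl ⟨1, forall_repeated_fin_three fun x y => ⟨h01 x y, h02 x y, h12 x y⟩⟩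
  · exact .inr (.inl ⟨_, hC.comp_three_mem hf (P 0) (P 1) hf', fun x y => by simp [h01, h02, h12]⟩)
  · exact .inl ⟨2, forall_repeated_fin_three fun x y => ⟨h01 x y, h02 x y, h12 x y⟩⟩
  · exact .inr (.inl ⟨_, hC.comp_three_mem hf (P 0) hf' (P 2), fun x y => by simp [h01, h02, h12]⟩)
  · exact .inr (.inl ⟨_, hC.comp_three_mem hf hf' (P 1) (P 2), fun x y => by simp [h01, h02, h12]⟩)
  · exact .inr (.inr fun x y => ⟨h01 x y, h02 x y, h12 x y⟩)

/-! ### Minority operations and elementary abelian 2-groups -/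

/-- The operation `x₁ + x₂ + x₃`. -/
def tripleSum (A : Type u) [Add A] : (Fin 3 → A) → A := fun x => x 0 + x 1 + x 2

theorem IsMinority.exists_addCommGroup [Nonempty A] {f : (Fin 3 → A) → A} (hf : IsMinority f)
    (hleft : ∀ x y z, f ![y, x, z] = f ![x, y, z]) (hright : ∀ x y z, f ![x, z, y] = f ![x, y, z])
    (hassoc : ∀ x o y z, f ![f ![x, o, y], o, z] = f ![x, y, z]) :
    ∃ _ : AddCommGroup A, (∀ a : A, a + a = 0) ∧ f = tripleSum A := by
  obtain ⟨o⟩ := ‹Nonempty A›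
  have hcomm : ∀ x y, f ![x, o, y] = f ![y, o, x] := fun x y => by rw [hleft, hright, hleft]
  let _ : Zero A := ⟨o⟩
  let _ : Add A := ⟨fun x y => f ![x, o, y]⟩
  let _ : Neg A := ⟨id⟩
  let G : AddCommGroup A :=
    { AddGroup.ofLeftAxioms
        (fun x y z => show f ![f ![x, o, y], o, z] = f ![x, o, f ![y, o, z]] by
          rw [hassoc, hcomm x, hassoc, hright, hleft, hright, hleft, hright])
        (fun x => (hf o x).1) (fun x => (hf x o).2.1) with
      add_comm := hcomm }
  refine ⟨G, fun a => (hf a o).2.1, funext fun x => ?_⟩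
  calc f x = f ![x 0, x 1, x 2] := congrArg f (by ext i; fin_cases i <;> rfl)
    _ = x 0 + x 1 + x 2 := (hassoc _ o _ _).symm

section Minority

variable {C : Set (Ops A)} {f : (Fin 3 → A) → A}

theorem IsMinority.apply_apply (hf : IsMinority f) (hC : IsClone C) (hS : SemiprojectionFree C)
    (hfC : (⟨2, f⟩ : Ops A) ∈ C) (x y z : A) : f ![x, y, f ![x, y, z]] = z := by
  have P := hC.1 2
  have hmem := hC.comp_three_mem hfC (P 0) (P 1) (hC.comp_three_mem hfC (P 0) (P 1) (P 2))
  have hsemi : IsSemiprojection (fun x : Fin 3 → A => f ![x 0, x 1, f ![x 0, x 1, x 2]]) 2 :=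
    forall_repeated_fin_three fun x y =>
      ⟨(hf x _).1.trans (hf x y).1,
        (congrArg (fun a => f ![x, y, a]) (hf x y).2.1).trans (hf y x).2.2,
        (congrArg (fun a => f ![y, x, a]) (hf x y).2.2).trans (hf y x).2.1⟩
  exact congrFun (hS 2 _ 2 le_rfl hmem hsemi) ![x, y, z]

theorem IsMinority.eq_of_eq_on_repeated (hf : IsMinority f) (hC : IsClone C)
    (hS : SemiprojectionFree C) (hfC : (⟨2, f⟩ : Ops A) ∈ C) {n : ℕ} (hn : 3 ≤ n + 1)
    {g h : (Fin (n + 1) → A) → A} (hg : (⟨n, g⟩ : Ops A) ∈ C) (hh : (⟨n, h⟩ : Ops A) ∈ C)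
    (heq : ∀ x, (∃ i j, i ≠ j ∧ x i = x j) → g x = h x) : g = h := by
  have hsemi : IsSemiprojection (fun x => f ![x 0, g x, h x]) 0 := fun x hx => by
    change f ![x 0, g x, h x] = x 0
    rw [heq x hx, (hf _ _).2.2]
  have hproj := hS n _ 0 hn (hC.comp_three_mem hfC (hC.1 n 0) hg hh) hsemi
  funext x
  calc g x = f ![x 0, g x, x 0] := (hf _ _).2.1.symm
    _ = f ![x 0, g x, f ![x 0, g x, h x]] := by rw [congrFun hproj x]
    _ = h x := hf.apply_apply hC hS hfC _ _ _

theorem IsMinority.unique (hf : IsMinority f) (hC : IsClone C) (hS : SemiprojectionFree C)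
    (hfC : (⟨2, f⟩ : Ops A) ∈ C) {g : (Fin 3 → A) → A} (hg : IsMinority g)
    (hgC : (⟨2, g⟩ : Ops A) ∈ C) : g = f :=
  hf.eq_of_eq_on_repeated hC hS hfC le_rfl hgC hfC <| forall_repeated_fin_three fun x y => by
    simp only [hf _ _, hg _ _, and_self]

theorem IsMinority.swap_left (hf : IsMinority f) (hC : IsClone C) (hS : SemiprojectionFree C)
    (hfC : (⟨2, f⟩ : Ops A) ∈ C) (x y z : A) : f ![y, x, z] = f ![x, y, z] := by
  have P := hC.1 2
  have hg : IsMinority fun x => f ![x 1, x 0, x 2] := fun x y =>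
    ⟨(hf x y).1, (hf x y).2.2, (hf x y).2.1⟩
  exact congrFun (hf.unique hC hS hfC hg (hC.comp_three_mem hfC (P 1) (P 0) (P 2))) ![x, y, z]

theorem IsMinority.swap_right (hf : IsMinority f) (hC : IsClone C) (hS : SemiprojectionFree C)
    (hfC : (⟨2, f⟩ : Ops A) ∈ C) (x y z : A) : f ![x, z, y] = f ![x, y, z] := by
  have P := hC.1 2
  have hg : IsMinority fun x => f ![x 0, x 2, x 1] := fun x y =>
    ⟨(hf x y).2.1, (hf x y).1, (hf x y).2.2⟩
  exact congrFun (hf.unique hC hS hfC hg (hC.comp_three_mem hfC (P 0) (P 2) (P 1))) ![x, y, z]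

theorem IsMinority.cancel_middle (hf : IsMinority f) (hC : IsClone C) (hS : SemiprojectionFree C)
    (hfC : (⟨2, f⟩ : Ops A) ∈ C) (x o y z : A) : f ![f ![x, o, y], o, z] = f ![x, y, z] := by
  have P := hC.1 3
  have happ := hf.apply_apply hC hS hfC
  have hleft := hf.swap_left hC hS hfC
  have hright := hf.swap_right hC hS hfC
  have hmem := hC.comp_three_mem hfC (hC.comp_three_mem hfC (P 0) (P 1) (P 2)) (P 1) (P 3)
  refine congrFun (hf.eq_of_eq_on_repeated hC hS hfC (by norm_num) hmem
    (hC.comp_three_mem hfC (P 0) (P 2) (P 3)) (forall_repeated_fin_four fun x y z => ?_))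
    ![x, o, y, z]
  refine ⟨?_, ?_, ?_, ?_, ?_, ?_⟩
  · change f ![f ![x, x, y], x, z] = f ![x, y, z]
    rw [(hf x y).1, hleft]
  · change f ![f ![x, y, x], y, z] = f ![x, x, z]
    rw [(hf x y).2.1, (hf y z).1, (hf x z).1]
  · change f ![f ![x, y, z], y, x] = f ![x, z, x]
    rw [(hf x z).2.1, hleft, hright, hleft, happ]
  · change f ![f ![y, x, x], x, z] = f ![y, x, z]
    rw [(hf x y).2.2]
  · change f ![f ![y, x, z], x, x] = f ![y, z, x]
    rw [(hf x _).2.2, hright]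
  · change f ![f ![y, z, x], z, x] = f ![y, x, x]
    rw [(hf x y).2.2, hleft, hright, hleft z y, hright z x, happ]

end Minority

theorem IsMinimalClone.majority_or_tripleSum [Nontrivial A] {C : Set (Ops A)}
    (hC : IsMinimalClone C) (hS : SemiprojectionFree C) {f : (Fin 3 → A) → A}
    (hf : (⟨2, f⟩ : Ops A) ∈ C) (hfp : ⟨2, f⟩ ∉ projClone A)
    (h : ∀ i j, i ≠ j → ∃ k, IsProjWhenEq f i j k) :
    (∃ g : (Fin 3 → A) → A, IsMajority g ∧ C = cloneGen {⟨2, g⟩}) ∨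
      ∃ _ : AddCommGroup A, (∀ a : A, a + a = 0) ∧ C = cloneGen {⟨2, tripleSum A⟩} := by
  rcases hC.1.ternary_trichotomy hf h with ⟨k, hk⟩ | ⟨g, hgC, hg⟩ | hm
  · exact absurd ⟨k, hS 2 f k le_rfl hf hk⟩ hfp
  · exact .inl ⟨g, hg, hC.eq_cloneGen hgC hg.notMem_projClone⟩
  · obtain ⟨G, h2, rfl⟩ := hm.exists_addCommGroup (hm.swap_left hC.1 hS hf)
      (hm.swap_right hC.1 hS hf) (hm.cancel_middle hC.1 hS hf)
    exact .inr ⟨G, h2, hC.eq_cloneGen hf hfp⟩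

/-! ### Affine combinations -/

section Affine

/-- The clone of the affine combinations `x ↦ ∑ i, c i • x i`, `∑ i, c i = 1`, of an
`R`-module. -/
def affineClone (R A : Type*) [Semiring R] [AddCommMonoid A] [Module R A] : Set (Ops A) :=
  {f | ∃ c : Fin (f.1 + 1) → R, ∑ i, c i = 1 ∧ f.2 = fun x => ∑ i, c i • x i}

theorem mk_mem_affineClone {R : Type*} [Semiring R] [AddCommMonoid A] [Module R A] {n : ℕ}
    {f : (Fin (n + 1) → A) → A} : (⟨n, f⟩ : Ops A) ∈ affineClone R A ↔
      ∃ c : Fin (n + 1) → R, ∑ i, c i = 1 ∧ f = fun x => ∑ i, c i • x i :=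
  Iff.rfl

theorem isClone_affineClone (R : Type*) [Semiring R] [AddCommMonoid A] [Module R A] :
    IsClone (affineClone R A) := by
  refine ⟨fun n i => ⟨Pi.single i 1, by simp, by simp [Pi.single_apply, ite_smul]⟩, ?_⟩
  intro n m f g hf hg
  obtain ⟨c, hc, rfl⟩ := mk_mem_affineClone.1 hf
  choose d hd hg using fun i => mk_mem_affineClone.1 (hg i)
  refine mk_mem_affineClone.2 ⟨fun j => ∑ i, c i * d i j, ?_, ?_⟩
  · rw [Finset.sum_comm]
    simp only [← Finset.mul_sum, hd, mul_one, hc]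
  · funext x
    simp only [hg, Finset.smul_sum, Finset.sum_smul, mul_smul]
    exact Finset.sum_comm

theorem sum_smul_ite_ite {R ι : Type*} [Ring R] [AddCommGroup A] [Module R A] [Fintype ι]
    [DecidableEq ι] {c : ι → R} (hc : ∑ i, c i = 1) {p q : ι} (hpq : p ≠ q) (x y z : A) :
    ∑ i, c i • (if i = p then x else if i = q then y else z) =
      c p • x + c q • y + (1 - c p - c q) • z := by
  have hterm : ∀ i, c i • (if i = p then x else if i = q then y else z) =
      c i • z + ((if i = p then c p • (x - z) else 0) + if i = q then c q • (y - z) else 0) := by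
    intro i
    by_cases hip : i = p
    · subst hip
      simp [hpq, smul_sub]
    · by_cases hiq : i = q
      · subst hiq
        simp [hip, smul_sub]
      · simp [hip, hiq]
  simp only [hterm, Finset.sum_add_distrib, ← Finset.sum_smul, hc, Finset.sum_ite_eq',
    Finset.mem_univ, if_true, smul_sub, sub_smul, one_smul]
  abel

variable [AddCommGroup A] [Module (ZMod 2) A]

theorem isMinority_tripleSum : IsMinority (tripleSum A) := by
  refine fun x y => ⟨?_, ?_, ?_⟩
  · change x + x + y = y
    rw [ZModModule.add_self, zero_add]
  · change x + y + x = y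
    rw [add_right_comm, ZModModule.add_self, zero_add]
  · change y + x + x = y
    rw [add_assoc, ZModModule.add_self, add_zero]

theorem tripleSum_mem_affineClone : ⟨2, tripleSum A⟩ ∈ affineClone (ZMod 2) A :=
  mk_mem_affineClone.2 ⟨fun _ => 1, by decide, funext fun x => by
    simp only [one_smul]
    exact (Fin.sum_univ_three x).symm⟩

theorem isMinimalClone_tripleSum [Nontrivial A] :
    IsMinimalClone (cloneGen {(⟨2, tripleSum A⟩ : Ops A)}) := by
  refine isMinimalClone_cloneGen isMinority_tripleSum.notMem_projClone fun g hg hgp => ?_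
  obtain ⟨n, g⟩ := g
  obtain ⟨c, hc, rfl⟩ := mk_mem_affineClone.1
    (cloneGen_singleton_subset (isClone_affineClone _) tripleSum_mem_affineClone hg)
  have hone : ∀ i, c i ≠ 0 → c i = 1 := fun i => Fin.eq_one_of_ne_zero (c i)
  obtain ⟨p, -, hp⟩ := Finset.exists_ne_zero_of_sum_ne_zero (hc.trans_ne one_ne_zero)
  obtain ⟨q, hqp, hq⟩ : ∃ q ≠ p, c q ≠ 0 := by
    by_contra! hzero
    refine hgp (mk_mem_projClone.2 ⟨p, funext fun x => ?_⟩)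
    rw [Finset.sum_eq_single p (fun i _ hi => by rw [hzero i hi, zero_smul]) (by simp), hone p hp,
      one_smul]
  have hsum : (fun x : Fin 3 → A => ∑ i, c i • x (if i = p then 0 else if i = q then 1 else 2)) =
      tripleSum A := by
    funext x
    simp only [apply_ite x, sum_smul_ite_ite hc hqp.symm, hone p hp, hone q hq, one_smul]
    rw [show (1 - 1 - 1 : ZMod 2) = 1 by decide, one_smul]
    rfl
  exact hsum ▸ (isClone_cloneGen _).minor_mem (mem_cloneGen_self ⟨n, fun x => ∑ i, c i • x i⟩) _

end Affine

/-- **Five-type classification of minimal clones.**  Let `A` be a set with `|A| ≥ 2`.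
Every minimal clone on `A` is generated by an operation of one of the five types:
(✓I) a unary operation `f` with `f = f ∘ f` and `f(A) ≠ A`, or a permutation of prime
order; (II) a binary idempotent operation that is not a projection; (III) a
semiprojection onto its first variable; (IV) a majority operation; (✓V) the operation
`x₁ + x₂ + x₃` of an elementary abelian 2-group structure on `A`.  Moreover, every
operation of type (✓I) and every operation of type (✓V) generates a minimal clone. -/
theorem minimal_clone_five_types {A : Type u} [Nontrivial A] :
    (∀ C : Set (Ops A), IsMinimalClone C →
      -- (✓I) unary
      ((∃ u : A → A, IsTypeCheckedI u ∧
          C = cloneGen {(⟨0, fun x : Fin 1 → A => u (x 0)⟩ : Ops A)}) ∨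
      -- (II) binary idempotent non-projection
      (∃ f : (Fin 2 → A) → A, (∀ a : A, f (fun _ => a) = a) ∧
          (¬ ∃ i : Fin 2, f = fun x => x i) ∧
          C = cloneGen {(⟨1, f⟩ : Ops A)}) ∨
      -- (III) semiprojection onto the first variable
      (∃ (n : ℕ) (f : (Fin (n + 1) → A) → A), 3 ≤ n + 1 ∧
          (¬ ∃ i : Fin (n + 1), f = fun x => x i) ∧
          (∀ x : Fin (n + 1) → A, (∃ i j, i ≠ j ∧ x i = x j) → f x = x 0) ∧
          C = cloneGen {(⟨n, f⟩ : Ops A)}) ∨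
      -- (IV) majority operation
      (∃ f : (Fin 3 → A) → A, IsMajority f ∧ C = cloneGen {(⟨2, f⟩ : Ops A)}) ∨
      -- (✓V) x₁ + x₂ + x₃ of an elementary abelian 2-group
      (∃ _ : AddCommGroup A, (∀ a : A, a + a = 0) ∧
          C = cloneGen {(⟨2, fun x : Fin 3 → A => x 0 + x 1 + x 2⟩ : Ops A)}))) ∧
    (∀ u : A → A, IsTypeCheckedI u →
        IsMinimalClone (cloneGen {(⟨0, fun x : Fin 1 → A => u (x 0)⟩ : Ops A)})) ∧
    (∀ _ : AddCommGroup A, (∀ a : A, a + a = 0) →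
        IsMinimalClone (cloneGen {(⟨2, fun x : Fin 3 → A => x 0 + x 1 + x 2⟩ : Ops A)})) := by
  refine ⟨fun C hC => ?_, fun u hu => hu.isMinimalClone, fun _ h2 => ?_⟩
  · obtain ⟨n, f, hf, hfp, hmin⟩ := hC.1.exists_minimal_arity hC.2.1
    by_cases hS : SemiprojectionFree C
    swap
    · obtain ⟨m, g, hm, hgp, hg, hCg⟩ := hC.exists_generator_semiprojection hS
      exact .inr (.inr (.inl ⟨m, g, hm, hgp, hg, hCg⟩))
    match n with
    | 0 => exact .inl (hC.exists_isTypeCheckedI hf hfp)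
    | 1 => exact .inr (.inl
        ⟨f, hC.1.apply_const (hmin 0 one_pos) hf, hfp, hC.eq_cloneGen hf hfp⟩)
    | 2 => exact .inr (.inr (.inr (hC.majority_or_tripleSum hS hf hfp fun i j hij =>
        hC.1.exists_isProjWhenEq (hmin 1 one_lt_two) hf hij)))
    | n + 3 =>
      obtain ⟨k, hk⟩ := exists_isSemiprojection (by simp) fun i j hij =>
        hC.1.exists_isProjWhenEq (hmin (n + 2) (by omega)) hf hij
      exact absurd ⟨k, hS (n + 3) f k (by omega) hf hk⟩ hfp
  · let _ : Module (ZMod 2) A := AddCommGroup.zmodModule fun a => (two_nsmul a).trans (h2 a)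
    exact isMinimalClone_tripleSum
end
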